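/- Let H : T*𝕋² → ℝ be a Tonelli Hamiltonian that has a C¹ weak K.A.M. solution u : 𝕋² → ℝ such that all critical points of H contained in the graph of du are hyperbolic fixed points of the Hamiltonian flow. Then u is upper Green regular. -/

import Mathlib

/-!
Throughout, the closed manifold `M = 𝕋^d = ℝ^d/ℤ^d` is modelled by `ℤ^d`-periodic
functions on `ℝ^d` (with the Euclidean structure), and its (co)tangent bundle
`T^*𝕋^d = 𝕋^d × ℝ^d` by `ℤ^d`-periodic (in the base variable) data on `ℝ^d × ℝ^d`.
-/

open scoped RealInnerProductSpace
open Filter MeasureTheory Metric Set Asymptotics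

noncomputable section

/-- The universal cover `ℝ^d` of the torus `𝕋^d`. -/
abbrev Euc (d : ℕ) : Type := EuclideanSpace ℝ (Fin d)

/-- The phase space `T^*𝕋^d`, modelled as `ℝ^d × ℝ^d` with `ℤ^d`-periodic data. -/
abbrev Phase (d : ℕ) : Type := Euc d × Euc d

/-- An integer vector, viewed in `ℝ^d`. -/
def intVec {d : ℕ} (k : Fin d → ℤ) : Euc d := WithLp.toLp 2 fun i => (k i : ℝ)

/-- `f` descends to the torus `𝕋^d = ℝ^d/ℤ^d`. -/
def PerFun {d : ℕ} {α : Type*} (f : Euc d → α) : Prop :=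
  ∀ (k : Fin d → ℤ) (x : Euc d), f (x + intVec k) = f x

/-- `H` descends to `T^*𝕋^d = 𝕋^d × ℝ^d`. -/
def PerPhase {d : ℕ} {α : Type*} (H : Phase d → α) : Prop :=
  ∀ (k : Fin d → ℤ) (q p : Euc d), H (q + intVec k, p) = H (q, p)

/-- Positive definiteness of the fiberwise Hessian. -/
def ConvexInFiber {d : ℕ} (H : Phase d → ℝ) : Prop :=
  ∀ q p v, v ≠ 0 → 0 < iteratedFDeriv ℝ 2 (fun p' => H (q, p')) p ![v, v]

/-- A `C²` Tonelli Hamiltonian on `T^*𝕋^d`. -/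
structure TonelliHam {d : ℕ} (H : Phase d → ℝ) : Prop where
  periodic : PerPhase H
  smooth : ContDiff ℝ 2 H
  convex : ConvexInFiber H
  superlinear : ∀ A : ℝ, ∃ B : ℝ, ∀ q p, A * ‖p‖ + B ≤ H (q, p)

/-- A `C²` Tonelli Lagrangian on `T𝕋^d`. -/
structure TonelliLag {d : ℕ} (L : Phase d → ℝ) : Prop where
  periodic : PerPhase L
  smooth : ContDiff ℝ 2 L
  convex : ConvexInFiber L
  superlinear : ∀ A : ℝ, ∃ B : ℝ, ∀ q v, A * ‖v‖ + B ≤ L (q, v)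

/-- The Lagrangian associated to `H` by Legendre duality. -/
def LegendreL {d : ℕ} (H : Phase d → ℝ) (x : Phase d) : ℝ :=
  sSup {r | ∃ p : Euc d, r = ⟪p, x.2⟫ - H (x.1, p)}

/-- The Mañé critical value `α(H)`. -/
def maneCritical {d : ℕ} (H : Phase d → ℝ) : ℝ :=
  sInf {c | ∃ u : Euc d → ℝ, ContDiff ℝ (⊤ : ℕ∞) u ∧ PerFun u ∧ ∀ q, H (q, gradient u q) ≤ c}

/-- The Mañé critical value `α(c)` of the cohomology class of the constant form `cf`. -/
def maneCriticalOf {d : ℕ} (H : Phase d → ℝ) (cf : Euc d) : ℝ :=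
  maneCritical fun x : Phase d => H (x.1, cf + x.2)

/-- `γ` is absolutely continuous on `[a,b]` with a.e. derivative `γ'`. -/
def ACOn {d : ℕ} (γ γ' : ℝ → Euc d) (a b : ℝ) : Prop :=
  IntervalIntegrable γ' volume a b ∧ ∀ t ∈ Icc a b, γ t = γ a + ∫ s in a..t, γ' s

/-- Values entering the (discounted, cohomologically twisted) Lax–Oleinik infimum. -/
def LOvals {d : ℕ} (L : Phase d → ℝ) (cf : Euc d) (av lam : ℝ) (u : Euc d → ℝ) (t : ℝ)
    (q : Euc d) : Set ℝ :=
  {r | ∃ γ γ' : ℝ → Euc d, ACOn γ γ' (-t) 0 ∧ γ 0 = q ∧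
     IntervalIntegrable (fun s => Real.exp (lam * s) * (L (γ s, γ' s) - ⟪cf, γ' s⟫ + av))
       volume (-t) 0 ∧
     r = Real.exp (-(lam * t)) * u (γ (-t)) +
         ∫ s in (-t)..0, Real.exp (lam * s) * (L (γ s, γ' s) - ⟪cf, γ' s⟫ + av)}

/-- The (discounted, twisted) Lax–Oleinik semigroup `T^{cf,λ}_t u (q)`. -/
def LaxOleinik {d : ℕ} (L : Phase d → ℝ) (cf : Euc d) (av lam : ℝ) (u : Euc d → ℝ) (t : ℝ)
    (q : Euc d) : ℝ :=
  sInf (LOvals L cf av lam u t q)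

/-- A weak K.A.M. solution: a fixed point of the Lax–Oleinik semigroup. -/
def IsWeakKAM {d : ℕ} (H : Phase d → ℝ) (u : Euc d → ℝ) : Prop :=
  Continuous u ∧ PerFun u ∧
    ∀ t > (0:ℝ), ∀ q, LaxOleinik (LegendreL H) 0 (maneCritical H) 0 u t q = u q

/-- A fixed point of the modified Lax–Oleinik semigroup `T^c_t` for the class `cf`. -/
def IsFixedPtModified {d : ℕ} (H : Phase d → ℝ) (cf : Euc d) (u : Euc d → ℝ) : Prop :=
  Continuous u ∧ PerFun u ∧
    ∀ t > (0:ℝ), ∀ q, LaxOleinik (LegendreL H) cf (maneCriticalOf H cf) 0 u t q = u q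

/-- The discounted solution `u_λ` of `λu + H(x,du) = α(H)`, via its variational formula. -/
def IsDiscountedSol {d : ℕ} (H : Phase d → ℝ) (lam : ℝ) (u : Euc d → ℝ) : Prop :=
  Continuous u ∧ PerFun u ∧
    ∀ q, u q = sInf {r | ∃ γ γ' : ℝ → Euc d, (∀ a ≤ (0:ℝ), ACOn γ γ' a 0) ∧ γ 0 = q ∧
      IntegrableOn (fun s => Real.exp (lam * s) * (LegendreL H (γ s, γ' s) + maneCritical H))
        (Iic 0) volume ∧
      r = ∫ s in Iic (0:ℝ), Real.exp (lam * s) * (LegendreL H (γ s, γ' s) + maneCritical H)}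

/-- The `λ`-discounted Hamiltonian vector field `(∂H/∂p, -∂H/∂q - λp)`. -/
def hamVF {d : ℕ} (H : Phase d → ℝ) (lam : ℝ) (x : Phase d) : Phase d :=
  (gradient (fun p => H (x.1, p)) x.2, -gradient (fun q => H (q, x.2)) x.1 - lam • x.2)

/-- `φ` is the (conformally) Hamiltonian flow of equation (1) for `(H, λ)`. -/
def IsConformalFlow {d : ℕ} (H : Phase d → ℝ) (lam : ℝ) (φ : ℝ → Phase d → Phase d) : Prop :=
  (∀ x, φ 0 x = x) ∧ (∀ s t x, φ s (φ t x) = φ (s + t) x) ∧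
    ∀ x t, HasDerivAt (fun τ => φ τ x) (hamVF H lam (φ t x)) t

/-- The vertical subspace `V = ker Dπ`. -/
def Vert (d : ℕ) : Submodule ℝ (Phase d) :=
  Submodule.prod (⊥ : Submodule ℝ (Euc d)) (⊤ : Submodule ℝ (Euc d))

/-- The image `Dφ_t(y) V(y)` of the vertical at `y` by the linearized flow. -/
def pushV {d : ℕ} (φ : ℝ → Phase d → Phase d) (t : ℝ) (y : Phase d) : Submodule ℝ (Phase d) :=
  Submodule.map (fderiv ℝ (φ t) y).toLinearMap (Vert d)

/-- `G_t(x) = Dφ_t V(φ_{-t} x)`. -/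
def GreenT {d : ℕ} (φ : ℝ → Phase d → Phase d) (t : ℝ) (x : Phase d) : Submodule ℝ (Phase d) :=
  pushV φ t (φ (-t) x)

/-- The piece of orbit `(φ_t x)_{t ∈ I}` has no conjugate points. -/
def NoConjPts {d : ℕ} (φ : ℝ → Phase d → Phase d) (x : Phase d) (I : Set ℝ) : Prop :=
  ∀ s ∈ I, ∀ t ∈ I, s ≠ t → pushV φ (t - s) (φ s x) ⊓ Vert d = ⊥

/-- `S` is the height `ℋ(G)` of the Lagrangian subspace `G`:
`G` is the graph `{(δθ, S δθ)}` of the symmetric map `S`. -/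
def IsHeight {d : ℕ} (G : Submodule ℝ (Phase d)) (S : Euc d →L[ℝ] Euc d) : Prop :=
  (∀ v w, ⟪S v, w⟫ = ⟪v, S w⟫) ∧ G = LinearMap.graph (S : Euc d →ₗ[ℝ] Euc d)

open Classical in
/-- The height of a subspace transverse to the vertical (junk value `0` otherwise). -/
def heightOf {d : ℕ} (G : Submodule ℝ (Phase d)) : Euc d →L[ℝ] Euc d :=
  if h : ∃ S, IsHeight G S then h.choose else 0

/-- Order of symmetric operators as quadratic forms. -/
def SymLE {d : ℕ} (S T : Euc d →L[ℝ] Euc d) : Prop := ∀ v, ⟪S v, v⟫ ≤ ⟪T v, v⟫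

/-- Strict order of symmetric operators as quadratic forms (positive definite difference). -/
def SymLT {d : ℕ} (S T : Euc d →L[ℝ] Euc d) : Prop := ∀ v, v ≠ 0 → ⟪S v, v⟫ < ⟪T v, v⟫

/-- `u` has (Alexandrov) derivative `p` and second derivative `S` at `θ`. -/
def HasAlexandrovAt {d : ℕ} (u : Euc d → ℝ) (p : Euc d) (S : Euc d →L[ℝ] Euc d)
    (θ : Euc d) : Prop :=
  HasGradientAt u p θ ∧
    (fun y => u y - u θ - ⟪p, y - θ⟫ - (1/2) * ⟪S (y - θ), y - θ⟫)
      =o[nhds θ] fun y => ‖y - θ‖ ^ 2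

open Classical in
/-- The Alexandrov second derivative `D²u(θ)` (junk value `0` where it does not exist). -/
def D2 {d : ℕ} (u : Euc d → ℝ) (θ : Euc d) : Euc d →L[ℝ] Euc d :=
  if h : ∃ pS : Euc d × (Euc d →L[ℝ] Euc d), HasAlexandrovAt u pS.1 pS.2 θ then h.choose.2 else 0

/-- `‖S‖ = sup_{‖v‖=1} |S(v,v)|`. -/
def qNorm {d : ℕ} (S : Euc d →L[ℝ] Euc d) : ℝ :=
  ⨆ v : (sphere (0 : Euc d) 1 : Set (Euc d)), |⟪S v.1, v.1⟫|

/-- A fundamental domain of `𝕋^d` in `ℝ^d`. -/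
def fundCube (d : ℕ) : Set (Euc d) := {x | ∀ i, x i ∈ Ico (0:ℝ) 1}

/-- The distance `d_{2,1}(u,v) = ∫_{𝕋^d} ‖D²u - D²v‖`. -/
def d21 {d : ℕ} (u v : Euc d → ℝ) : ℝ := ∫ θ in fundCube d, qNorm (D2 u θ - D2 v θ)

/-- Semi-concavity. -/
def SemiConcave {d : ℕ} (u : Euc d → ℝ) : Prop :=
  ∃ K : ℝ, ∀ x, ∃ p, ∀ y, u y ≤ u x + ⟪p, y - x⟫ + K * ‖y - x‖ ^ 2

/-- `u` is upper Green regular: at Lebesgue-a.e. `θ`, `ℋ(G₊(θ, du(θ))) = D²u(θ)`. -/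
def UpperGreenRegular {d : ℕ} (φ : ℝ → Phase d → Phase d) (u : Euc d → ℝ) : Prop :=
  ∀ᵐ θ ∂(volume : Measure (Euc d)), ∃ p S, HasGradientAt u p θ ∧
    (∀ t > (0:ℝ), ∃ S', IsHeight (GreenT φ t (θ, p)) S') ∧
    Tendsto (fun t : ℝ => heightOf (GreenT φ t (θ, p))) atTop (nhds S) ∧
    HasAlexandrovAt u p S θ

/-- The graph `𝒢(du) ⊂ T^*𝕋^d` of the differential of `u`. -/
def gradGraph {d : ℕ} (u : Euc d → ℝ) : Set (Phase d) := {x | HasGradientAt u x.2 x.1}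

/-- The graph `𝒢(η_c + du)` where `η_c` is the constant form `cf`. -/
def gradGraphShift {d : ℕ} (cf : Euc d) (u : Euc d → ℝ) : Set (Phase d) :=
  {x | ∃ p, HasGradientAt u p x.1 ∧ x.2 = cf + p}

/-- `x` is a hyperbolic fixed point of the flow `φ`. -/
def IsHyperbolicFixedPt {d : ℕ} (φ : ℝ → Phase d → Phase d) (x : Phase d) : Prop :=
  (∀ t : ℝ, φ t x = x) ∧
  ∃ (Es Eu : Submodule ℝ (Phase d)), IsCompl Es Eu ∧
    ∃ (Cc μ : ℝ), 0 < Cc ∧ 0 < μ ∧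
      (∀ v ∈ Es, ∀ t : ℝ, 0 ≤ t →
        ‖fderiv ℝ (φ t) x v‖ ≤ Cc * Real.exp (-μ * t) * ‖v‖) ∧
      (∀ v ∈ Eu, ∀ t : ℝ, 0 ≤ t →
        ‖fderiv ℝ (φ (-t)) x v‖ ≤ Cc * Real.exp (-μ * t) * ‖v‖)

/-!
Write `X` for the Hamiltonian vector field along the graph of `du`, projected to `𝕋^d`, and `ψ`
for its flow. The graph of `du` is invariant, so at a point `q` where `du` is differentiable, with
`A = D²u(q)`, the push-forward of the vertical by `Dφ_T` is the graph of `A + N_T⁻¹` for a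
symmetric `N_T` with `d/dT ⟨N_T w, w⟩ ≥ m ‖y_T‖²`, where `y_T = (Dψ_{-T}(q)*)⁻¹ w`. Hence it
converges to the graph of `A` unless `y_n → 0` for some `w ≠ 0`, and it remains to exclude this for
almost every `q` when `d = 2`.

Pairing with `Dψ_{-n} X = X ∘ ψ_{-n}` shows that such a `w` is orthogonal to `X(q)`; in the plane
this gives `‖w‖ ‖X(ψ_{-n} q)‖ = ‖y_n‖ ‖X(q)‖ |det Dψ_{-n}(q)|`. So the Jacobian blows up along the
times at which `‖X‖ ≥ ε`, which is impossible for almost every orbit returning infinitely often to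
`{‖X‖ ≥ ε}` since the torus has finite area. Otherwise `X(ψ_{-n} q) → 0` and the orbit converges to
one of the countably many zeros of `X`. Near a hyperbolic zero, backward orbits that stay
close approach each other geometrically, so `Dψ_{-n}` is bounded at almost every such `q`, which
contradicts `‖w‖² = ⟨y_n, Dψ_{-n} w⟩`.
-/

/-! ### Symplectic calculus of a Hamiltonian vector field -/

/-- The canonical symplectic form `dq ∧ dp` of the phase space, as a continuous bilinear map. -/
def symplecticForm {d : ℕ} : Phase d →L[ℝ] Phase d →L[ℝ] ℝ :=
  (innerSL ℝ).bilinearComp (.fst ℝ (Euc d) (Euc d)) (.snd ℝ (Euc d) (Euc d)) -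
    (innerSL ℝ).bilinearComp (.snd ℝ (Euc d) (Euc d)) (.fst ℝ (Euc d) (Euc d))

section SymplecticCalculus

variable {d : ℕ} {H : Phase d → ℝ}

lemma symplecticForm_apply (z z' : Phase d) :
    symplecticForm z z' = ⟪z.1, z'.2⟫ - ⟪z.2, z'.1⟫ := by
  simp [symplecticForm, innerSL_apply_apply]

lemma symplecticForm_swap (z z' : Phase d) : symplecticForm z z' = -symplecticForm z' z := by
  simp only [symplecticForm_apply, real_inner_comm]
  ring

lemma fderiv_comp_prodMk_left {x : Phase d} (hH : DifferentiableAt ℝ H x) :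
    fderiv ℝ (fun q => H (q, x.2)) x.1 = (fderiv ℝ H x).comp (.inl ℝ (Euc d) (Euc d)) :=
  (HasFDerivAt.comp (f := fun q : Euc d => (q, x.2)) x.1 hH.hasFDerivAt
    (hasFDerivAt_prodMk_left x.1 x.2)).fderiv

lemma fderiv_comp_prodMk_right {x : Phase d} (hH : DifferentiableAt ℝ H x) :
    fderiv ℝ (fun p => H (x.1, p)) x.2 = (fderiv ℝ H x).comp (.inr ℝ (Euc d) (Euc d)) :=
  (HasFDerivAt.comp (f := fun p : Euc d => (x.1, p)) x.2 hH.hasFDerivAt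
    (hasFDerivAt_prodMk_right x.1 x.2)).fderiv

lemma hamVF_zero_eq {x : Phase d} (hH : DifferentiableAt ℝ H x) :
    hamVF H 0 x =
      ((InnerProductSpace.toDual ℝ (Euc d)).symm ((fderiv ℝ H x).comp (.inr ℝ (Euc d) (Euc d))),
        -(InnerProductSpace.toDual ℝ (Euc d)).symm
          ((fderiv ℝ H x).comp (.inl ℝ (Euc d) (Euc d)))) := by
  simp only [hamVF, gradient, zero_smul, sub_zero, fderiv_comp_prodMk_left hH,
    fderiv_comp_prodMk_right hH]

lemma inner_hamVF_fst {x : Phase d} (hH : DifferentiableAt ℝ H x) (b : Euc d) :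
    ⟪(hamVF H 0 x).1, b⟫ = fderiv ℝ H x (0, b) := by
  simp [hamVF_zero_eq hH]

lemma inner_hamVF_snd {x : Phase d} (hH : DifferentiableAt ℝ H x) (a : Euc d) :
    ⟪(hamVF H 0 x).2, a⟫ = -fderiv ℝ H x (a, 0) := by
  simp [hamVF_zero_eq hH]

lemma fderiv_eq_symplecticForm_hamVF {x : Phase d} (hH : DifferentiableAt ℝ H x) (z : Phase d) :
    fderiv ℝ H x z = symplecticForm (hamVF H 0 x) z := by
  rw [symplecticForm_apply, inner_hamVF_fst hH, inner_hamVF_snd hH, sub_neg_eq_add, ← map_add]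
  simp

lemma contDiff_hamVF (hH : ContDiff ℝ 2 H) : ContDiff ℝ 1 (hamVF H 0) := by
  have hH' : ContDiff ℝ 1 (fderiv ℝ H) := hH.fderiv_right (by norm_num)
  have toDual_symm : ContDiff ℝ 1 (InnerProductSpace.toDual ℝ (Euc d)).symm :=
    (InnerProductSpace.toDual ℝ (Euc d)).symm.toContinuousLinearEquiv.contDiff
  rw [show hamVF H 0 = _ from funext fun x => hamVF_zero_eq (hH.differentiable two_ne_zero x)]
  exact (toDual_symm.comp (hH'.clm_comp contDiff_const)).prodMk
    (toDual_symm.comp (hH'.clm_comp contDiff_const)).neg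

lemma fderiv_fderiv_eq_symplecticForm (hH : ContDiff ℝ 2 H) (x w z : Phase d) :
    fderiv ℝ (fderiv ℝ H) x w z = symplecticForm (fderiv ℝ (hamVF H 0) x w) z := by
  have fderiv_eq : fderiv ℝ H = symplecticForm ∘ hamVF H 0 :=
    funext fun y => ContinuousLinearMap.ext
      (fderiv_eq_symplecticForm_hamVF (hH.differentiable two_ne_zero y))
  rw [fderiv_eq, (symplecticForm.hasFDerivAt.comp x
    ((contDiff_hamVF hH).differentiable one_ne_zero x).hasFDerivAt).fderiv]
  rfl

lemma symplecticForm_fderiv_hamVF_comm (hH : ContDiff ℝ 2 H) (x w z : Phase d) :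
    symplecticForm (fderiv ℝ (hamVF H 0) x w) z = symplecticForm (fderiv ℝ (hamVF H 0) x z) w := by
  rw [← fderiv_fderiv_eq_symplecticForm hH, ← fderiv_fderiv_eq_symplecticForm hH]
  exact (hH.contDiffAt (x := x)).isSymmSndFDerivAt (by simp) w z

lemma ConvexInFiber.fderiv_fderiv_pos (hconv : ConvexInFiber H) (hH : ContDiff ℝ 2 H)
    (x : Phase d) {b : Euc d} (hb : b ≠ 0) : 0 < fderiv ℝ (fderiv ℝ H) x (0, b) (0, b) := by
  have hH' : ContDiff ℝ 1 (fderiv ℝ H) := hH.fderiv_right (by norm_num)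
  have hess := hconv x.1 x.2 b hb
  have fderiv_fiber : fderiv ℝ (fun p => H (x.1, p)) =
      fun p => (fderiv ℝ H (x.1, p)).comp (.inr ℝ (Euc d) (Euc d)) :=
    funext fun p => fderiv_comp_prodMk_right (x := (x.1, p)) (hH.differentiable two_ne_zero _)
  have deriv_fiber : HasFDerivAt (fun p => fderiv ℝ H (x.1, p))
      ((fderiv ℝ (fderiv ℝ H) x).comp (.inr ℝ (Euc d) (Euc d))) x.2 :=
    HasFDerivAt.comp (f := fun p : Euc d => (x.1, p)) x.2
      (hH'.differentiable one_ne_zero x).hasFDerivAt (hasFDerivAt_prodMk_right x.1 x.2)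
  rw [iteratedFDeriv_two_apply, fderiv_fiber,
    (deriv_fiber.clm_comp (hasFDerivAt_const _ x.2)).fderiv] at hess
  simpa using hess

end SymplecticCalculus

/-! ### Linear differential equations and differentiability of flows -/

section LinearODE

variable {𝔸 : Type*} [NormedRing 𝔸] [NormedAlgebra ℝ 𝔸] [CompleteSpace 𝔸] {A : ℝ → 𝔸}

/-- The `n`-th term of the Dyson series of iterated integrals, whose sum solves the linear
equation `R' = A R`, `R 0 = 1`. -/
def dysonTerm (A : ℝ → 𝔸) : ℕ → ℝ → 𝔸
  | 0 => fun _ => 1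
  | n + 1 => fun t => ∫ s in (0 : ℝ)..t, A s * dysonTerm A n s

lemma continuous_dysonTerm (hA : Continuous A) (n : ℕ) : Continuous (dysonTerm A n) := by
  induction n with
  | zero => exact continuous_const
  | succ n ih =>
    exact continuous_iff_continuousAt.2 fun t =>
      ((hA.mul ih).integral_hasStrictDerivAt 0 t).hasDerivAt.continuousAt

lemma hasDerivAt_dysonTerm_succ (hA : Continuous A) (n : ℕ) (t : ℝ) :
    HasDerivAt (dysonTerm A (n + 1)) (A t * dysonTerm A n t) t :=
  ((hA.mul (continuous_dysonTerm hA n)).integral_hasStrictDerivAt 0 t).hasDerivAt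

lemma norm_dysonTerm_le (hA : Continuous A) {K T : ℝ} (hK : ∀ s, |s| ≤ T → ‖A s‖ ≤ K) (n : ℕ)
    {t : ℝ} (ht : |t| ≤ T) : ‖dysonTerm A n t‖ ≤ ‖(1 : 𝔸)‖ * ((K * |t|) ^ n / n.factorial) := by
  have : 0 ≤ K := (norm_nonneg _).trans (hK t ht)
  induction n generalizing t with
  | zero => simp [dysonTerm]
  | succ n ih =>
    have integrable (g : ℝ → ℝ) (hg : Continuous g) : IntegrableOn g (uIoc 0 t) :=
      intervalIntegrable_iff.1 (hg.intervalIntegrable 0 t)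
    have integral_pow : ∫ s in uIoc 0 t, |s| ^ n = |t| ^ (n + 1) / (n + 1) := by
      simpa using integral_pow_abs_sub_uIoc (a := 0) (b := t) n
    calc ‖dysonTerm A (n + 1) t‖
        ≤ ∫ s in uIoc 0 t, ‖A s * dysonTerm A n s‖ :=
          intervalIntegral.norm_integral_le_integral_norm_uIoc
      _ ≤ ∫ s in uIoc 0 t, ‖(1 : 𝔸)‖ * (K ^ (n + 1) / n.factorial) * |s| ^ n := by
          refine setIntegral_mono_on (integrable _ (hA.mul (continuous_dysonTerm hA n)).norm)
            (integrable _ (by fun_prop)) measurableSet_uIoc fun s hs => ?_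
          have hs' : |s| ≤ T :=
            (by simpa using abs_sub_left_of_mem_uIcc (uIoc_subset_uIcc hs) : |s| ≤ |t|).trans ht
          calc ‖A s * dysonTerm A n s‖
              ≤ K * (‖(1 : 𝔸)‖ * ((K * |s|) ^ n / n.factorial)) :=
                norm_mul_le_of_le (hK s hs') (ih hs')
            _ = ‖(1 : 𝔸)‖ * (K ^ (n + 1) / n.factorial) * |s| ^ n := by rw [mul_pow]; ring
      _ = ‖(1 : 𝔸)‖ * ((K * |t|) ^ (n + 1) / (n + 1).factorial) := by
          rw [integral_const_mul, integral_pow, Nat.factorial_succ, mul_pow]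
          push_cast
          field_simp

theorem exists_hasDerivAt_eq_mul (hA : Continuous A) :
    ∃ R : ℝ → 𝔸, R 0 = 1 ∧ ∀ t, HasDerivAt R (A t * R t) t := by
  refine ⟨fun t => 1 + ∑' n, dysonTerm A (n + 1) t, by simp [dysonTerm], fun t => ?_⟩
  set T := |t| + 1
  have hT : 0 < T := by positivity
  obtain ⟨K, hK⟩ := (isCompact_Icc (a := -T) (b := T)).exists_bound_of_continuousOn hA.continuousOn
  have norm_A_le (s : ℝ) (hs : |s| ≤ T) : ‖A s‖ ≤ K := hK s (abs_le.1 hs)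
  have hK_nonneg : 0 ≤ K := (norm_nonneg _).trans (norm_A_le t (by simp [T]))
  have term_le (n : ℕ) (s : ℝ) (hs : |s| ≤ T) :
      ‖dysonTerm A n s‖ ≤ ‖(1 : 𝔸)‖ * ((K * T) ^ n / n.factorial) :=
    (norm_dysonTerm_le hA norm_A_le n hs).trans (by gcongr)
  have summable_bound : Summable fun n : ℕ => ‖(1 : 𝔸)‖ * ((K * T) ^ n / n.factorial) :=
    (Real.summable_pow_div_factorial _).mul_left _
  have deriv_tsum : HasDerivAt (fun s => ∑' n, dysonTerm A (n + 1) s)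
      (∑' n, A t * dysonTerm A n t) t :=
    hasDerivAt_tsum_of_isPreconnected (summable_bound.mul_left K) isOpen_Ioo isPreconnected_Ioo
      (fun n s _ => hasDerivAt_dysonTerm_succ hA n s)
      (fun n s hs =>
        norm_mul_le_of_le (norm_A_le s (abs_lt.2 hs).le) (term_le n s (abs_lt.2 hs).le))
      (t := Ioo (-T) T) (y₀ := 0) ⟨neg_lt_zero.2 hT, hT⟩ (by simp [dysonTerm, summable_zero])
      (abs_lt.1 (by simp [T]))
  have summable_term : Summable fun n => dysonTerm A n t :=
    summable_bound.of_norm_bounded fun n => term_le n t (by simp [T])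
  have tsum_eq : ∑' n, A t * dysonTerm A n t = A t * (1 + ∑' n, dysonTerm A (n + 1) t) := by
    rw [summable_term.tsum_mul_left, summable_term.tsum_eq_zero_add]
    rfl
  rw [← tsum_eq]
  exact deriv_tsum.const_add 1

end LinearODE

section FlowDerivative

variable {E F : Type*} [NormedAddCommGroup E] [NormedSpace ℝ E] [NormedAddCommGroup F]
  [NormedSpace ℝ F]

lemma exists_ball_norm_sub_sub_fderiv_le_of_isCompact {f : E → F} (hf : ContDiff ℝ 1 f) {S : Set E}
    (hS : IsCompact S) {c : ℝ} (hc : 0 < c) :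
    ∃ ρ > 0, ∀ x ∈ S, ∀ a ∈ ball x ρ, ∀ b ∈ ball x ρ,
      ‖f a - f b - fderiv ℝ f x (a - b)‖ ≤ c * ‖a - b‖ := by
  obtain ⟨ρ, hρ, close⟩ := Metric.mem_uniformity_dist.1 <|
    hS.uniformContinuousAt_of_continuousAt (fderiv ℝ f)
      (fun x _ => (hf.continuous_fderiv one_ne_zero).continuousAt) (dist_mem_uniformity hc)
  refine ⟨ρ, hρ, fun x hx a ha b hb => Convex.norm_image_sub_le_of_norm_fderiv_le' (𝕜 := ℝ)
    (fun y _ => hf.differentiable one_ne_zero y) (fun y hy => ?_) (convex_ball x ρ) hb ha⟩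
  rw [← dist_eq_norm, dist_comm]
  exact (close (mem_ball'.1 hy) hx).le

lemma exists_lipschitzOnWith_ball_of_isCompact {f : E → F} (hf : ContDiff ℝ 1 f) {S : Set E}
    (hS : IsCompact S) : ∃ K : NNReal, ∃ ρ > 0, ∀ x ∈ S, LipschitzOnWith K f (ball x ρ) := by
  obtain ⟨K, hK⟩ := hS.exists_bound_of_continuousOn (hf.continuous_fderiv one_ne_zero).continuousOn
  obtain ⟨ρ, hρ, approx⟩ := exists_ball_norm_sub_sub_fderiv_le_of_isCompact hf hS one_pos
  refine ⟨(K + 1).toNNReal, ρ, hρ, fun x hx => LipschitzOnWith.of_dist_le' fun a ha b hb => ?_⟩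
  rw [dist_eq_norm, dist_eq_norm]
  calc ‖f a - f b‖ ≤ ‖f a - f b - fderiv ℝ f x (a - b)‖ + ‖fderiv ℝ f x (a - b)‖ := by
        simpa using norm_add_le (f a - f b - fderiv ℝ f x (a - b)) (fderiv ℝ f x (a - b))
    _ ≤ 1 * ‖a - b‖ + K * ‖a - b‖ :=
        add_le_add (approx x hx a ha b hb) ((fderiv ℝ f x).le_of_opNorm_le (hK x hx) _)
    _ = (K + 1) * ‖a - b‖ := by ring

lemma forall_Icc_lt_of_forall_Ico_lt {g : ℝ → ℝ} (hg : Continuous g) {a b ρ : ℝ}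
    (step : ∀ s ∈ Icc a b, (∀ t ∈ Ico a s, g t < ρ) → g s < ρ) : ∀ t ∈ Icc a b, g t < ρ := by
  by_contra! ⟨t, ht, hρt⟩
  obtain ⟨s, ⟨hs, hρs⟩, s_least⟩ := (isCompact_Icc.inter_right
    (isClosed_le continuous_const hg)).exists_isLeast ⟨t, ht, hρt⟩
  refine (step s hs fun r hr => ?_).not_ge hρs
  by_contra! hρr
  exact hr.2.not_ge (s_least ⟨⟨hr.1, hr.2.le.trans hs.2⟩, hρr⟩)

variable {f : E → E} {φ : ℝ → E → E}

lemma dist_flow_le_of_mem_ball (hφ₀ : ∀ x, φ 0 x = x)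
    (hφ : ∀ x t, HasDerivAt (fun τ => φ τ x) (f (φ t x)) t) {K : NNReal} {ρ T : ℝ} {x : E}
    (hf : ∀ t ∈ Icc 0 T, LipschitzOnWith K f (ball (φ t x) ρ)) {y z : E} {s : ℝ} (hs : s ∈ Icc 0 T)
    (hy : ∀ t ∈ Ico 0 s, φ t y ∈ ball (φ t x) ρ) (hz : ∀ t ∈ Ico 0 s, φ t z ∈ ball (φ t x) ρ) :
    dist (φ s y) (φ s z) ≤ Real.exp (K * T) * dist y z := by
  have cont (x : E) : Continuous fun t => φ t x :=
    continuous_iff_continuousAt.2 fun t => (hφ x t).continuousAt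
  calc dist (φ s y) (φ s z)
      ≤ dist y z * Real.exp (K * (s - 0)) :=
        dist_le_of_trajectories_ODE_of_mem (v := fun _ => f) (s := fun t => ball (φ t x) ρ)
          (fun t ht => hf t ⟨ht.1, ht.2.le.trans hs.2⟩) (cont y).continuousOn
          (fun t _ => (hφ y t).hasDerivWithinAt) hy (cont z).continuousOn
          (fun t _ => (hφ z t).hasDerivWithinAt) hz (by simp [hφ₀]) s ⟨hs.1, le_rfl⟩
    _ ≤ Real.exp (K * T) * dist y z := by
        rw [mul_comm, sub_zero]
        gcongr
        exact hs.2

lemma exists_ball_dist_flow_le (hf : ContDiff ℝ 1 f) (hφ₀ : ∀ x, φ 0 x = x)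
    (hφ : ∀ x t, HasDerivAt (fun τ => φ τ x) (f (φ t x)) t) (x : E) (T : ℝ) :
    ∃ M > 0, ∃ r > 0, ∀ y ∈ ball x r, ∀ z ∈ ball x r, ∀ t ∈ Icc 0 T,
      dist (φ t y) (φ t z) ≤ M * dist y z := by
  have cont (x : E) : Continuous fun t => φ t x :=
    continuous_iff_continuousAt.2 fun t => (hφ x t).continuousAt
  obtain ⟨K, ρ, hρ, lip⟩ := exists_lipschitzOnWith_ball_of_isCompact hf
    ((isCompact_Icc (a := (0 : ℝ)) (b := T)).image (cont x))
  rw [forall_mem_image] at lip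
  have stays_in_tube (y : E) (hy : y ∈ ball x (ρ / Real.exp (K * T))) :
      ∀ t ∈ Icc 0 T, dist (φ t y) (φ t x) < ρ :=
    forall_Icc_lt_of_forall_Ico_lt ((cont y).dist (cont x)) fun s hs inside =>
      (dist_flow_le_of_mem_ball hφ₀ hφ lip hs inside fun t _ => mem_ball_self hρ).trans_lt
        ((lt_div_iff₀' (Real.exp_pos _)).1 (mem_ball.1 hy))
  exact ⟨_, Real.exp_pos _, _, by positivity, fun y hy z hz t ht =>
    dist_flow_le_of_mem_ball hφ₀ hφ lip ht
      (fun s hs => stays_in_tube y hy s ⟨hs.1, hs.2.le.trans ht.2⟩)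
      (fun s hs => stays_in_tube z hz s ⟨hs.1, hs.2.le.trans ht.2⟩)⟩

lemma norm_flow_sub_sub_le_gronwallBound (hφ₀ : ∀ x, φ 0 x = x)
    (hφ : ∀ x t, HasDerivAt (fun τ => φ τ x) (f (φ t x)) t) {A R : ℝ → E →L[ℝ] E}
    (hR₀ : R 0 = 1) (hR : ∀ t, HasDerivAt R (A t * R t) t) {T K δ : ℝ} (hT : 0 ≤ T)
    (hA : ∀ t ∈ Icc 0 T, ‖A t‖ ≤ K) {y z : E}
    (hδ : ∀ t ∈ Icc 0 T, ‖f (φ t y) - f (φ t z) - A t (φ t y - φ t z)‖ ≤ δ) :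
    ‖φ T y - φ T z - R T (y - z)‖ ≤ gronwallBound 0 K δ T := by
  set w := fun t => φ t y - φ t z - R t (y - z)
  have hw (t : ℝ) : HasDerivAt w (f (φ t y) - f (φ t z) - A t (R t (y - z))) t := by
    simpa only [map_zero, add_zero, mul_apply_eq_comp] using
      ((hφ y t).fun_sub (hφ z t)).fun_sub ((hR t).clm_apply (hasDerivAt_const t (y - z)))
  have deriv_le (t : ℝ) (ht : t ∈ Ico 0 T) :
      ‖f (φ t y) - f (φ t z) - A t (R t (y - z))‖ ≤ K * ‖w t‖ + δ := by
    have ht := Ico_subset_Icc_self ht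
    calc _ = ‖A t (w t) + (f (φ t y) - f (φ t z) - A t (φ t y - φ t z))‖ := by
          simp only [w, map_sub _ (φ t y - φ t z)]
          congr 1
          abel
      _ ≤ K * ‖w t‖ + δ := norm_add_le_of_le ((A t).le_of_opNorm_le (hA t ht) _) (hδ t ht)
  simpa only [sub_zero] using norm_le_gronwallBound_of_norm_deriv_right_le (δ := 0)
    (continuous_iff_continuousAt.2 fun t => (hw t).continuousAt).continuousOn
    (fun t _ => (hw t).hasDerivWithinAt) (by simp [w, hφ₀, hR₀]) deriv_le T ⟨hT, le_rfl⟩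

lemma hasStrictFDerivAt_flow_of_nonneg (hf : ContDiff ℝ 1 f) (hφ₀ : ∀ x, φ 0 x = x)
    (hφ : ∀ x t, HasDerivAt (fun τ => φ τ x) (f (φ t x)) t) {x : E} {R : ℝ → E →L[ℝ] E}
    (hR₀ : R 0 = 1) (hR : ∀ t, HasDerivAt R (fderiv ℝ f (φ t x) * R t) t) {T : ℝ} (hT : 0 ≤ T) :
    HasStrictFDerivAt (φ T) (R T) x := by
  have compact_orbit : IsCompact ((fun t => φ t x) '' Icc 0 T) := isCompact_Icc.image
    (continuous_iff_continuousAt.2 fun t => (hφ x t).continuousAt)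
  obtain ⟨K, hK⟩ := compact_orbit.exists_bound_of_continuousOn
    (hf.continuous_fderiv one_ne_zero).continuousOn
  obtain ⟨M, hM, r, hr, lip⟩ := exists_ball_dist_flow_le hf hφ₀ hφ x T
  rw [hasStrictFDerivAt_iff_isLittleO, isLittleO_iff]
  intro ε hε
  set G := gronwallBound 0 K 1 T
  obtain ⟨c, hc, hcε⟩ : ∃ c > 0, c * M * |G| ≤ ε :=
    ⟨ε / (M * (|G| + 1)), by positivity, by field_simp; linarith⟩
  obtain ⟨ρ, hρ, approx⟩ := exists_ball_norm_sub_sub_fderiv_le_of_isCompact hf compact_orbit hc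
  rw [forall_mem_image] at hK approx
  have near : ball x (min r (ρ / M)) ∈ nhds x := ball_mem_nhds _ (by positivity)
  filter_upwards [prod_mem_nhds near near]
  rintro ⟨y, z⟩ ⟨hy, hz⟩
  have near_r {y} (hy : y ∈ ball x (min r (ρ / M))) : y ∈ ball x r :=
    ball_subset_ball (min_le_left _ _) hy
  have flow_near {y} (hy : y ∈ ball x (min r (ρ / M))) {t} (ht : t ∈ Icc 0 T) :
      φ t y ∈ ball (φ t x) ρ :=
    (lip y (near_r hy) x (mem_ball_self hr) t ht).trans_lt
      ((lt_div_iff₀' hM).1 (lt_of_lt_of_le hy (min_le_right _ _)))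
  have linearization_error (t : ℝ) (ht : t ∈ Icc 0 T) :
      ‖f (φ t y) - f (φ t z) - fderiv ℝ f (φ t x) (φ t y - φ t z)‖ ≤ c * M * ‖y - z‖ := by
    refine (approx ht _ (flow_near hy ht) _ (flow_near hz ht)).trans ?_
    rw [mul_assoc, ← dist_eq_norm, ← dist_eq_norm]
    gcongr
    exact lip y (near_r hy) z (near_r hz) t ht
  have gronwallBound_eq : gronwallBound 0 K (c * M * ‖y - z‖) T = c * M * G * ‖y - z‖ := by
    simp only [G, gronwallBound]
    split_ifs <;> ring
  calc ‖φ T y - φ T z - R T (y - z)‖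
      ≤ c * M * G * ‖y - z‖ := gronwallBound_eq ▸
        norm_flow_sub_sub_le_gronwallBound hφ₀ hφ hR₀ hR hT (fun _ ht => hK ht) linearization_error
    _ ≤ ε * ‖y - z‖ := by
      gcongr
      exact (by gcongr; exact le_abs_self G : c * M * G ≤ c * M * |G|).trans hcε

theorem exists_hasStrictFDerivAt_flow [CompleteSpace E] (hf : ContDiff ℝ 1 f)
    (hφ₀ : ∀ x, φ 0 x = x) (hφ : ∀ x t, HasDerivAt (fun τ => φ τ x) (f (φ t x)) t) (x : E) :
    ∃ R : ℝ → E →L[ℝ] E, R 0 = 1 ∧ (∀ t, HasDerivAt R (fderiv ℝ f (φ t x) * R t) t) ∧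
      ∀ t, HasStrictFDerivAt (φ t) (R t) x := by
  obtain ⟨R, hR₀, hR⟩ := exists_hasDerivAt_eq_mul (A := fun t => fderiv ℝ f (φ t x))
    ((hf.continuous_fderiv one_ne_zero).comp
      (continuous_iff_continuousAt.2 fun t => (hφ x t).continuousAt))
  refine ⟨R, hR₀, hR, fun t => ?_⟩
  rcases le_total 0 t with ht | ht
  · exact hasStrictFDerivAt_flow_of_nonneg hf hφ₀ hφ hR₀ hR ht
  have reversed : HasStrictFDerivAt (φ (-(-t))) (R (-(-t))) x :=
    hasStrictFDerivAt_flow_of_nonneg (φ := fun t => φ (-t)) (R := fun t => R (-t)) hf.neg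
      (by simpa using hφ₀)
      (fun x t => by
        simpa [Function.comp_def] using (hφ x (-t)).scomp t (hasDerivAt_neg t))
      (by simpa using hR₀)
      (fun t => by
        rw [fderiv_fun_neg]
        simpa [Function.comp_def] using (hR (-t)).scomp t (hasDerivAt_neg t))
      (neg_nonneg.2 ht)
  simpa using reversed

end FlowDerivative

/-! ### Periodicity -/

section Periodicity

variable {d : ℕ} {F : Type*} [NormedAddCommGroup F]

lemma exists_norm_add_intVec_le (q : Euc d) : ∃ k : Fin d → ℤ, ‖q + intVec k‖ ≤ √d := by
  refine ⟨fun i => -⌊q i⌋, ?_⟩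
  have coord (i : Fin d) : (q + intVec fun i => -⌊q i⌋ : Euc d) i = Int.fract (q i) := by
    simp [intVec, Int.fract, sub_eq_add_neg]
  rw [EuclideanSpace.norm_eq]
  simp only [coord, Real.norm_eq_abs, sq_abs]
  exact Real.sqrt_le_sqrt <| (Finset.sum_le_card_nsmul _ _ 1 fun i _ =>
    pow_le_one₀ (Int.fract_nonneg _) (Int.fract_lt_one _).le).trans (by simp)

lemma PerPhase.exists_norm_le {g : Phase d → F} (hper : PerPhase g) (hg : Continuous g) (P : ℝ) :
    ∃ C ≥ 0, ∀ q p, ‖p‖ ≤ P → ‖g (q, p)‖ ≤ C := by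
  obtain ⟨C, hC⟩ := ((isCompact_closedBall (0 : Euc d) √d).prod
    (isCompact_closedBall (0 : Euc d) P)).exists_bound_of_continuousOn hg.continuousOn
  refine ⟨max C 0, le_max_right _ _, fun q p hp => ?_⟩
  obtain ⟨k, hk⟩ := exists_norm_add_intVec_le q
  rw [← hper k q p]
  exact (hC _ ⟨by simpa using hk, by simpa using hp⟩).trans (le_max_left _ _)

lemma PerFun.exists_norm_le {g : Euc d → F} (hper : PerFun g) (hg : Continuous g) :
    ∃ C ≥ 0, ∀ q, ‖g q‖ ≤ C := by
  obtain ⟨C, hC, bound⟩ := PerPhase.exists_norm_le (g := fun x : Phase d => g x.1)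
    (fun k q _ => hper k q) (by fun_prop) 0
  exact ⟨C, hC, fun q => bound q 0 (by simp)⟩

variable [NormedSpace ℝ F]

lemma PerPhase.fderiv {g : Phase d → F} (hper : PerPhase g) : PerPhase (fderiv ℝ g) := by
  intro k q p
  have translate : (fun x => g (x + (intVec k, 0))) = g := by
    ext ⟨a, b⟩
    simp [hper k a b]
  simpa [translate] using (fderiv_comp_add_right (𝕜 := ℝ) (f := g) (x := (q, p)) (intVec k, 0)).symm

lemma PerFun.fderiv {g : Euc d → F} (hper : PerFun g) : PerFun (fderiv ℝ g) := by
  intro k q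
  simpa [hper k _] using (fderiv_comp_add_right (𝕜 := ℝ) (f := g) (x := q) (intVec k)).symm

lemma PerPhase.hamVF {H : Phase d → ℝ} (hper : PerPhase H) : PerPhase (hamVF H 0) := by
  intro k q p
  have base : PerFun fun q => H (q, p) := fun k a => hper k a p
  simp only [_root_.hamVF, hper k q, gradient, base.fderiv k q]

end Periodicity

/-! ### Legendre duality and quadratic estimates for Tonelli Hamiltonians -/

section Tonelli

variable {d : ℕ} {H : Phase d → ℝ}

lemma TonelliHam.inner_sub_le_legendreL (hH : TonelliHam H) (q v p : Euc d) :
    ⟪p, v⟫ - H (q, p) ≤ LegendreL H (q, v) := by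
  obtain ⟨B, hB⟩ := hH.superlinear ‖v‖
  refine le_csSup ⟨-B, ?_⟩ ⟨p, rfl⟩
  rintro _ ⟨p', rfl⟩
  linarith [hB q p', real_inner_le_norm p' v]

lemma legendreL_le {x : Phase d} {a : ℝ} (h : ∀ p, ⟪p, x.2⟫ - H (x.1, p) ≤ a) :
    LegendreL H x ≤ a := by
  refine csSup_le ⟨_, 0, rfl⟩ ?_
  rintro _ ⟨p, rfl⟩
  exact h p

lemma TonelliHam.lowerSemicontinuous_legendreL (hH : TonelliHam H) :
    LowerSemicontinuous (LegendreL H) := by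
  intro x a ha
  obtain ⟨_, ⟨p, rfl⟩, hp⟩ := exists_lt_of_lt_csSup
    (show {r | ∃ p : Euc d, r = ⟪p, x.2⟫ - H (x.1, p)}.Nonempty from ⟨_, 0, rfl⟩) ha
  have cont : Continuous fun x : Phase d => ⟪p, x.2⟫ - H (x.1, p) := by
    have := hH.smooth.continuous
    fun_prop
  filter_upwards [cont.continuousAt.eventually_const_lt hp] with y hy
  exact hy.trans_le (hH.inner_sub_le_legendreL y.1 y.2 p)

lemma add_deriv_add_half_le {g g' g'' : ℝ → ℝ} (hg : ∀ t, HasDerivAt g (g' t) t)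
    (hg' : ∀ t, HasDerivAt g' (g'' t) t) {a : ℝ} (ha : ∀ t ∈ Icc (0 : ℝ) 1, a ≤ g'' t) :
    g 0 + g' 0 + a / 2 ≤ g 1 := by
  have deriv_G (t : ℝ) : HasDerivAt (fun t => g t - a / 2 * t ^ 2) (g' t - a * t) t := by
    refine ((hg t).fun_sub ((hasDerivAt_pow 2 t).const_mul (a / 2))).congr_deriv ?_
    norm_num
    ring
  obtain ⟨s, hs, slope_G⟩ := exists_hasDerivAt_eq_slope _ _ one_pos
    (fun t _ => (deriv_G t).continuousAt.continuousWithinAt) fun t _ => deriv_G t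
  obtain ⟨r, hr, slope_g'⟩ := exists_hasDerivAt_eq_slope _ _ hs.1
    (fun t _ => (hg' t).continuousAt.continuousWithinAt) fun t _ => hg' t
  have increment : a * s ≤ g' s - g' 0 := by
    rw [sub_zero, eq_div_iff hs.1.ne'] at slope_g'
    rw [← slope_g']
    exact mul_le_mul_of_nonneg_right (ha r ⟨hr.1.le, (hr.2.trans hs.2).le⟩) hs.1.le
  norm_num at slope_G
  linarith

lemma add_fderiv_add_half_le {E : Type*} [NormedAddCommGroup E] [NormedSpace ℝ E] {f : E → ℝ}
    (hf : ContDiff ℝ 2 f) {x z : E} {a : ℝ}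
    (ha : ∀ t ∈ Icc (0 : ℝ) 1, a ≤ fderiv ℝ (fderiv ℝ f) (x + t • z) z z) :
    f x + fderiv ℝ f x z + a / 2 ≤ f (x + z) := by
  have deriv_line (t : ℝ) : HasDerivAt (fun t : ℝ => x + t • z) z t := by
    simpa using ((hasDerivAt_id' t).smul_const z).const_add x
  have deriv_f (t : ℝ) : HasDerivAt (fun t : ℝ => f (x + t • z)) (fderiv ℝ f (x + t • z) z) t :=
    (hf.differentiable two_ne_zero _).hasFDerivAt.comp_hasDerivAt t (deriv_line t)
  have deriv_f' (t : ℝ) : HasDerivAt (fun t : ℝ => fderiv ℝ f (x + t • z) z)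
      (fderiv ℝ (fderiv ℝ f) (x + t • z) z z) t := by
    have h : HasDerivAt (fun t : ℝ => fderiv ℝ f (x + t • z))
        (fderiv ℝ (fderiv ℝ f) (x + t • z) z) t :=
      ((hf.fderiv_right (m := 1) le_rfl).differentiable one_ne_zero _).hasFDerivAt.comp_hasDerivAt
        t (deriv_line t)
    simpa using h.clm_apply (hasDerivAt_const t z)
  simpa using add_deriv_add_half_le deriv_f deriv_f' ha

lemma norm_prod_zero_le (a b : Euc d) :
    ‖((a, 0) : Phase d)‖ ≤ ‖a‖ ∧ ‖((0, b) : Phase d)‖ ≤ ‖b‖ := by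
  simp [Prod.norm_def]

namespace TonelliHam

lemma continuous_fderiv_fderiv (hH : TonelliHam H) : Continuous (fderiv ℝ (fderiv ℝ H)) :=
  (hH.smooth.fderiv_right (m := 1) le_rfl).continuous_fderiv one_ne_zero

lemma exists_fderiv_fderiv_fiber_ge (hH : TonelliHam H) (P : ℝ) :
    ∃ m > 0, ∀ q p b : Euc d, ‖p‖ ≤ P →
      m * ‖b‖ ^ 2 ≤ fderiv ℝ (fderiv ℝ H) (q, p) (0, b) (0, b) := by
  let Q (y : Phase d × Euc d) : ℝ := fderiv ℝ (fderiv ℝ H) y.1 (0, y.2) (0, y.2)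
  have hQ : Continuous Q := by
    have := hH.continuous_fderiv_fderiv
    fun_prop
  have compact_S := ((isCompact_closedBall (0 : Euc d) √d).prod
    (isCompact_closedBall (0 : Euc d) P)).prod (isCompact_sphere (0 : Euc d) 1)
  obtain ⟨m, hm, le_Q⟩ := compact_S.exists_forall_le' hQ.continuousOn (a := 0) fun y hy =>
    hH.convex.fderiv_fderiv_pos hH.smooth y.1 (ne_zero_of_mem_unit_sphere ⟨y.2, hy.2⟩)
  refine ⟨m, hm, fun q p b hp => ?_⟩
  obtain ⟨k, hk⟩ := exists_norm_add_intVec_le q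
  rw [← hH.periodic.fderiv.fderiv k q p]
  rcases eq_or_ne b 0 with rfl | hb
  · simp [← Prod.zero_eq_mk]
  have hb' : ‖b‖ ≠ 0 := norm_ne_zero_iff.2 hb
  have le_unit := le_Q ((q + intVec k, p), ‖b‖⁻¹ • b)
    ⟨⟨by simpa using hk, by simpa using hp⟩, by simp [norm_smul, hb']⟩
  have scale : ((0 : Euc d), ‖b‖⁻¹ • b) = ‖b‖⁻¹ • ((0 : Euc d), b) := by simp
  simp only [Q, scale, map_smul, smul_apply, smul_eq_mul] at le_unit
  calc m * ‖b‖ ^ 2 ≤ _ * ‖b‖ ^ 2 := mul_le_mul_of_nonneg_right le_unit (by positivity)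
    _ = _ := by field_simp

lemma exists_fderiv_fderiv_ge (hH : TonelliHam H) (P : ℝ) :
    ∃ m > 0, ∃ C ≥ 0, ∀ q p a b : Euc d, ‖p‖ ≤ P →
      m * ‖b‖ ^ 2 - C * ‖a‖ ^ 2 ≤ fderiv ℝ (fderiv ℝ H) (q, p) (a, b) (a, b) := by
  obtain ⟨C, hC, norm_le⟩ :=
    hH.periodic.fderiv.fderiv.exists_norm_le hH.continuous_fderiv_fderiv P
  obtain ⟨m, hm, fiber_ge⟩ := hH.exists_fderiv_fderiv_fiber_ge P
  refine ⟨m / 2, by positivity, C + 2 * C ^ 2 / m, by positivity, fun q p a b hp => ?_⟩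
  set Q := fderiv ℝ (fderiv ℝ H) (q, p)
  have Q_ge (z z' : Phase d) {r r' : ℝ} (hz : ‖z‖ ≤ r) (hz' : ‖z'‖ ≤ r') :
      -(C * r * r') ≤ Q z z' :=
    neg_le_of_abs_le <|
      (Q z).le_of_opNorm_le_of_le (Q.le_of_opNorm_le_of_le (norm_le q p hp) hz) hz'
  have expand : Q (a, b) (a, b) =
      Q (a, 0) (a, 0) + Q (a, 0) (0, b) + Q (0, b) (a, 0) + Q (0, b) (0, b) := by
    rw [show (a, b) = ((a, 0) + (0, b) : Phase d) by simp]
    simp only [map_add, add_apply]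
    ring
  have young : 2 * (C * ‖a‖ * ‖b‖) ≤ m / 2 * ‖b‖ ^ 2 + 2 * C ^ 2 / m * ‖a‖ ^ 2 := by
    have : m / 2 * ‖b‖ ^ 2 + 2 * C ^ 2 / m * ‖a‖ ^ 2 - 2 * (C * ‖a‖ * ‖b‖) =
        (m * ‖b‖ - 2 * C * ‖a‖) ^ 2 / (2 * m) := by
      field_simp
      ring
    linarith [show 0 ≤ (m * ‖b‖ - 2 * C * ‖a‖) ^ 2 / (2 * m) by positivity]
  have ha := (norm_prod_zero_le a b).1
  have hb := (norm_prod_zero_le a b).2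
  linarith [Q_ge _ _ ha ha, Q_ge _ _ ha hb, Q_ge _ _ hb ha, fiber_ge q p b hp]

lemma exists_quadratic_minorant_near (hH : TonelliHam H) (P R : ℝ) :
    ∃ m > 0, ∃ C ≥ 0, ∀ q p a b : Euc d, ‖p‖ ≤ P → ‖b‖ ≤ R →
      H (q, p) + fderiv ℝ H (q, p) (a, b) + m * ‖b‖ ^ 2 - C * ‖a‖ ^ 2 ≤ H (q + a, p + b) := by
  obtain ⟨m, hm, C, hC, hess_ge⟩ := hH.exists_fderiv_fderiv_ge (P + R)
  refine ⟨m / 2, by positivity, C / 2, by positivity, fun q p a b hp hb => ?_⟩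
  have taylor := add_fderiv_add_half_le hH.smooth (x := (q, p)) (z := (a, b))
    (a := m * ‖b‖ ^ 2 - C * ‖a‖ ^ 2) fun t ht => by
      refine hess_ge (q + t • a) (p + t • b) a b (norm_add_le_of_le hp ?_)
      rw [norm_smul, Real.norm_of_nonneg ht.1]
      exact (mul_le_of_le_one_left (norm_nonneg b) ht.2).trans hb
  rw [Prod.mk_add_mk] at taylor
  linarith

lemma exists_linear_minorant_far (hH : TonelliHam H) (P : ℝ) :
    ∃ R, ∀ q p a b : Euc d, ‖p‖ ≤ P → ‖a‖ ≤ 1 → R ≤ ‖b‖ →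
      H (q, p) + fderiv ℝ H (q, p) (a, b) + ‖b‖ ≤ H (q + a, p + b) := by
  obtain ⟨C₀, -, H_le⟩ := hH.periodic.exists_norm_le hH.smooth.continuous P
  obtain ⟨C₁, hC₁, dH_le⟩ :=
    hH.periodic.fderiv.exists_norm_le (hH.smooth.continuous_fderiv two_ne_zero) P
  obtain ⟨B, hB⟩ := hH.superlinear (C₁ + 2)
  refine ⟨C₀ + C₁ + (C₁ + 2) * P - B, fun q p a b hp ha hb => ?_⟩
  have dH_apply_le : fderiv ℝ H (q, p) (a, b) ≤ C₁ * (1 + ‖b‖) :=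
    (le_abs_self _).trans <| (fderiv ℝ H (q, p)).le_of_opNorm_le_of_le (dH_le q p hp) <|
      max_le (ha.trans (by simp)) (by simp)
  have norm_b_le : (C₁ + 2) * (‖b‖ - P) ≤ (C₁ + 2) * ‖p + b‖ := by
    gcongr
    linarith [norm_le_add_norm_add' p b]
  linarith [hB (q + a) (p + b), (abs_le.1 (H_le q p hp)).2]

theorem exists_legendreL_le_quadratic (hH : TonelliHam H) (P : ℝ) :
    ∃ K ≥ 0, ∀ q p δ η : Euc d, ‖p‖ ≤ P → ‖δ‖ ≤ 1 → ‖η‖ ≤ 1 →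
      LegendreL H (q + δ, (hamVF H 0 (q, p)).1 + η) ≤
        ⟪p, (hamVF H 0 (q, p)).1 + η⟫ - H (q, p) + ⟪(hamVF H 0 (q, p)).2, δ⟫ +
          K * (‖δ‖ ^ 2 + ‖η‖ ^ 2) := by
  obtain ⟨R, far⟩ := hH.exists_linear_minorant_far P
  obtain ⟨m, hm, C, hC, near⟩ := hH.exists_quadratic_minorant_near P R
  refine ⟨C + 1 / (4 * m), by positivity, fun q p δ η hp hδ hη => legendreL_le fun p' => ?_⟩
  obtain ⟨b, rfl⟩ : ∃ b, p' = p + b := ⟨p' - p, by simp⟩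
  have dH_eq : fderiv ℝ H (q, p) (δ, b) =
      ⟪b, (hamVF H 0 (q, p)).1⟫ - ⟪(hamVF H 0 (q, p)).2, δ⟫ := by
    rw [fderiv_eq_symplecticForm_hamVF (hH.smooth.differentiable two_ne_zero _),
      symplecticForm_apply, real_inner_comm]
  have K_ge : C * ‖δ‖ ^ 2 + 1 / (4 * m) * ‖η‖ ^ 2 ≤
      (C + 1 / (4 * m)) * (‖δ‖ ^ 2 + ‖η‖ ^ 2) := by
    have : 0 ≤ 1 / (4 * m) * ‖δ‖ ^ 2 := by positivity
    have : 0 ≤ C * ‖η‖ ^ 2 := by positivity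
    linarith
  have tangent_bound : H (q, p) + fderiv ℝ H (q, p) (δ, b) + ⟪b, η⟫ ≤
      H (q + δ, p + b) + (C * ‖δ‖ ^ 2 + 1 / (4 * m) * ‖η‖ ^ 2) := by
    have inner_le : ⟪b, η⟫ ≤ ‖b‖ * ‖η‖ := real_inner_le_norm b η
    rcases le_total ‖b‖ R with hb | hb
    · have young : ‖b‖ * ‖η‖ ≤ m * ‖b‖ ^ 2 + 1 / (4 * m) * ‖η‖ ^ 2 := by
        have : m * ‖b‖ ^ 2 + 1 / (4 * m) * ‖η‖ ^ 2 - ‖b‖ * ‖η‖ =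
            (2 * m * ‖b‖ - ‖η‖) ^ 2 / (4 * m) := by
          field_simp
          ring
        linarith [show 0 ≤ (2 * m * ‖b‖ - ‖η‖) ^ 2 / (4 * m) by positivity]
      linarith [near q p δ b hp hb]
    · have : 0 ≤ C * ‖δ‖ ^ 2 + 1 / (4 * m) * ‖η‖ ^ 2 := by positivity
      linarith [far q p δ b hp hδ hb, mul_le_of_le_one_right (norm_nonneg b) hη]
  simp only [inner_add_left, inner_add_right]
  linarith

end TonelliHam

end Tonelli

/-! ### Absolutely continuous curves and the Hamilton–Jacobi equation -/

lemma absolutelyContinuousOnInterval_of_dist_le {X Y : Type*} [PseudoMetricSpace X]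
    [PseudoMetricSpace Y] {f : ℝ → X} {g : ℝ → Y} {a b K : ℝ}
    (hg : AbsolutelyContinuousOnInterval g a b)
    (hfg : ∀ s ∈ uIcc a b, ∀ t ∈ uIcc a b, dist (f s) (f t) ≤ K * dist (g s) (g t)) :
    AbsolutelyContinuousOnInterval f a b := by
  refine squeeze_zero' (Eventually.of_forall fun E => Finset.sum_nonneg fun _ _ => dist_nonneg) ?_
    (by simpa using Tendsto.const_mul K hg)
  filter_upwards [mem_inf_of_right (mem_principal_self _)] with E hE
  rw [Finset.mul_sum]
  exact Finset.sum_le_sum fun i hi => hfg _ (hE.1 i hi).1 _ (hE.1 i hi).2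

lemma absolutelyContinuousOnInterval_prodMk_id {X : Type*} [PseudoMetricSpace X]
    {γ : ℝ → X} {a b : ℝ} (hγ : AbsolutelyContinuousOnInterval γ a b) :
    AbsolutelyContinuousOnInterval (fun t => (γ t, t)) a b := by
  have id_ac : AbsolutelyContinuousOnInterval (fun t : ℝ => t) a b :=
    LipschitzWith.id.lipschitzOnWith.absolutelyContinuousOnInterval
  refine squeeze_zero (fun E => Finset.sum_nonneg fun _ _ => dist_nonneg) (fun E => ?_)
    (by simpa using Tendsto.add hγ id_ac)
  rw [← Finset.sum_add_distrib]
  exact Finset.sum_le_sum fun i _ => max_le_add_of_nonneg dist_nonneg dist_nonneg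

section AbsolutelyContinuous

variable {E : Type*} [NormedAddCommGroup E] [NormedSpace ℝ E] {a b : ℝ}

lemma absolutelyContinuousOnInterval_intervalIntegral {f : ℝ → E}
    (hf : IntervalIntegrable f volume a b) :
    AbsolutelyContinuousOnInterval (fun t => ∫ s in a..t, f s) a b := by
  refine absolutelyContinuousOnInterval_of_dist_le (K := 1)
    (hf.norm.absolutelyContinuousOnInterval_intervalIntegral left_mem_uIcc) fun s hs t ht => ?_
  have integrable {r : ℝ} (hr : r ∈ uIcc a b) : IntervalIntegrable f volume a r :=
    hf.mono_set (uIcc_subset_uIcc_left hr)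
  rw [one_mul, dist_eq_norm, dist_eq_norm,
    intervalIntegral.integral_interval_sub_left (integrable hs) (integrable ht),
    intervalIntegral.integral_interval_sub_left (integrable hs).norm (integrable ht).norm]
  exact intervalIntegral.norm_integral_le_abs_integral_norm

lemma sub_le_integral_of_fderiv_le [FiniteDimensional ℝ E] {η η' : ℝ → E} (hab : a ≤ b)
    (hη : AbsolutelyContinuousOnInterval η a b)
    (hη' : ∀ᵐ s, s ∈ Icc a b → HasDerivAt η (η' s) s) {F : E → ℝ} (hF : ContDiff ℝ 1 F)
    {g : ℝ → ℝ} (hg : IntervalIntegrable g volume a b)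
    (hle : ∀ s ∈ Icc a b, fderiv ℝ F (η s) (η' s) ≤ g s) :
    F (η b) - F (η a) ≤ ∫ s in a..b, g s := by
  obtain ⟨K, lip⟩ := LocallyLipschitzOn.exists_lipschitzOnWith_of_compact
    (isCompact_uIcc.image_of_continuousOn hη.continuousOn)
    (hF.locallyLipschitz.locallyLipschitzOn (s := η '' uIcc a b))
  have comp_ac : AbsolutelyContinuousOnInterval (fun s => F (η s)) a b :=
    absolutelyContinuousOnInterval_of_dist_le hη fun s hs t ht =>
      lip.dist_le_mul _ (mem_image_of_mem η hs) _ (mem_image_of_mem η ht)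
  rw [← comp_ac.integral_deriv_eq_sub]
  refine intervalIntegral.integral_mono_ae_restrict hab comp_ac.intervalIntegrable_deriv hg ?_
  rw [EventuallyLE, ae_restrict_iff' measurableSet_Icc]
  filter_upwards [hη'] with s hs hsI
  exact ((hF.differentiable one_ne_zero _).hasFDerivAt.comp_hasDerivAt s (hs hsI)).deriv.trans_le
    (hle s hsI)

end AbsolutelyContinuous

section ACOn

variable {d : ℕ} {γ γ' : ℝ → Euc d} {a b : ℝ}

lemma ACOn.absolutelyContinuousOnInterval (hγ : ACOn γ γ' a b) (hab : a ≤ b) :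
    AbsolutelyContinuousOnInterval γ a b := by
  refine absolutelyContinuousOnInterval_of_dist_le (K := 1)
    (absolutelyContinuousOnInterval_intervalIntegral hγ.1) fun s hs t ht => ?_
  rw [uIcc_of_le hab] at hs ht
  rw [hγ.2 s hs, hγ.2 t ht, dist_add_left, one_mul]

lemma ACOn.ae_hasDerivAt (hγ : ACOn γ γ' a b) (hab : a ≤ b) :
    ∀ᵐ s, s ∈ Icc a b → HasDerivAt γ (γ' s) s := by
  have ne (x : ℝ) : ∀ᵐ s : ℝ, s ≠ x := by simp [ae_iff, measure_singleton]
  filter_upwards [hγ.1.ae_hasDerivAt_integral, ne a, ne b] with s hs hsa hsb hsI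
  refine ((hs (by rwa [uIcc_of_le hab]) a left_mem_uIcc).const_add (γ a)).congr_of_eventuallyEq ?_
  filter_upwards [Icc_mem_nhds (hsI.1.lt_of_ne hsa.symm) (hsI.2.lt_of_ne hsb)] with t ht
  exact hγ.2 t ht

lemma ACOn.sub_le_integral (hγ : ACOn γ γ' a b) (hab : a ≤ b) {F : Euc d × ℝ → ℝ}
    (hF : ContDiff ℝ 1 F) {g : ℝ → ℝ} (hg : IntervalIntegrable g volume a b)
    (hle : ∀ s ∈ Icc a b, fderiv ℝ F (γ s, s) (γ' s, 1) ≤ g s) :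
    F (γ b, b) - F (γ a, a) ≤ ∫ s in a..b, g s := by
  refine sub_le_integral_of_fderiv_le (η' := fun s => (γ' s, 1)) hab
    (absolutelyContinuousOnInterval_prodMk_id (hγ.absolutelyContinuousOnInterval hab)) ?_ hF hg hle
  filter_upwards [hγ.ae_hasDerivAt hab] with s hs hsI
  exact (hs hsI).prodMk (hasDerivAt_id s)

end ACOn

section Domination

variable {d : ℕ} {H : Phase d → ℝ} {u : Euc d → ℝ} {a b : ℝ} {γ γ' : ℝ → Euc d} {g : ℝ → ℝ}

lemma mem_LOvals_zero_iff {L : Phase d → ℝ} {c t r : ℝ} {q : Euc d} :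
    r ∈ LOvals L 0 c 0 u t q ↔ ∃ γ γ' : ℝ → Euc d, ACOn γ γ' (-t) 0 ∧ γ 0 = q ∧
      IntervalIntegrable (fun s => L (γ s, γ' s) + c) volume (-t) 0 ∧
      r = u (γ (-t)) + ∫ s in (-t)..0, (L (γ s, γ' s) + c) := by
  simp [LOvals]

lemma TonelliHam.exists_le_legendreL (hH : TonelliHam H) : ∃ C, ∀ x, C ≤ LegendreL H x := by
  obtain ⟨C, _, hC⟩ := hH.periodic.exists_norm_le hH.smooth.continuous 0
  refine ⟨-C, fun x => le_trans ?_ (hH.inner_sub_le_legendreL x.1 x.2 0)⟩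
  rw [inner_zero_left, zero_sub]
  exact neg_le_neg ((Real.le_norm_self _).trans (hC x.1 0 norm_zero.le))

lemma TonelliHam.bddBelow_LOvals (hH : TonelliHam H) (hu : Continuous u) (hper : PerFun u)
    (c : ℝ) {t : ℝ} (ht : 0 ≤ t) (q : Euc d) : BddBelow (LOvals (LegendreL H) 0 c 0 u t q) := by
  obtain ⟨C, hC⟩ := hH.exists_le_legendreL
  obtain ⟨U, _, hU⟩ := hper.exists_norm_le hu
  refine ⟨-U + ∫ _ in (-t)..0, (C + c), fun r hr => ?_⟩
  obtain ⟨γ, γ', _, _, integrable, rfl⟩ := mem_LOvals_zero_iff.1 hr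
  refine add_le_add (abs_le.1 (hU _)).1 ?_
  exact intervalIntegral.integral_mono_on (by linarith) (by simp) integrable
    fun s _ => by linarith [hC (γ s, γ' s)]

lemma TonelliHam.intervalIntegrable_legendreL (hH : TonelliHam H) (hγ : Continuous γ)
    (hγ' : Continuous γ') (hg : Continuous g) (hab : a ≤ b)
    (hle : ∀ s ∈ Icc a b, LegendreL H (γ s, γ' s) ≤ g s) :
    IntervalIntegrable (fun s => LegendreL H (γ s, γ' s)) volume a b := by
  obtain ⟨C, hC⟩ := hH.exists_le_legendreL
  rw [intervalIntegrable_iff_integrableOn_Icc_of_le hab]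
  have meas : Measurable fun s => LegendreL H (γ s, γ' s) :=
    hH.lowerSemicontinuous_legendreL.measurable.comp (hγ.prodMk hγ').measurable
  have cont : Continuous fun s => |g s| + |C| := by fun_prop
  refine Integrable.mono' cont.continuousOn.integrableOn_Icc meas.aestronglyMeasurable ?_
  filter_upwards [ae_restrict_mem measurableSet_Icc] with s hs
  rw [Real.norm_eq_abs, abs_le]
  constructor <;>
    linarith [hle s hs, hC (γ s, γ' s), le_abs_self (g s), abs_nonneg (g s), neg_abs_le C,
      abs_nonneg C]

lemma IsWeakKAM.sub_le_integral_legendreL (hu : IsWeakKAM H u) (hH : TonelliHam H) (hab : a < b)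
    (hγ : ∀ s, HasDerivAt γ (γ' s) s) (hγ' : Continuous γ')
    (integrable : IntervalIntegrable (fun s => LegendreL H (γ s, γ' s)) volume a b) :
    u (γ b) - u (γ a) ≤ ∫ s in a..b, (LegendreL H (γ s, γ' s) + maneCritical H) := by
  have hγ'_shift : Continuous fun s => γ' (s + b) := hγ'.comp (continuous_add_const b)
  have mem : u (γ a) + ∫ s in a..b, (LegendreL H (γ s, γ' s) + maneCritical H) ∈
      LOvals (LegendreL H) 0 (maneCritical H) 0 u (b - a) (γ b) := by
    refine mem_LOvals_zero_iff.2 ⟨fun s => γ (s + b), fun s => γ' (s + b),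
      ⟨hγ'_shift.intervalIntegrable _ _, fun t _ => ?_⟩, by simp, ?_, ?_⟩
    · rw [intervalIntegral.integral_eq_sub_of_hasDerivAt
        (fun s _ => (hγ (s + b)).comp_add_const s b) (hγ'_shift.intervalIntegrable _ _)]
      abel
    · simpa using (integrable.add intervalIntegrable_const).comp_add_right b
    · rw [intervalIntegral.integral_comp_add_right
        (fun s => LegendreL H (γ s, γ' s) + maneCritical H)]
      simp
  rw [sub_le_iff_le_add', ← hu.2.2 (b - a) (sub_pos.2 hab) (γ b)]
  exact csInf_le (hH.bddBelow_LOvals hu.1 hu.2.1 _ (sub_pos.2 hab).le _) mem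

theorem IsWeakKAM.sub_le_integral (hu : IsWeakKAM H u) (hH : TonelliHam H) (hab : a ≤ b)
    (hγ : ∀ s, HasDerivAt γ (γ' s) s) (hγ' : Continuous γ') (hg : Continuous g)
    (hle : ∀ s ∈ Icc a b, LegendreL H (γ s, γ' s) ≤ g s) :
    u (γ b) - u (γ a) ≤ ∫ s in a..b, (g s + maneCritical H) := by
  rcases hab.eq_or_lt with rfl | hab
  · simp
  have cont : Continuous γ := continuous_iff_continuousAt.2 fun s => (hγ s).continuousAt
  have integrable := hH.intervalIntegrable_legendreL cont hγ' hg hab.le hle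
  refine (hu.sub_le_integral_legendreL hH hab hγ hγ' integrable).trans ?_
  exact intervalIntegral.integral_mono_on hab.le (integrable.add intervalIntegrable_const)
    ((hg.add continuous_const).intervalIntegrable _ _) fun s hs => by linarith [hle s hs]

end Domination

section Flow

variable {d : ℕ} {H : Phase d → ℝ} {φ : ℝ → Phase d → Phase d}

lemma IsConformalFlow.continuous_time {lam : ℝ} (hφ : IsConformalFlow H lam φ) (x : Phase d) :
    Continuous fun t => φ t x :=
  continuous_iff_continuousAt.2 fun t => (hφ.2.2 x t).continuousAt

end Flow

section Gradient

variable {d : ℕ} {u : Euc d → ℝ}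

lemma continuous_gradient (hu : ContDiff ℝ 1 u) : Continuous (gradient u) :=
  (InnerProductSpace.toDual ℝ (Euc d)).symm.continuous.comp (hu.continuous_fderiv one_ne_zero)

lemma PerFun.gradient (hu : PerFun u) : PerFun (gradient u) := fun k q => by
  simp only [_root_.gradient, hu.fderiv k q]

end Gradient

/-- The standing assumptions: `u` is a `C¹` weak K.A.M. solution for the Tonelli Hamiltonian `H`,
whose Hamiltonian flow is `φ`. -/
structure IsC1WeakKAM {d : ℕ} (H : Phase d → ℝ) (φ : ℝ → Phase d → Phase d) (u : Euc d → ℝ) :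
    Prop where
  tonelli : TonelliHam H
  flow : IsConformalFlow H 0 φ
  contDiff : ContDiff ℝ 1 u
  weakKAM : IsWeakKAM H u

namespace IsC1WeakKAM

variable {d : ℕ} {H : Phase d → ℝ} {φ : ℝ → Phase d → Phase d} {u : Euc d → ℝ}

lemma continuous_action_density (h : IsC1WeakKAM H φ u) (x : Phase d) :
    Continuous fun s => ⟪(φ s x).2, (hamVF H 0 (φ s x)).1⟫ - H (φ s x) := by
  have φ_cont := h.flow.continuous_time x
  have vf_cont := (contDiff_hamVF h.tonelli.smooth).continuous.comp φ_cont
  exact (φ_cont.snd.inner vf_cont.fst).sub (h.tonelli.smooth.continuous.comp φ_cont)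

lemma antitone_sub_action (h : IsC1WeakKAM H φ u) (x : Phase d) :
    Antitone fun t => u (φ t x).1 -
      ∫ s in 0..t, (⟪(φ s x).2, (hamVF H 0 (φ s x)).1⟫ - H (φ s x) + maneCritical H) := by
  intro s t hst
  have vf_cont := (contDiff_hamVF h.tonelli.smooth).continuous.comp (h.flow.continuous_time x)
  have dominated := h.weakKAM.sub_le_integral h.tonelli hst (fun s => (h.flow.2.2 x s).fst)
    vf_cont.fst (h.continuous_action_density x) fun r _ => by
      obtain ⟨K, _, hK⟩ := h.tonelli.exists_legendreL_le_quadratic ‖(φ r x).2‖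
      simpa using hK (φ r x).1 (φ r x).2 0 0 le_rfl (by simp) (by simp)
  have integrable (a b : ℝ) : IntervalIntegrable (fun s =>
      ⟪(φ s x).2, (hamVF H 0 (φ s x)).1⟫ - H (φ s x) + maneCritical H) volume a b :=
    ((h.continuous_action_density x).add continuous_const).intervalIntegrable a b
  rw [← intervalIntegral.integral_interval_sub_left (integrable 0 t) (integrable 0 s)] at dominated
  exact sub_le_sub_iff.2 (by linarith)

lemma hamiltonian_gradient_le (h : IsC1WeakKAM H φ u) (q : Euc d) :
    H (q, gradient u q) ≤ maneCritical H := by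
  set x : Phase d := (q, gradient u q) with hx
  have deriv_u : HasDerivAt (fun t => u (φ t x).1) _ 0 :=
    (h.contDiff.differentiable one_ne_zero _).hasFDerivAt.comp_hasDerivAt 0 (h.flow.2.2 x 0).fst
  have deriv_action := (((h.continuous_action_density x).add
    (continuous_const (y := maneCritical H))).integral_hasStrictDerivAt 0 0).hasDerivAt
  have deriv_nonpos : _ ≤ (0 : ℝ) := (deriv_u.fun_sub deriv_action).deriv.symm.trans_le
    (h.antitone_sub_action x).deriv_nonpos
  simp only [Pi.add_apply, h.flow.1, ← inner_gradient_left, hx] at deriv_nonpos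
  linarith

lemma exists_bump_perturbation_le (h : IsC1WeakKAM H φ u) {q₀ : Euc d}
    (hlt : H (q₀, gradient u q₀) < maneCritical H) :
    ∃ (b : Euc d → ℝ) (ε : ℝ), ContDiff ℝ 1 b ∧ b q₀ = 1 ∧ 0 < ε ∧ ∀ q, ∀ σ ∈ Icc (0 : ℝ) 1,
      H (q, gradient u q + (ε * σ) • gradient b q) + ε * b q ≤ maneCritical H := by
  have H_cont := h.tonelli.smooth.continuous
  have du_cont := continuous_gradient h.contDiff
  have Hdu_cont : Continuous fun q => H (q, gradient u q) := by fun_prop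
  obtain ⟨r, hr, Hdu_lt⟩ := Metric.nhds_basis_closedBall.eventually_iff.1
    (Hdu_cont.continuousAt.eventually_lt_const hlt)
  let b : ContDiffBump q₀ := ⟨r / 2, r, by positivity, by linarith⟩
  have b_smooth : ContDiff ℝ 1 b := b.contDiff
  have db_cont := continuous_gradient b_smooth
  have small : ∀ᶠ y : ℝ × ℝ in nhds (0, 0), ∀ q ∈ closedBall q₀ r,
      H (q, gradient u q + y.1 • gradient b q) + y.2 < maneCritical H := by
    refine (isCompact_closedBall q₀ r).eventually_forall_of_forall_eventually fun q hq => ?_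
    have cont : Continuous fun z : (ℝ × ℝ) × Euc d =>
        H (z.2, gradient u z.2 + z.1.1 • gradient b z.2) + z.1.2 := by fun_prop
    exact cont.continuousAt.eventually_lt_const (by simpa using Hdu_lt hq)
  obtain ⟨ε, hε, small⟩ := Metric.nhds_basis_closedBall.eventually_iff.1 small
  refine ⟨b, ε, b_smooth, b.one_of_mem_closedBall (mem_closedBall_self b.rIn_pos.le), hε,
    fun q σ hσ => ?_⟩
  by_cases hq : q ∈ closedBall q₀ r
  · refine (small (x := (ε * σ, ε * b q)) ?_ q hq).le
    have mem_Icc {τ : ℝ} (hτ : τ ∈ Icc (0 : ℝ) 1) : dist (ε * τ) 0 ≤ ε := by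
      rw [Real.dist_0_eq_abs, abs_of_nonneg (mul_nonneg hε.le hτ.1)]
      exact mul_le_of_le_one_right hε.le hτ.2
    exact max_le (mem_Icc hσ) (mem_Icc ⟨b.nonneg, b.le_one⟩)
  · have b_zero : (b : Euc d → ℝ) =ᶠ[nhds q] fun _ => 0 := by
      filter_upwards [isClosed_closedBall.isOpen_compl.mem_nhds hq] with y hy
      exact b.zero_of_le_dist (not_le.1 (mt mem_closedBall.2 hy)).le
    rw [b_zero.gradient_eq, gradient_fun_const, b_zero.self_of_nhds]
    simpa using h.hamiltonian_gradient_le q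

-- Along every curve ending at `q₀`, the function `u + ε (1 + s) b` grows at most by the action.
lemma add_le_of_mem_LOvals (h : IsC1WeakKAM H φ u) {b : Euc d → ℝ} {ε : ℝ}
    (hb : ContDiff ℝ 1 b) (hle : ∀ q, ∀ σ ∈ Icc (0 : ℝ) 1,
      H (q, gradient u q + (ε * σ) • gradient b q) + ε * b q ≤ maneCritical H)
    {q₀ : Euc d} {r : ℝ} (hr : r ∈ LOvals (LegendreL H) 0 (maneCritical H) 0 u 1 q₀) :
    u q₀ + ε * b q₀ ≤ r := by
  obtain ⟨γ, γ', ac, rfl, integrable, rfl⟩ := mem_LOvals_zero_iff.1 hr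
  set F : Euc d × ℝ → ℝ := fun x => u x.1 + ε * (1 + x.2) * b x.1 with hF_def
  have hu := h.contDiff
  have hF : ContDiff ℝ 1 F := by fun_prop
  have deriv_F (q v : Euc d) (s : ℝ) : fderiv ℝ F (q, s) (v, 1) =
      ⟪gradient u q + (ε * (1 + s)) • gradient b q, v⟫ + ε * b q := by
    have deriv_u := (hu.differentiable one_ne_zero q).hasFDerivAt.comp (q, s)
      (hasFDerivAt_fst (𝕜 := ℝ) (p := (q, s)))
    have deriv_b := (hb.differentiable one_ne_zero q).hasFDerivAt.comp (q, s)
      (hasFDerivAt_fst (𝕜 := ℝ) (p := (q, s)))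
    have deriv_s := ((hasFDerivAt_snd (𝕜 := ℝ) (p := (q, s))).const_add 1).const_mul ε
    have hasFDerivAt_F : HasFDerivAt F _ (q, s) := deriv_u.add (deriv_s.mul deriv_b)
    rw [hasFDerivAt_F.fderiv, inner_add_left, inner_smul_left, inner_gradient_left,
      inner_gradient_left]
    simp
    ring
  have growth := ac.sub_le_integral (by norm_num) hF integrable fun s hs => by
    rw [deriv_F]
    linarith [hle (γ s) (1 + s) ⟨by linarith [hs.1], by linarith [hs.2]⟩,
      h.tonelli.inner_sub_le_legendreL (γ s) (γ' s)
        (gradient u (γ s) + (ε * (1 + s)) • gradient b (γ s))]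
  norm_num [hF_def] at growth
  linarith

theorem hamiltonian_gradient_eq (h : IsC1WeakKAM H φ u) (q : Euc d) :
    H (q, gradient u q) = maneCritical H := by
  refine (h.hamiltonian_gradient_le q).eq_or_lt.resolve_right fun hlt => ?_
  obtain ⟨b, ε, hb, hbq, hε, hle⟩ := h.exists_bump_perturbation_le hlt
  have nonempty : (LOvals (LegendreL H) 0 (maneCritical H) 0 u 1 q).Nonempty :=
    ⟨_, mem_LOvals_zero_iff.2 ⟨fun _ => q, fun _ => 0, by simp [ACOn], rfl, by simp, rfl⟩⟩
  have := le_csInf nonempty fun r hr => h.add_le_of_mem_LOvals hb hle hr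
  rw [← LaxOleinik, h.weakKAM.2.2 1 one_pos q, hbq] at this
  linarith

end IsC1WeakKAM

/-! ### Global existence of integral curves of bounded continuous vector fields -/

lemma exists_continuous_delay {τ : ℝ} (hτ : 0 ≤ τ) :
    ∃ σ : ℝ → ℝ, Continuous σ ∧ (∀ r, |σ r - r| ≤ τ) ∧
      ∀ r a, 0 ≤ a → |r| ≤ a + τ → |σ r| ≤ a := by
  refine ⟨fun r => r - max (-τ) (min τ r), by fun_prop, fun r => ?_, fun r a ha hr => ?_⟩
  · rw [sub_sub_cancel_left, abs_neg, abs_le]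
    exact ⟨le_max_left _ _, max_le (by linarith) (min_le_left _ _)⟩
  · rw [abs_le] at hr ⊢
    rcases max_cases (-τ) (min τ r) with h | h <;> rcases min_cases τ r with h' | h' <;>
      constructor <;> linarith

lemma isCompact_setOf_lipschitzWith {E : Type*} [MetricSpace E] [ProperSpace E]
    (V : NNReal) (q : E) :
    IsCompact {f : C(ℝ, E) | LipschitzWith V f ∧ f 0 = q} := by
  refine ArzelaAscoli.isCompact_of_equicontinuous _ ?_
    (LipschitzWith.uniformEquicontinuous _ V fun f => f.2.1).equicontinuous
  have image_eq : ContinuousMap.toFun '' {f : C(ℝ, E) | LipschitzWith V f ∧ f 0 = q} =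
      {f : ℝ → E | ∀ s t, dist (f s) (f t) ≤ V * dist s t} ∩ {f | f 0 = q} := by
    ext f
    simp only [lipschitzWith_iff_dist_le_mul]
    refine ⟨?_, fun hf => ⟨⟨f, (LipschitzWith.of_dist_le_mul hf.1).continuous⟩, hf, rfl⟩⟩
    rintro ⟨f, hf, rfl⟩
    exact hf
  rw [image_eq]
  refine IsCompact.of_isClosed_subset
    (isCompact_univ_pi fun s => isCompact_closedBall q (V * dist s 0)) (IsClosed.inter ?_ ?_)
    fun f hf s _ => hf.2 ▸ hf.1 s 0
  · simp only [ofPred_forall]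
    exact isClosed_iInter fun s => isClosed_iInter fun t => isClosed_le (by fun_prop) (by fun_prop)
  · exact isClosed_eq (by fun_prop) continuous_const

section Peano

variable {E : Type*} [NormedAddCommGroup E] [NormedSpace ℝ E] {X : E → E} {V : NNReal}

lemma lipschitzWith_const_add_integral {f : ℝ → E} (hf : Continuous f) (hV : ∀ s, ‖f s‖ ≤ V)
    (q : E) : LipschitzWith V fun s => q + ∫ r in 0..s, f r := by
  refine LipschitzWith.of_dist_le_mul fun s t => ?_
  rw [dist_add_left, dist_eq_norm, intervalIntegral.integral_interval_sub_left
    (hf.intervalIntegrable _ _) (hf.intervalIntegrable _ _)]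
  exact intervalIntegral.norm_integral_le_of_norm_le_const fun r _ => hV r

lemma exists_delayed_integral_curve (hX : Continuous X) (hV : ∀ x, ‖X x‖ ≤ V) {σ : ℝ → ℝ} {τ : ℝ}
    (hσ : Continuous σ) (hτ : 0 < τ) (delay : ∀ r a, 0 ≤ a → |r| ≤ a + τ → |σ r| ≤ a)
    (q : E) (T : ℝ) :
    ∃ γ : ℝ → E, LipschitzWith V γ ∧ ∀ s, |s| ≤ T → γ s = q + ∫ r in 0..s, X (γ (σ r)) := by
  have steps (N : ℕ) : ∃ γ : ℝ → E, LipschitzWith V γ ∧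
      ∀ s, |s| ≤ N * τ → γ s = q + ∫ r in 0..s, X (γ (σ r)) := by
    induction N with
    | zero =>
      refine ⟨fun _ => q, LipschitzWith.const' q, fun s hs => ?_⟩
      obtain rfl : s = 0 := abs_nonpos_iff.1 (by simpa using hs)
      simp
    | succ N ih =>
      obtain ⟨γ, lip, hγ⟩ := ih
      refine ⟨_, lipschitzWith_const_add_integral (hX.comp (lip.continuous.comp hσ))
        (fun s => hV _) q, fun s hs => ?_⟩
      congr 1
      refine intervalIntegral.integral_congr fun r hr => ?_
      have hrs : |r| ≤ |s| := by simpa using abs_sub_left_of_mem_uIcc hr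
      have hσr : |σ r| ≤ N * τ :=
        delay r _ (by positivity) (hrs.trans (hs.trans_eq (by push_cast; ring)))
      simp only [hγ _ hσr, Function.comp_apply]
  obtain ⟨N, hN⟩ := exists_nat_ge (T / τ)
  obtain ⟨γ, lip, hγ⟩ := steps N
  exact ⟨γ, lip, fun s hs => hγ s (hs.trans ((div_le_iff₀ hτ).1 hN))⟩

-- Peano's theorem, by compactness of a family of solutions of equations with vanishing delay.
theorem exists_hasDerivAt_eq_of_continuous [ProperSpace E] (hX : Continuous X)
    (hV : ∀ x, ‖X x‖ ≤ V) (q : E) :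
    ∃ γ : ℝ → E, γ 0 = q ∧ ∀ s, HasDerivAt γ (X (γ s)) s := by
  choose σ hσ hσ_near delay using fun n : ℕ =>
    exists_continuous_delay (τ := 1 / ((n : ℝ) + 1)) (by positivity)
  choose γ lip hγ using fun n : ℕ =>
    exists_delayed_integral_curve hX hV (hσ n) (by positivity) (delay n) q n
  obtain ⟨f, hf, k, hk, lim⟩ := (isCompact_setOf_lipschitzWith V q).tendsto_subseq
    (x := fun n => ⟨γ n, (lip n).continuous⟩) fun n => ⟨lip n, by simpa using hγ n 0 (by simp)⟩
  have lim_apply (s : ℝ) : Tendsto (fun n => γ (k n) s) atTop (nhds (f s)) :=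
    ((continuous_eval_const (F := C(ℝ, E)) s).tendsto f).comp lim
  have lim_delay (s : ℝ) : Tendsto (fun n => γ (k n) (σ (k n) s)) atTop (nhds (f s)) := by
    have delay_tendsto : Tendsto (fun n => (V : ℝ) * (1 / ((k n : ℝ) + 1))) atTop (nhds 0) := by
      simpa only [mul_zero, Function.comp_def] using
        (tendsto_one_div_add_atTop_nhds_zero_nat.comp hk.tendsto_atTop).const_mul (V : ℝ)
    refine (lim_apply s).congr_dist
      (squeeze_zero (fun _ => dist_nonneg) (fun n => ?_) delay_tendsto)
    rw [dist_comm]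
    exact ((lip _).dist_le_mul _ _).trans (mul_le_mul_of_nonneg_left (hσ_near _ s) V.2)
  have integral_eq (s : ℝ) : f s = q + ∫ r in 0..s, X (f r) := by
    refine tendsto_nhds_unique (lim_apply s) (Tendsto.congr' ?_ (tendsto_const_nhds.add
      (intervalIntegral.tendsto_integral_filter_of_dominated_convergence
        (fun _ => (V : ℝ)) ?_ ?_ intervalIntegrable_const
        (ae_of_all _ fun r _ => (hX.tendsto _).comp (lim_delay r)))))
    · filter_upwards [(tendsto_natCast_atTop_atTop.comp hk.tendsto_atTop).eventually_ge_atTop |s|]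
        with n hn
      exact (hγ _ s hn).symm
    · exact Eventually.of_forall fun n =>
        (hX.comp ((lip _).continuous.comp (hσ _))).aestronglyMeasurable
    · exact Eventually.of_forall fun n => ae_of_all _ fun r _ => hV _
  refine ⟨f, hf.2, fun s => ?_⟩
  refine HasDerivAt.congr_of_eventuallyEq ?_ (Eventually.of_forall integral_eq)
  exact ((hX.comp f.continuous).integral_hasStrictDerivAt 0 s).hasDerivAt.const_add q

end Peano

/-! ### Invariance of the graph and Lipschitz continuity of the differential -/

lemma eq_of_hasDerivAt_of_contDiff {E : Type*} [NormedAddCommGroup E] [NormedSpace ℝ E]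
    [CompleteSpace E] {X : E → E} (hX : ContDiff ℝ 1 X) {f g : ℝ → E}
    (hf : ∀ t, HasDerivAt f (X (f t)) t) (hg : ∀ t, HasDerivAt g (X (g t)) t)
    (h0 : f 0 = g 0) : f = g :=
  isMIntegralCurve_Ioo_eq_of_contMDiff_boundaryless (I := modelWithCornersSelf ℝ E)
    (contMDiff_vectorSpace_iff_contDiff.2 hX) (fun t => (hf t).hasFDerivAt.hasMFDerivAt)
    (fun t => (hg t).hasFDerivAt.hasMFDerivAt) h0

lemma lipschitzWith_of_abs_sub_sub_inner_le {E : Type*} [NormedAddCommGroup E]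
    [InnerProductSpace ℝ E] {u : E → ℝ} {g : E → E} {K : NNReal}
    (hK : ∀ q v, |u (q + v) - u q - ⟪g q, v⟫| ≤ K * ‖v‖ ^ 2) : LipschitzWith (6 * K) g := by
  refine LipschitzWith.of_dist_le_mul fun y x => ?_
  rw [dist_eq_norm, dist_eq_norm, NNReal.coe_mul, NNReal.coe_ofNat]
  have inner_le (v : E) :
      ⟪g y - g x, v⟫ ≤ K * (‖y - x + v‖ ^ 2 + ‖y - x‖ ^ 2 + ‖v‖ ^ 2) := by
    have expand_sum := (abs_le.1 (hK x (y - x + v))).2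
    have expand_base := (abs_le.1 (hK x (y - x))).1
    have expand_end := (abs_le.1 (hK y v)).1
    rw [show x + (y - x + v) = y + v by abel, inner_add_right] at expand_sum
    rw [add_sub_cancel] at expand_base
    rw [inner_sub_left]
    linarith
  set w := g y - g x
  rcases eq_or_ne w 0 with w_zero | w_ne
  · rw [w_zero, norm_zero]; positivity
  rcases eq_or_ne y x with rfl | hyx
  · exact absurd (sub_self _) w_ne
  have hw : ‖w‖ ≠ 0 := norm_ne_zero_iff.2 w_ne
  have hyx : 0 < ‖y - x‖ := norm_sub_pos_iff.2 hyx
  set v := (‖y - x‖ / ‖w‖) • w with hv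
  have norm_v : ‖v‖ = ‖y - x‖ := by
    rw [hv, norm_smul, norm_div, norm_norm, norm_norm, div_mul_cancel₀ _ hw]
  have inner_v : ⟪w, v⟫ = ‖y - x‖ * ‖w‖ := by
    rw [hv, inner_smul_right, real_inner_self_eq_norm_sq, sq, ← mul_assoc, div_mul_cancel₀ _ hw]
  have norm_sum : ‖y - x + v‖ ≤ 2 * ‖y - x‖ := (norm_add_le _ _).trans (by linarith)
  refine le_of_mul_le_mul_left ?_ hyx
  calc ‖y - x‖ * ‖w‖ ≤ K * (‖y - x + v‖ ^ 2 + ‖y - x‖ ^ 2 + ‖v‖ ^ 2) := inner_v ▸ inner_le v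
    _ ≤ K * ((2 * ‖y - x‖) ^ 2 + ‖y - x‖ ^ 2 + ‖y - x‖ ^ 2) := by rw [norm_v]; gcongr
    _ = ‖y - x‖ * (6 * K * ‖y - x‖) := by ring

section ProjectedFlow

variable {d : ℕ}

/-- The section `q ↦ (q, du(q))` of `T^*𝕋^d`; the covector `du(q)` is identified with
the gradient. -/
def gradLift (u : Euc d → ℝ) (q : Euc d) : Phase d := (q, gradient u q)

/-- The projection to `𝕋^d` of the Hamiltonian vector field along the graph of `du`. -/
def projVF (H : Phase d → ℝ) (u : Euc d → ℝ) (q : Euc d) : Euc d := (hamVF H 0 (gradLift u q)).1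

/-- The projection to `𝕋^d` of the Hamiltonian flow along the graph of `du`. -/
def projFlow (φ : ℝ → Phase d → Phase d) (u : Euc d → ℝ) (t : ℝ) (q : Euc d) : Euc d :=
  (φ t (gradLift u q)).1

end ProjectedFlow

namespace IsC1WeakKAM

variable {d : ℕ} {H : Phase d → ℝ} {φ : ℝ → Phase d → Phase d} {u : Euc d → ℝ}

lemma continuous_hamVF_gradLift (h : IsC1WeakKAM H φ u) :
    Continuous fun q => hamVF H 0 (gradLift u q) :=
  (contDiff_hamVF h.tonelli.smooth).continuous.comp
    (continuous_id.prodMk (continuous_gradient h.contDiff))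

lemma continuous_projVF (h : IsC1WeakKAM H φ u) : Continuous (projVF H u) :=
  h.continuous_hamVF_gradLift.fst

lemma perFun_projVF (h : IsC1WeakKAM H φ u) : PerFun (projVF H u) := fun k q => by
  simp only [projVF, gradLift, h.weakKAM.2.1.gradient k q, h.tonelli.periodic.hamVF k]

lemma exists_norm_gradient_le (h : IsC1WeakKAM H φ u) : ∃ P, ∀ q, ‖gradient u q‖ ≤ P := by
  obtain ⟨P, _, hP⟩ := h.weakKAM.2.1.gradient.exists_norm_le (continuous_gradient h.contDiff)
  exact ⟨P, hP⟩

lemma exists_legendreL_le (h : IsC1WeakKAM H φ u) :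
    ∃ K ≥ 0, ∀ q δ η, ‖δ‖ ≤ 1 → ‖η‖ ≤ 1 → LegendreL H (q + δ, projVF H u q + η) ≤
      ⟪gradient u q, projVF H u q + η⟫ - maneCritical H + ⟪(hamVF H 0 (gradLift u q)).2, δ⟫ +
        K * (‖δ‖ ^ 2 + ‖η‖ ^ 2) := by
  obtain ⟨P, hP⟩ := h.exists_norm_gradient_le
  obtain ⟨K, hK0, hK⟩ := h.tonelli.exists_legendreL_le_quadratic P
  refine ⟨K, hK0, fun q δ η hδ hη => ?_⟩
  rw [← h.hamiltonian_gradient_eq q]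
  exact hK q (gradient u q) δ η (hP q) hδ hη

lemma integral_inner_gradient_projVF (h : IsC1WeakKAM H φ u) {γ : ℝ → Euc d}
    (hγ : ∀ s, HasDerivAt γ (projVF H u (γ s)) s) (a b : ℝ) :
    ∫ s in a..b, ⟪gradient u (γ s), projVF H u (γ s)⟫ = u (γ b) - u (γ a) := by
  have γ_cont : Continuous γ := continuous_iff_continuousAt.2 fun s => (hγ s).continuousAt
  refine intervalIntegral.integral_eq_sub_of_hasDerivAt (f := fun s => u (γ s)) (fun s _ => ?_)
    ((((continuous_gradient h.contDiff).inner h.continuous_projVF).comp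
      γ_cont).intervalIntegrable _ _)
  rw [inner_gradient_left]
  exact (h.contDiff.differentiable one_ne_zero _).hasFDerivAt.comp_hasDerivAt s (hγ s)

-- An integral curve of `projVF H u` calibrates `u`, so varying it can only increase the action.
lemma exists_variation_le (h : IsC1WeakKAM H φ u) :
    ∃ K ≥ 0, ∀ (γ ξ ξ' : ℝ → Euc d) (a b r : ℝ), a ≤ b → r ≤ 1 →
      (∀ s, HasDerivAt γ (projVF H u (γ s)) s) → (∀ s, HasDerivAt ξ (ξ' s) s) → Continuous ξ' →
      (∀ s ∈ Icc a b, ‖ξ s‖ ≤ r) → (∀ s ∈ Icc a b, ‖ξ' s‖ ≤ r) →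
      u (γ b + ξ b) - u (γ a + ξ a) ≤ u (γ b) - u (γ a) + (∫ s in a..b,
        (⟪gradient u (γ s), ξ' s⟫ + ⟪(hamVF H 0 (gradLift u (γ s))).2, ξ s⟫)) +
          (b - a) * (2 * K * r ^ 2) := by
  obtain ⟨K, hK0, hK⟩ := h.exists_legendreL_le
  refine ⟨K, hK0, fun γ ξ ξ' a b r hab hr hγ hξ hξ' hξr hξ'r => ?_⟩
  have γ_cont : Continuous γ := continuous_iff_continuousAt.2 fun s => (hγ s).continuousAt
  have ξ_cont : Continuous ξ := continuous_iff_continuousAt.2 fun s => (hξ s).continuousAt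
  have X_cont : Continuous fun s => projVF H u (γ s) := h.continuous_projVF.comp γ_cont
  have du_cont : Continuous fun s => gradient u (γ s) :=
    (continuous_gradient h.contDiff).comp γ_cont
  have force_cont : Continuous fun s => (hamVF H 0 (gradLift u (γ s))).2 :=
    h.continuous_hamVF_gradLift.snd.comp γ_cont
  set action : ℝ → ℝ := fun s => ⟪gradient u (γ s), projVF H u (γ s)⟫
  set variation : ℝ → ℝ := fun s =>
    ⟪gradient u (γ s), ξ' s⟫ + ⟪(hamVF H 0 (gradLift u (γ s))).2, ξ s⟫
  have action_cont : Continuous action := by fun_prop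
  have variation_cont : Continuous variation := by fun_prop
  have dominated := h.weakKAM.sub_le_integral h.tonelli hab (fun s => (hγ s).fun_add (hξ s))
    (X_cont.add hξ') (g := fun s => action s + (variation s + 2 * K * r ^ 2) - maneCritical H)
    (by fun_prop) fun s hs => ?_
  · simp only [sub_add_cancel] at dominated
    rw [intervalIntegral.integral_add (action_cont.intervalIntegrable _ _)
      ((variation_cont.fun_add continuous_const).intervalIntegrable _ _),
      intervalIntegral.integral_add (variation_cont.intervalIntegrable _ _)
      intervalIntegrable_const, h.integral_inner_gradient_projVF hγ,
      intervalIntegral.integral_const, smul_eq_mul] at dominated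
    linarith
  · have quadratic := hK (γ s) (ξ s) (ξ' s) ((hξr s hs).trans hr) ((hξ'r s hs).trans hr)
    have : K * (‖ξ s‖ ^ 2 + ‖ξ' s‖ ^ 2) ≤ K * (r ^ 2 + r ^ 2) := by
      gcongr
      exacts [hξr s hs, hξ'r s hs]
    rw [inner_add_right] at quadratic
    linarith

-- The Euler–Lagrange equation: the first variation along constant vector fields vanishes.
lemma gradient_sub_gradient_eq_integral (h : IsC1WeakKAM H φ u) {γ : ℝ → Euc d}
    (hγ : ∀ s, HasDerivAt γ (projVF H u (γ s)) s) {a b : ℝ} (hab : a ≤ b) :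
    gradient u (γ b) - gradient u (γ a) = ∫ s in a..b, (hamVF H 0 (gradLift u (γ s))).2 := by
  obtain ⟨K, _, hK⟩ := h.exists_variation_le
  set F := ∫ s in a..b, (hamVF H 0 (gradLift u (γ s))).2
  have γ_cont : Continuous γ := continuous_iff_continuousAt.2 fun s => (hγ s).continuousAt
  have force_cont : Continuous fun s => (hamVF H 0 (gradLift u (γ s))).2 :=
    h.continuous_hamVF_gradLift.snd.comp γ_cont
  let Φ : Euc d → ℝ := fun v => ⟪F, v⟫ + (b - a) * (2 * K * ‖v‖ ^ 2) - (u (γ b + v) - u (γ a + v))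
  have min : IsLocalMin Φ 0 := by
    filter_upwards [closedBall_mem_nhds (0 : Euc d) one_pos] with v hv
    have variation := hK γ (fun _ => v) 0 a b ‖v‖ hab (by simpa using hv) hγ
      (fun s => hasDerivAt_const s v) continuous_const (fun _ _ => le_rfl) (by simp)
    have integral_eq : ∫ s in a..b, ⟪(hamVF H 0 (gradLift u (γ s))).2, v⟫ = ⟪F, v⟫ := by
      simpa only [innerSL_apply_apply, real_inner_comm v] using
        (innerSL ℝ v).intervalIntegral_comp_comm (force_cont.intervalIntegrable a b)
    simp only [Pi.zero_apply, inner_zero_right, zero_add, integral_eq] at variation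
    simp [Φ]
    linarith
  have du (q : Euc d) : HasFDerivAt (fun v => u (q + v)) (fderiv ℝ u q) 0 :=
    (hasFDerivAt_comp_add_left q).2 <| by
      simpa using (h.contDiff.differentiable one_ne_zero q).hasFDerivAt
  have hasFDerivAt_Φ : HasFDerivAt Φ _ 0 :=
    ((innerSL ℝ F).hasFDerivAt.add
      (((hasStrictFDerivAt_norm_sq (0 : Euc d)).hasFDerivAt.const_mul _).const_mul _)).sub
      ((du (γ b)).sub (du (γ a)))
  refine ext_inner_right ℝ fun v => ?_
  have := DFunLike.congr_fun (min.hasFDerivAt_eq_zero hasFDerivAt_Φ) v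
  simp only [map_zero, smul_zero, add_zero, sub_apply, coe_innerSL_apply, zero_apply,
    inner_sub_left, inner_gradient_left] at this ⊢
  linarith

lemma hasDerivAt_gradLift_of_hasDerivAt (h : IsC1WeakKAM H φ u) {γ : ℝ → Euc d}
    (hγ : ∀ s, HasDerivAt γ (projVF H u (γ s)) s) (s : ℝ) :
    HasDerivAt (fun s => gradLift u (γ s)) (hamVF H 0 (gradLift u (γ s))) s := by
  refine (hγ s).prodMk ?_
  have γ_cont : Continuous γ := continuous_iff_continuousAt.2 fun s => (hγ s).continuousAt
  have force_cont := h.continuous_hamVF_gradLift.snd.comp γ_cont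
  refine ((force_cont.integral_hasStrictDerivAt (s - 1) s).hasDerivAt.const_add
    (gradient u (γ (s - 1)))).congr_of_eventuallyEq ?_
  filter_upwards [eventually_ge_nhds (sub_one_lt s)] with t ht
  exact eq_add_of_sub_eq' (h.gradient_sub_gradient_eq_integral hγ ht)

theorem flow_gradLift (h : IsC1WeakKAM H φ u) (q : Euc d) (t : ℝ) :
    φ t (gradLift u q) = gradLift u (projFlow φ u t q) := by
  obtain ⟨V, hV⟩ := h.perFun_projVF.exists_norm_le h.continuous_projVF
  obtain ⟨γ, rfl, hγ⟩ := exists_hasDerivAt_eq_of_continuous (V := ⟨V, hV.1⟩)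
    h.continuous_projVF hV.2 q
  have flow_eq := eq_of_hasDerivAt_of_contDiff (contDiff_hamVF h.tonelli.smooth)
    (h.flow.2.2 (gradLift u (γ 0))) (h.hasDerivAt_gradLift_of_hasDerivAt hγ) (h.flow.1 _)
  rw [projFlow, congrFun flow_eq t]
  rfl

lemma hasDerivAt_gradLift_projFlow (h : IsC1WeakKAM H φ u) (q : Euc d) (t : ℝ) :
    HasDerivAt (fun s => gradLift u (projFlow φ u s q))
      (hamVF H 0 (gradLift u (projFlow φ u t q))) t := by
  simpa only [h.flow_gradLift] using h.flow.2.2 (gradLift u q) t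

lemma hasDerivAt_projFlow (h : IsC1WeakKAM H φ u) (q : Euc d) (t : ℝ) :
    HasDerivAt (fun s => projFlow φ u s q) (projVF H u (projFlow φ u t q)) t :=
  (h.hasDerivAt_gradLift_projFlow q t).fst

lemma projFlow_zero (h : IsC1WeakKAM H φ u) (q : Euc d) : projFlow φ u 0 q = q :=
  congrArg Prod.fst (h.flow.1 _)

lemma projFlow_projFlow (h : IsC1WeakKAM H φ u) (s t : ℝ) (q : Euc d) :
    projFlow φ u s (projFlow φ u t q) = projFlow φ u (s + t) q := by
  rw [projFlow, ← h.flow_gradLift, h.flow.2.1, projFlow]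

lemma exists_affine_variation_le (h : IsC1WeakKAM H φ u) :
    ∃ K ≥ 0, ∀ (q v : Euc d) (a b c e : ℝ), a ≤ b → ‖v‖ ≤ 1 → |c| ≤ 1 →
      (∀ s ∈ Icc a b, |c * s + e| ≤ 1) →
      u (projFlow φ u b q + (c * b + e) • v) - u (projFlow φ u a q + (c * a + e) • v) ≤
        u (projFlow φ u b q) - u (projFlow φ u a q) +
        (⟪gradient u (projFlow φ u b q), (c * b + e) • v⟫ -
          ⟪gradient u (projFlow φ u a q), (c * a + e) • v⟫) + (b - a) * (2 * K * ‖v‖ ^ 2) := by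
  obtain ⟨K, hK0, hK⟩ := h.exists_variation_le
  refine ⟨K, hK0, fun q v a b c e hab hv hc hce => ?_⟩
  have hξ (s : ℝ) : HasDerivAt (fun s => (c * s + e) • v) (c • v) s := by
    simpa using (((hasDerivAt_id' s).const_mul c).add_const e).smul_const v
  have hdu (s : ℝ) : HasDerivAt (fun s => gradient u (projFlow φ u s q))
      (hamVF H 0 (gradLift u (projFlow φ u s q))).2 s :=
    (h.hasDerivAt_gradLift_projFlow q s).snd
  have flow_cont : Continuous fun s => gradLift u (projFlow φ u s q) :=
    continuous_iff_continuousAt.2 fun s => (h.hasDerivAt_gradLift_projFlow q s).continuousAt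
  have du_cont : Continuous fun s => gradient u (projFlow φ u s q) := flow_cont.snd
  have force_cont : Continuous fun s => (hamVF H 0 (gradLift u (projFlow φ u s q))).2 :=
    h.continuous_hamVF_gradLift.snd.comp flow_cont.fst
  rw [← intervalIntegral.integral_eq_sub_of_hasDerivAt
    (f := fun s => ⟪gradient u (projFlow φ u s q), (c * s + e) • v⟫)
    (fun s _ => (hdu s).inner ℝ (hξ s))
    (Continuous.intervalIntegrable (by fun_prop) _ _)]
  refine hK _ (fun s => (c * s + e) • v) _ a b ‖v‖ hab hv (h.hasDerivAt_projFlow q) hξ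
    continuous_const (fun s hs => ?_) fun s _ => ?_ <;> rw [norm_smul] <;>
  refine mul_le_of_le_one_left (norm_nonneg v) ?_
  exacts [hce s hs, hc]

lemma exists_abs_sub_sub_inner_le (h : IsC1WeakKAM H φ u) :
    ∃ K ≥ 0, ∀ q v, ‖v‖ ≤ 1 → |u (q + v) - u q - ⟪gradient u q, v⟫| ≤ K * ‖v‖ ^ 2 := by
  obtain ⟨K, hK0, hK⟩ := h.exists_affine_variation_le
  refine ⟨2 * K, by positivity, fun q v hv => ?_⟩
  have arriving := hK q v (-1) 0 1 1 (by norm_num) hv (by norm_num) fun s hs => by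
    rw [abs_le]; constructor <;> linarith [hs.1, hs.2]
  have leaving := hK q v 0 1 (-1) 1 (by norm_num) hv (by norm_num) fun s hs => by
    rw [abs_le]; constructor <;> linarith [hs.1, hs.2]
  norm_num [h.projFlow_zero] at arriving leaving
  rw [abs_le, inner_gradient_left]
  constructor <;> linarith

theorem exists_lipschitzWith_gradient (h : IsC1WeakKAM H φ u) :
    ∃ K, LipschitzWith K (gradient u) := by
  obtain ⟨K, hK0, hK⟩ := h.exists_abs_sub_sub_inner_le
  obtain ⟨U, hU0, hU⟩ := h.weakKAM.2.1.exists_norm_le h.weakKAM.1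
  obtain ⟨P, hP⟩ := h.exists_norm_gradient_le
  have hP0 : 0 ≤ P := (norm_nonneg _).trans (hP 0)
  refine ⟨_, lipschitzWith_of_abs_sub_sub_inner_le (u := u)
    (K := (K + 2 * U + P).toNNReal) fun q v => ?_⟩
  rw [Real.coe_toNNReal _ (by positivity)]
  rcases le_total ‖v‖ 1 with hv | hv
  · refine (hK q v hv).trans (mul_le_mul_of_nonneg_right ?_ (sq_nonneg _))
    linarith
  · have hv_sq : ‖v‖ ≤ ‖v‖ ^ 2 := le_self_pow₀ hv two_ne_zero
    calc |u (q + v) - u q - ⟪gradient u q, v⟫|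
        ≤ |u (q + v)| + |u q| + |⟪gradient u q, v⟫| :=
          (abs_sub _ _).trans (add_le_add_left (abs_sub _ _) _)
      _ ≤ U + U + P * ‖v‖ := by
          gcongr
          · exact hU _
          · exact hU _
          · exact (abs_real_inner_le_norm _ _).trans (by gcongr; exact hP q)
      _ ≤ (K + 2 * U + P) * ‖v‖ ^ 2 := by nlinarith

end IsC1WeakKAM

/-! ### Regularity of the projected flow -/

lemma dist_le_of_hasDerivAt_of_lipschitzWith {E : Type*} [NormedAddCommGroup E] [NormedSpace ℝ E]
    {X : E → E} {K : NNReal} (hX : LipschitzWith K X) {f g : ℝ → E}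
    (hf : ∀ t, HasDerivAt f (X (f t)) t) (hg : ∀ t, HasDerivAt g (X (g t)) t) (t : ℝ) :
    dist (f t) (g t) ≤ Real.exp (K * |t|) * dist (f 0) (g 0) := by
  have forward {X : E → E} {f g : ℝ → E} (hX : LipschitzWith K X)
      (hf : ∀ t, HasDerivAt f (X (f t)) t) (hg : ∀ t, HasDerivAt g (X (g t)) t) {t : ℝ}
      (ht : 0 ≤ t) : dist (f t) (g t) ≤ Real.exp (K * t) * dist (f 0) (g 0) := by
    simpa [mul_comm] using dist_le_of_trajectories_ODE (v := fun _ => X) (a := 0) (b := t)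
      (fun _ => hX) (fun s _ => (hf s).continuousAt.continuousWithinAt)
      (fun s _ => (hf s).hasDerivWithinAt) (fun s _ => (hg s).continuousAt.continuousWithinAt)
      (fun s _ => (hg s).hasDerivWithinAt) le_rfl t ⟨ht, le_rfl⟩
  rcases le_total 0 t with ht | ht
  · simpa only [abs_of_nonneg ht] using forward hX hf hg ht
  · have reverse {f : ℝ → E} (hf : ∀ t, HasDerivAt f (X (f t)) t) (t : ℝ) :
        HasDerivAt (fun s => f (-s)) ((-X) (f (-t))) t := by
      simpa [Function.comp_def] using (hf (-t)).scomp t (hasDerivAt_neg' t)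
    simpa [abs_of_nonpos ht] using
      forward hX.neg (reverse hf) (reverse hg) (neg_nonneg.2 ht)

lemma norm_apply_le_of_hasFDerivAt_comp {E F G : Type*} [NormedAddCommGroup E] [NormedSpace ℝ E]
    [NormedAddCommGroup F] [NormedSpace ℝ F] [NormedAddCommGroup G] [NormedSpace ℝ G]
    {g : F → G} {f : E → F} {C : NNReal} (hg : LipschitzWith C g) {q : E} {f' : E →L[ℝ] F}
    {k' : E →L[ℝ] G} (hf : HasFDerivAt f f' q) (hk : HasFDerivAt (g ∘ f) k' q) (v : E) :
    ‖k' v‖ ≤ C * ‖f' v‖ := by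
  have slope_f := (hf.hasLineDerivAt v).tendsto_slope_zero.norm
  have slope_k := (hk.hasLineDerivAt v).tendsto_slope_zero.norm
  refine le_of_tendsto_of_tendsto slope_k (slope_f.const_mul _) (Eventually.of_forall fun t => ?_)
  have lip := hg.dist_le_mul (f (q + t • v)) (f q)
  rw [dist_eq_norm, dist_eq_norm] at lip
  simp only [norm_smul, Function.comp_apply]
  calc ‖t⁻¹‖ * ‖g (f (q + t • v)) - g (f q)‖
      ≤ ‖t⁻¹‖ * (C * ‖f (q + t • v) - f q‖) := by gcongr
    _ = C * (‖t⁻¹‖ * ‖f (q + t • v) - f q‖) := by ring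

section SecondDerivative

variable {E : Type*} [NormedAddCommGroup E] [InnerProductSpace ℝ E] [CompleteSpace E] {u : E → ℝ}
  {q : E} {A : E →L[ℝ] E}

lemma inner_apply_comm_of_hasFDerivAt_gradient (hu : Differentiable ℝ u)
    (hA : HasFDerivAt (gradient u) A q) (v w : E) : ⟪A v, w⟫ = ⟪v, A w⟫ := by
  have second := (InnerProductSpace.toDual ℝ E).toContinuousLinearEquiv.hasFDerivAt.comp q hA
  have symmetric := second_derivative_symmetric (fun y => (hu y).hasGradientAt.hasFDerivAt) second
    v w
  simpa [real_inner_comm] using symmetric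

lemma isLittleO_taylor_two_of_hasFDerivAt_gradient (hu : Differentiable ℝ u)
    (hA : HasFDerivAt (gradient u) A q) :
    (fun y => u y - u q - ⟪gradient u q, y - q⟫ - (1 / 2) * ⟪A (y - q), y - q⟫)
      =o[nhds q] fun y => ‖y - q‖ ^ 2 := by
  set remainder : E → ℝ := fun y =>
    u y - u q - ⟪gradient u q, y - q⟫ - (1 / 2) * ⟪A (y - q), y - q⟫ with remainder_def
  have hasFDerivAt_remainder (x : E) :
      HasFDerivAt remainder (innerSL ℝ (gradient u x - gradient u q - A (x - q))) x := by
    have linear := (hasFDerivAt_const (gradient u q) x).inner ℝ ((hasFDerivAt_id x).sub_const q)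
    have quadratic := ((A.hasFDerivAt.comp x ((hasFDerivAt_id x).sub_const q)).inner ℝ
      ((hasFDerivAt_id x).sub_const q)).const_mul (1 / 2)
    refine ((((hu x).hasFDerivAt.sub_const (u q)).sub linear).sub quadratic).congr_fderiv ?_
    ext v
    simp only [id_eq, Function.comp_apply, map_sub, ContinuousLinearMap.comp_id, sub_apply,
      ContinuousLinearMap.comp_apply, ContinuousLinearMap.prod_apply, zero_apply,
      ContinuousLinearMap.id_apply, fderivInnerCLM_apply, inner_gradient_left, inner_zero_left,
      add_zero, smul_apply, inner_apply_comm_of_hasFDerivAt_gradient hu hA v, smul_eq_mul,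
      coe_innerSL_apply]
    simp only [inner_sub_right, real_inner_comm v]
    ring
  refine isLittleO_iff.2 fun c hc => ?_
  obtain ⟨r, hr, hball⟩ := Metric.eventually_nhds_iff_ball.1 (isLittleO_iff.1 hA.isLittleO hc)
  filter_upwards [ball_mem_nhds q hr] with y hy
  have mean_value := (convex_closedBall q ‖y - q‖).norm_image_sub_le_of_norm_hasFDerivWithin_le
    (C := c * ‖y - q‖) (fun x _ => (hasFDerivAt_remainder x).hasFDerivWithinAt)
    (fun x hx => ?_) (mem_closedBall_self (norm_nonneg _)) (mem_closedBall_iff_norm.2 le_rfl)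
  · simpa [remainder_def, sq, mul_assoc] using mean_value
  · rw [mem_closedBall_iff_norm] at hx
    rw [innerSL_apply_norm]
    exact (hball x (mem_ball_iff_norm.2 (hx.trans_lt (mem_ball_iff_norm.1 hy)))).trans
      (by gcongr)

end SecondDerivative

namespace IsC1WeakKAM

variable {d : ℕ} {H : Phase d → ℝ} {φ : ℝ → Phase d → Phase d} {u : Euc d → ℝ}

lemma differentiable (h : IsC1WeakKAM H φ u) : Differentiable ℝ u :=
  h.contDiff.differentiable one_ne_zero

lemma hasAlexandrovAt (h : IsC1WeakKAM H φ u) {q : Euc d} {A : Euc d →L[ℝ] Euc d}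
    (hA : HasFDerivAt (gradient u) A q) : HasAlexandrovAt u (gradient u q) A q :=
  ⟨(h.differentiable q).hasGradientAt,
    isLittleO_taylor_two_of_hasFDerivAt_gradient h.differentiable hA⟩

lemma ae_differentiableAt_gradient (h : IsC1WeakKAM H φ u) :
    ∀ᵐ q, DifferentiableAt ℝ (gradient u) q := by
  obtain ⟨K, hK⟩ := h.exists_lipschitzWith_gradient
  exact hK.ae_differentiableAt

lemma exists_lipschitzWith_projVF (h : IsC1WeakKAM H φ u) : ∃ K, LipschitzWith K (projVF H u) := by
  obtain ⟨K, hK⟩ := h.exists_lipschitzWith_gradient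
  obtain ⟨P, hP⟩ := h.exists_norm_gradient_le
  have smooth := contDiff_hamVF h.tonelli.smooth
  obtain ⟨C, _, hC⟩ := h.tonelli.periodic.hamVF.fderiv.exists_norm_le
    (smooth.continuous_fderiv one_ne_zero) P
  have lip_hamVF : LipschitzOnWith C.toNNReal (hamVF H 0) (univ ×ˢ closedBall 0 P) :=
    (convex_univ.prod (convex_closedBall 0 P)).lipschitzOnWith_of_nnnorm_fderiv_le
      (fun x _ => smooth.differentiable one_ne_zero x) fun x hx =>
        NNReal.le_toNNReal_of_coe_le (hC x.1 x.2 (mem_closedBall_zero_iff.1 hx.2))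
  have lip_gradLift : LipschitzWith (max 1 K) (gradLift u) := LipschitzWith.id.prodMk hK
  have lip := lip_hamVF.comp lip_gradLift.lipschitzOnWith (s := univ)
    fun q _ => ⟨trivial, mem_closedBall_zero_iff.2 (hP q)⟩
  exact ⟨_, LipschitzWith.prod_fst.comp (lipschitzOnWith_univ.1 lip)⟩

lemma exists_lipschitzWith_projFlow (h : IsC1WeakKAM H φ u) :
    ∃ K : NNReal, ∀ t, LipschitzWith (Real.exp (K * |t|)).toNNReal (projFlow φ u t) := by
  obtain ⟨K, hK⟩ := h.exists_lipschitzWith_projVF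
  refine ⟨K, fun t => LipschitzWith.of_dist_le_mul fun x y => ?_⟩
  rw [Real.coe_toNNReal _ (Real.exp_nonneg _)]
  simpa only [h.projFlow_zero] using dist_le_of_hasDerivAt_of_lipschitzWith hK
    (h.hasDerivAt_projFlow x) (h.hasDerivAt_projFlow y) t

lemma continuous_projFlow (h : IsC1WeakKAM H φ u) (t : ℝ) : Continuous (projFlow φ u t) := by
  obtain ⟨K, hK⟩ := h.exists_lipschitzWith_projFlow
  exact (hK t).continuous

lemma projFlow_eq_self (h : IsC1WeakKAM H φ u) {q : Euc d} (hq : projVF H u q = 0) (t : ℝ) :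
    projFlow φ u t q = q := by
  obtain ⟨K, hK⟩ := h.exists_lipschitzWith_projVF
  have := dist_le_of_hasDerivAt_of_lipschitzWith hK (h.hasDerivAt_projFlow q)
    (fun t => hq.symm ▸ hasDerivAt_const t q) t
  simpa [h.projFlow_zero] using this

lemma projFlow_add_intVec (h : IsC1WeakKAM H φ u) (t : ℝ) (q : Euc d) (k : Fin d → ℤ) :
    projFlow φ u t (q + intVec k) = projFlow φ u t q + intVec k := by
  obtain ⟨K, hK⟩ := h.exists_lipschitzWith_projVF
  have := dist_le_of_hasDerivAt_of_lipschitzWith hK (h.hasDerivAt_projFlow (q + intVec k))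
    (fun t => (h.perFun_projVF k _).symm ▸ (h.hasDerivAt_projFlow q t).add_const (intVec k)) t
  simpa [h.projFlow_zero] using this

lemma leftInverse_projFlow (h : IsC1WeakKAM H φ u) (t : ℝ) :
    Function.LeftInverse (projFlow φ u (-t)) (projFlow φ u t) := fun q => by
  rw [h.projFlow_projFlow, neg_add_cancel, h.projFlow_zero]

lemma projFlow_neg_natCast (h : IsC1WeakKAM H φ u) (n : ℕ) :
    projFlow φ u (-n) = (projFlow φ u (-1))^[n] := by
  induction n with
  | zero => ext1 q; simp [h.projFlow_zero]
  | succ n ih =>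
    ext1 q
    rw [Function.iterate_succ_apply', ← ih, h.projFlow_projFlow]
    push_cast
    ring_nf

end IsC1WeakKAM

/-! ### Linear algebra of the Green limit -/

section QuadraticForms

variable {E : Type*} [NormedAddCommGroup E] [InnerProductSpace ℝ E]

lemma isInvertible_of_forall_apply_eq_zero [FiniteDimensional ℝ E] {Q : E →L[ℝ] E}
    (hQ : ∀ v, Q v = 0 → v = 0) : Q.IsInvertible :=
  ⟨(LinearEquiv.ofInjectiveEndo (Q : E →ₗ[ℝ] E)
    ((injective_iff_map_eq_zero _).2 hQ)).toContinuousLinearEquiv, rfl⟩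

lemma norm_inverse_le_of_le_inner {N : E →L[ℝ] E} {b : ℝ} (hb : 0 < b)
    (hN : ∀ w, b * ‖w‖ ^ 2 ≤ ⟪N w, w⟫) : ‖N.inverse‖ ≤ b⁻¹ := by
  by_cases inv : N.IsInvertible
  · refine ContinuousLinearMap.opNorm_le_bound _ (inv_pos.2 hb).le fun v => ?_
    have coercive := (hN (N.inverse v)).trans (real_inner_le_norm _ _)
    rw [inv.self_apply_inverse, sq, ← mul_assoc] at coercive
    rcases (norm_nonneg (N.inverse v)).eq_or_lt with h0 | h0
    · rw [← h0]
      positivity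
    · rw [inv_mul_eq_div, le_div_iff₀' hb]
      exact le_of_mul_le_mul_right coercive h0
  · rw [ContinuousLinearMap.inverse_of_not_isInvertible inv, norm_zero]
    exact (inv_pos.2 hb).le

lemma eventually_le_inner_of_tendsto_atTop [FiniteDimensional ℝ E] {N : ℝ → E →L[ℝ] E}
    (hmono : ∀ w, Monotone fun t => ⟪N t w, w⟫)
    (htop : ∀ w ≠ 0, Tendsto (fun t => ⟪N t w, w⟫) atTop atTop) (b : ℝ) :
    ∀ᶠ t in atTop, ∀ w, b * ‖w‖ ^ 2 ≤ ⟪N t w, w⟫ := by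
  obtain ⟨T, hT⟩ := (isCompact_sphere (0 : E) 1).elim_directed_cover (fun t => {w | b < ⟪N t w, w⟫})
    (fun t => isOpen_lt continuous_const (by fun_prop))
    (fun w hw => mem_iUnion.2
      ((htop w (ne_zero_of_mem_unit_sphere ⟨w, hw⟩)).eventually_gt_atTop b).exists)
    (Monotone.directed_le fun s t hst w hw => lt_of_lt_of_le hw (hmono w hst))
  filter_upwards [eventually_ge_atTop T] with t ht w
  rcases eq_or_ne w 0 with rfl | hw
  · simp
  have unit_le : b ≤ ⟪N t (‖w‖⁻¹ • w), ‖w‖⁻¹ • w⟫ :=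
    (hT (mem_sphere_zero_iff_norm.2 (norm_smul_inv_norm (𝕜 := ℝ) hw))).le.trans (hmono _ ht)
  calc b * ‖w‖ ^ 2 ≤ ⟪N t (‖w‖⁻¹ • w), ‖w‖⁻¹ • w⟫ * ‖w‖ ^ 2 := by gcongr
    _ = ⟪N t w, w⟫ := by
      rw [map_smul, real_inner_smul_left, real_inner_smul_right]
      field_simp

lemma tendsto_inverse_zero_of_tendsto_atTop [FiniteDimensional ℝ E] {N : ℝ → E →L[ℝ] E}
    (hmono : ∀ w, Monotone fun t => ⟪N t w, w⟫)
    (htop : ∀ w ≠ 0, Tendsto (fun t => ⟪N t w, w⟫) atTop atTop) :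
    Tendsto (fun t => (N t).inverse) atTop (nhds 0) := by
  refine NormedAddGroup.tendsto_nhds_zero.2 fun ε hε => ?_
  filter_upwards [eventually_le_inner_of_tendsto_atTop hmono htop (2 / ε)] with t ht
  calc ‖(N t).inverse‖ ≤ (2 / ε)⁻¹ := norm_inverse_le_of_le_inner (by positivity) ht
    _ < ε := by rw [inv_div]; exact half_lt_self hε

end QuadraticForms

lemma tendsto_atTop_of_sq_le_deriv {f g : ℝ → ℝ} {m C : ℝ} (hm : 0 < m) (hf : Differentiable ℝ f)
    (hderiv : ∀ t, m * g t ^ 2 ≤ deriv f t) (hg : ∀ t, 0 ≤ g t)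
    (hgC : ∀ t, ∀ r ∈ Icc (0 : ℝ) 1, g t ≤ C * g (t + r))
    (hlim : ¬ Tendsto (fun n : ℕ => g n) atTop (nhds 0)) : Tendsto f atTop atTop := by
  have mono : Monotone f := monotone_of_deriv_nonneg hf fun t =>
    (mul_nonneg hm.le (sq_nonneg _)).trans (hderiv t)
  refine (tendsto_atTop_of_monotone mono).resolve_right fun ⟨l, hl⟩ => hlim ?_
  have increment_tendsto : Tendsto (fun n : ℕ => f (n + 1) - f n) atTop (nhds 0) := by
    have hl' := hl.comp tendsto_natCast_atTop_atTop
    simpa [Function.comp_def] using (hl'.comp (tendsto_add_atTop_nat 1)).sub hl'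
  have le_increment (n : ℕ) : g n ^ 2 ≤ C ^ 2 / m * (f (n + 1) - f n) := by
    obtain ⟨s, hs, slope⟩ := exists_deriv_eq_slope f (lt_add_one (n : ℝ))
      hf.continuous.continuousOn hf.differentiableOn
    have h₁ := hgC n (s - n) ⟨by linarith [hs.1], by linarith [hs.2]⟩
    rw [add_sub_cancel] at h₁
    have h₂ := hderiv s
    rw [slope, add_sub_cancel_left, div_one] at h₂
    calc g n ^ 2 ≤ (C * g s) ^ 2 := pow_le_pow_left₀ (hg n) h₁ 2
      _ = C ^ 2 / m * (m * g s ^ 2) := by field_simp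
      _ ≤ C ^ 2 / m * (f (n + 1) - f n) := by gcongr
  have sq_tendsto := squeeze_zero (fun n : ℕ => sq_nonneg (g n)) le_increment
    (by simpa using increment_tendsto.const_mul (C ^ 2 / m))
  simpa [Real.sqrt_sq (hg _)] using sq_tendsto.sqrt

/-! ### The linearized flow along a Lagrangian graph -/

/-- `R` is the resolvent of the Hamiltonian equations of `H` linearized along the curve `γ`. -/
structure IsLinearizedFlow {d : ℕ} (H : Phase d → ℝ) (γ : ℝ → Phase d)
    (R : ℝ → Phase d →L[ℝ] Phase d) : Prop where
  map_zero : R 0 = 1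
  hasDerivAt : ∀ t, HasDerivAt R (fderiv ℝ (hamVF H 0) (γ t) * R t) t

/-- The linear map induced on the base by a linear map `R` of the phase space restricted to the
graph of `A`. With `R = Dφ_s` and `A = D²u` it is the derivative of the projected flow. -/
def baseMap {d : ℕ} (A : Euc d →L[ℝ] Euc d) (R : Phase d →L[ℝ] Phase d) : Euc d →L[ℝ] Euc d :=
  .fst ℝ (Euc d) (Euc d) ∘L R ∘L (ContinuousLinearMap.id ℝ (Euc d)).prod A

/-- The operator `c` for which `R⁻¹ V = {(-c w, w - A (c w))}`: up to sign, the slope over the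
vertical `V` of its preimage under `R`, in the splitting `graph A ⊕ V` of the phase space. -/
def verticalSlope {d : ℕ} (A : Euc d →L[ℝ] Euc d) (R : Phase d →L[ℝ] Phase d) :
    Euc d →L[ℝ] Euc d :=
  (baseMap A R).inverse ∘L .fst ℝ (Euc d) (Euc d) ∘L R ∘L .inr ℝ (Euc d) (Euc d)

section Linearized

variable {d : ℕ} {H : Phase d → ℝ} {γ : ℝ → Phase d} {R : ℝ → Phase d →L[ℝ] Phase d}
  {A : Euc d →L[ℝ] Euc d}

lemma IsConformalFlow.exists_isLinearizedFlow {φ : ℝ → Phase d → Phase d}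
    (hφ : IsConformalFlow H 0 φ) (hH : ContDiff ℝ 2 H) (x : Phase d) :
    ∃ R, IsLinearizedFlow H (fun t => φ t x) R ∧ ∀ t, HasFDerivAt (φ t) (R t) x := by
  obtain ⟨R, hR₀, hR, hRφ⟩ := exists_hasStrictFDerivAt_flow (contDiff_hamVF hH) hφ.1 hφ.2.2 x
  exact ⟨R, ⟨hR₀, hR⟩, fun t => (hRφ t).hasFDerivAt⟩

lemma mem_GreenT_iff {φ : ℝ → Phase d → Phase d} (hφ : IsConformalFlow H 0 φ)
    (hH : ContDiff ℝ 2 H) {x : Phase d} {t : ℝ} {L : Phase d →L[ℝ] Phase d}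
    (hL : HasFDerivAt (φ (-t)) L x) {z : Phase d} : z ∈ GreenT φ t x ↔ (L z).1 = 0 := by
  obtain ⟨R, -, hR⟩ := hφ.exists_isLinearizedFlow hH (φ (-t) x)
  have right_inv : R t ∘L L = .id ℝ (Phase d) := ((hR t).comp x hL).unique <|
    (hasFDerivAt_id x).congr_of_eventuallyEq <| .of_forall fun y => by simp [hφ.2.1, hφ.1]
  have left_inv : L ∘L R t = .id ℝ (Phase d) := by
    have hL' : HasFDerivAt (φ (-t)) L (φ t (φ (-t) x)) := by simpa [hφ.2.1, hφ.1] using hL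
    exact (hL'.comp (φ (-t) x) (hR t)).unique <|
      (hasFDerivAt_id _).congr_of_eventuallyEq <| .of_forall fun y => by simp [hφ.2.1, hφ.1]
  simp only [GreenT, pushV, (hR t).fderiv, Submodule.mem_map, Vert, Submodule.mem_prod,
    Submodule.mem_bot, Submodule.mem_top, and_true, ContinuousLinearMap.coe_coe]
  constructor
  · rintro ⟨y, hy, rfl⟩
    rwa [← ContinuousLinearMap.comp_apply, left_inv]
  · exact fun hz => ⟨L z, hz, congrArg (· z) right_inv⟩

lemma fst_apply_eq_zero_iff {L : Phase d →L[ℝ] Phase d} (hL : (baseMap A L).IsInvertible)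
    {z : Phase d} : (L z).1 = 0 ↔ z.1 = -verticalSlope A L (z.2 - A z.1) := by
  have split : (L z).1 = baseMap A L (z.1 + verticalSlope A L (z.2 - A z.1)) := by
    simp only [verticalSlope, map_add, ContinuousLinearMap.comp_apply, hL.self_apply_inverse]
    simp only [baseMap, ContinuousLinearMap.comp_apply, ContinuousLinearMap.coe_fst',
      ContinuousLinearMap.inr_apply, ContinuousLinearMap.prod_apply,
      ContinuousLinearMap.id_apply, ← Prod.fst_add, ← map_add]
    simp
  rw [split, map_eq_zero_iff _ hL.injective, eq_neg_iff_add_eq_zero]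

namespace IsLinearizedFlow

lemma symplecticForm_apply_apply (hR : IsLinearizedFlow H γ R) (hH : ContDiff ℝ 2 H)
    (a b : Phase d) (t : ℝ) : symplecticForm (R t a) (R t b) = symplecticForm a b := by
  have deriv_apply (a : Phase d) (t : ℝ) :
      HasDerivAt (fun t => R t a) (fderiv ℝ (hamVF H 0) (γ t) (R t a)) t := by
    simpa using (hR.hasDerivAt t).clm_apply (hasDerivAt_const t a)
  have deriv_zero (t : ℝ) : HasDerivAt (fun t => symplecticForm (R t a) (R t b)) 0 t := by
    refine ((symplecticForm.hasFDerivAt.comp_hasDerivAt t (deriv_apply a t)).clm_apply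
      (deriv_apply b t)).congr_deriv ?_
    rw [symplecticForm_fderiv_hamVF_comm hH, symplecticForm_swap, Function.comp_apply,
      neg_add_cancel]
  rw [is_const_of_deriv_eq_zero (fun t => (deriv_zero t).differentiableAt)
    (fun t => (deriv_zero t).deriv) t 0, hR.map_zero]
  rfl

lemma verticalSlope_zero (hR : IsLinearizedFlow H γ R) : verticalSlope A (R 0) = 0 := by
  ext1 w
  simp [verticalSlope, hR.map_zero]

lemma apply_verticalSlope (hR : IsLinearizedFlow H γ R) (hH : ContDiff ℝ 2 H)
    (hA : ∀ v w, ⟪A v, w⟫ = ⟪v, A w⟫) {s : ℝ} (hs : (baseMap A (R s)).IsInvertible) (w : Euc d) :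
    R s (-verticalSlope A (R s) w, w - A (verticalSlope A (R s) w)) =
      (0, (baseMap A (R s)).inverse.adjoint w) := by
  set ξ : Phase d := (-verticalSlope A (R s) w, w - A (verticalSlope A (R s) w))
  have fst_eq : (R s ξ).1 = 0 := (fst_apply_eq_zero_iff hs).2 (by simp [ξ])
  refine Prod.ext fst_eq (ext_inner_right ℝ fun x => ?_)
  obtain ⟨v, rfl⟩ := hs.surjective x
  have symplectic := hR.symplecticForm_apply_apply hH ξ (v, A v) s
  simp only [symplecticForm_apply, fst_eq, inner_zero_left, zero_sub, ξ, inner_neg_left,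
    inner_sub_left, hA] at symplectic
  rw [ContinuousLinearMap.adjoint_inner_left, hs.inverse_apply_self]
  change ⟪_, (R s (v, A v)).1⟫ = _
  linarith

lemma inner_verticalSlope_comm (hR : IsLinearizedFlow H γ R) (hH : ContDiff ℝ 2 H)
    (hA : ∀ v w, ⟪A v, w⟫ = ⟪v, A w⟫) {s : ℝ} (hs : (baseMap A (R s)).IsInvertible) (v w : Euc d) :
    ⟪verticalSlope A (R s) v, w⟫ = ⟪v, verticalSlope A (R s) w⟫ := by
  have symplectic := hR.symplecticForm_apply_apply hH
    (-verticalSlope A (R s) v, v - A (verticalSlope A (R s) v))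
    (-verticalSlope A (R s) w, w - A (verticalSlope A (R s) w)) s
  rw [hR.apply_verticalSlope hH hA hs, hR.apply_verticalSlope hH hA hs] at symplectic
  simp only [symplecticForm_apply, inner_zero_left, inner_zero_right, inner_neg_left,
    inner_neg_right, inner_sub_left, inner_sub_right, hA] at symplectic
  linarith

lemma hasDerivAt_inner_verticalSlope (hR : IsLinearizedFlow H γ R) (hH : ContDiff ℝ 2 H)
    (hA : ∀ v w, ⟪A v, w⟫ = ⟪v, A w⟫) (hinv : ∀ s, (baseMap A (R s)).IsInvertible)
    (s : ℝ) (w : Euc d) :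
    HasDerivAt (fun s => ⟪verticalSlope A (R s) w, w⟫)
      (fderiv ℝ (fderiv ℝ H) (γ s) (0, (baseMap A (R s)).inverse.adjoint w)
        (0, (baseMap A (R s)).inverse.adjoint w)) s := by
  set y := (baseMap A (R s)).inverse.adjoint w
  set c : ℝ → Euc d := fun s => verticalSlope A (R s) w
  have baseMap_diff : DifferentiableAt ℝ (fun s => baseMap A (R s)) s :=
    (differentiableAt_const _).clm_comp
      ((hR.hasDerivAt s).differentiableAt.clm_comp (differentiableAt_const _))
  have inverse_diff : DifferentiableAt ℝ (fun s => (baseMap A (R s)).inverse) s :=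
    DifferentiableAt.comp (g := ContinuousLinearMap.inverse) s
      (((hinv s).contDiffAt_map_inverse (n := 1)).differentiableAt one_ne_zero) baseMap_diff
  have c_diff : DifferentiableAt ℝ c s := inverse_diff.clm_apply
    ((hR.hasDerivAt s).differentiableAt.clm_apply (differentiableAt_const ((0, w) : Phase d))).fst
  have ξ_deriv : HasDerivAt (fun s => (-c s, w - A (c s))) (-deriv c s, -A (deriv c s)) s :=
    c_diff.hasDerivAt.neg.prodMk ((A.hasFDerivAt.comp_hasDerivAt s c_diff.hasDerivAt).const_sub w)
  have fst_deriv : HasDerivAt (fun s => (R s (-c s, w - A (c s))).1)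
      (fderiv ℝ (hamVF H 0) (γ s) (R s (-c s, w - A (c s))) +
        R s (-deriv c s, -A (deriv c s))).1 s :=
    ((hR.hasDerivAt s).clm_apply ξ_deriv).fst
  simp only [c, hR.apply_verticalSlope hH hA (hinv _)] at fst_deriv
  have base_deriv : baseMap A (R s) (deriv c s) = (fderiv ℝ (hamVF H 0) (γ s) (0, y)).1 := by
    have balance := fst_deriv.unique (hasDerivAt_const s (0 : Euc d))
    rw [← Prod.neg_mk, map_neg, ← sub_eq_add_neg, Prod.fst_sub, sub_eq_zero] at balance
    exact balance.symm
  refine (c_diff.hasDerivAt.inner ℝ (hasDerivAt_const s w)).congr_deriv ?_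
  rw [inner_zero_right, zero_add, fderiv_fderiv_eq_symplecticForm hH, symplecticForm_apply,
    inner_zero_right, sub_zero, ← base_deriv, ContinuousLinearMap.adjoint_inner_right,
    (hinv s).inverse_apply_self]

end IsLinearizedFlow

end Linearized

lemma heightOf_eq {d : ℕ} {G : Submodule ℝ (Phase d)} {S : Euc d →L[ℝ] Euc d} (hS : IsHeight G S) :
    heightOf G = S := by
  have exists_height : ∃ S, IsHeight G S := ⟨S, hS⟩
  rw [heightOf, dif_pos exists_height]
  have graph_eq := exists_height.choose_spec.2.symm.trans hS.2
  ext1 v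
  have mem : (v, S v) ∈ LinearMap.graph (S : Euc d →ₗ[ℝ] Euc d) := rfl
  rw [← graph_eq, LinearMap.mem_graph_iff] at mem
  exact mem.symm

lemma isHeight_add_inverse {d : ℕ} {G : Submodule ℝ (Phase d)} {A N : Euc d →L[ℝ] Euc d}
    (hN : N.IsInvertible) (hA : ∀ v w, ⟪A v, w⟫ = ⟪v, A w⟫) (hN' : ∀ v w, ⟪N v, w⟫ = ⟪v, N w⟫)
    (hG : ∀ z, z ∈ G ↔ z.1 = N (z.2 - A z.1)) : IsHeight G (A + N.inverse) := by
  constructor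
  · intro v w
    obtain ⟨v, rfl⟩ := hN.surjective v
    obtain ⟨w, rfl⟩ := hN.surjective w
    simp only [add_apply, inner_add_left, inner_add_right, hA, hN.inverse_apply_self, hN' v w]
  · ext z
    rw [hG, LinearMap.mem_graph_iff]
    change z.1 = N (z.2 - A z.1) ↔ z.2 = A z.1 + N.inverse z.1
    rw [← hN.inverse_apply_eq, eq_comm, sub_eq_iff_eq_add']

lemma norm_adjoint_inverse_apply_le {E : Type*} [NormedAddCommGroup E] [InnerProductSpace ℝ E]
    [CompleteSpace E] {P Q : E →L[ℝ] E} (hP : P.IsInvertible) (hQ : Q.IsInvertible) {C : ℝ}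
    (hC : 0 ≤ C) (hPQ : ∀ v, ‖P v‖ ≤ C * ‖Q v‖) (w : E) :
    ‖Q.inverse.adjoint w‖ ≤ C * ‖P.inverse.adjoint w‖ := by
  set y := Q.inverse.adjoint w with hy
  obtain ⟨v, hv⟩ := hQ.surjective y
  have inner_eq : ⟪y, y⟫ = ⟪P.inverse.adjoint w, P v⟫ := by
    nth_rw 2 [← hv]
    rw [hy, ContinuousLinearMap.adjoint_inner_left, ContinuousLinearMap.adjoint_inner_left,
      hP.inverse_apply_self, hQ.inverse_apply_self]
  have sq_le : ‖y‖ * ‖y‖ ≤ C * ‖P.inverse.adjoint w‖ * ‖y‖ := by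
    calc ‖y‖ * ‖y‖ = ⟪P.inverse.adjoint w, P v⟫ := by
          rw [← inner_eq, real_inner_self_eq_norm_mul_norm]
      _ ≤ ‖P.inverse.adjoint w‖ * ‖P v‖ := real_inner_le_norm _ _
      _ ≤ ‖P.inverse.adjoint w‖ * (C * ‖Q v‖) := by gcongr; exact hPQ v
      _ = C * ‖P.inverse.adjoint w‖ * ‖y‖ := by rw [hv]; ring
  rcases (norm_nonneg y).eq_or_lt with h0 | h0
  · rw [← h0]
    positivity
  · exact le_of_mul_le_mul_right sq_le h0

/-- The transport `w ↦ (Dψ_t(q)*)⁻¹ w` of covectors by the projected flow `ψ = projFlow φ u`. -/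
def covectorTransport {d : ℕ} (φ : ℝ → Phase d → Phase d) (u : Euc d → ℝ) (t : ℝ) (q : Euc d) :
    Euc d →L[ℝ] Euc d :=
  (fderiv ℝ (projFlow φ u t) q).inverse.adjoint

namespace IsC1WeakKAM

variable {d : ℕ} {H : Phase d → ℝ} {φ : ℝ → Phase d → Phase d} {u : Euc d → ℝ} {q : Euc d}
  {A : Euc d →L[ℝ] Euc d}

lemma differentiableAt_projFlow (h : IsC1WeakKAM H φ u) (hq : DifferentiableAt ℝ (gradient u) q)
    (t : ℝ) : DifferentiableAt ℝ (projFlow φ u t) q := by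
  obtain ⟨R, -, hR⟩ := h.flow.exists_isLinearizedFlow h.tonelli.smooth (gradLift u q)
  exact ((hR t).comp q ((hasFDerivAt_id q).prodMk hq.hasFDerivAt)).differentiableAt.fst

lemma norm_fderiv_projFlow_apply_le (h : IsC1WeakKAM H φ u)
    (hq : DifferentiableAt ℝ (gradient u) q) {s : ℝ} {C : NNReal}
    (hC : LipschitzWith C (projFlow φ u s)) (t : ℝ) (v : Euc d) :
    ‖fderiv ℝ (projFlow φ u (s + t)) q v‖ ≤ C * ‖fderiv ℝ (projFlow φ u t) q v‖ := by
  refine norm_apply_le_of_hasFDerivAt_comp hC (h.differentiableAt_projFlow hq t).hasFDerivAt ?_ v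
  rw [show projFlow φ u s ∘ projFlow φ u t = projFlow φ u (s + t) from
    funext (h.projFlow_projFlow s t)]
  exact (h.differentiableAt_projFlow hq (s + t)).hasFDerivAt

lemma isInvertible_fderiv_projFlow (h : IsC1WeakKAM H φ u)
    (hq : DifferentiableAt ℝ (gradient u) q) (t : ℝ) :
    (fderiv ℝ (projFlow φ u t) q).IsInvertible := by
  obtain ⟨K, hK⟩ := h.exists_lipschitzWith_projFlow
  refine isInvertible_of_forall_apply_eq_zero fun v hv => ?_
  have := h.norm_fderiv_projFlow_apply_le hq (hK (-t)) t v
  rwa [hv, norm_zero, mul_zero, neg_add_cancel, funext h.projFlow_zero, fderiv_fun_id,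
    norm_le_zero_iff] at this

lemma inner_covectorTransport_fderiv_projFlow (h : IsC1WeakKAM H φ u)
    (hq : DifferentiableAt ℝ (gradient u) q) (t : ℝ) (w v : Euc d) :
    ⟪covectorTransport φ u t q w, fderiv ℝ (projFlow φ u t) q v⟫ = ⟪w, v⟫ := by
  rw [covectorTransport, ContinuousLinearMap.adjoint_inner_left,
    (h.isInvertible_fderiv_projFlow hq t).inverse_apply_self]

lemma covectorTransport_ne_zero (h : IsC1WeakKAM H φ u)
    (hq : DifferentiableAt ℝ (gradient u) q) (t : ℝ) {w : Euc d} (hw : w ≠ 0) :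
    covectorTransport φ u t q w ≠ 0 := fun h0 => hw <| by
  simpa [h0] using (h.inner_covectorTransport_fderiv_projFlow hq t w w).symm

lemma exists_norm_covectorTransport_le (h : IsC1WeakKAM H φ u)
    (hq : DifferentiableAt ℝ (gradient u) q) : ∃ C, ∀ t, ∀ r ∈ Icc (0 : ℝ) 1, ∀ w,
      ‖covectorTransport φ u (-t) q w‖ ≤ C * ‖covectorTransport φ u (-(t + r)) q w‖ := by
  obtain ⟨K, hK⟩ := h.exists_lipschitzWith_projFlow
  have inv := h.isInvertible_fderiv_projFlow hq
  refine ⟨Real.exp K, fun t r hr w => norm_adjoint_inverse_apply_le (inv _) (inv _)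
    (Real.exp_nonneg _) (fun v => ?_) w⟩
  have lip := h.norm_fderiv_projFlow_apply_le hq (hK (-r)) (-t) v
  rw [Real.coe_toNNReal _ (Real.exp_nonneg _), abs_neg, abs_of_nonneg hr.1, ← neg_add_rev] at lip
  refine lip.trans ?_
  gcongr
  exact mul_le_of_le_one_right K.2 hr.2

lemma exists_fderiv_fderiv_projFlow_ge (h : IsC1WeakKAM H φ u) (q : Euc d) :
    ∃ m > 0, ∀ t w,
      m * ‖w‖ ^ 2 ≤ fderiv ℝ (fderiv ℝ H) (φ t (gradLift u q)) (0, w) (0, w) := by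
  obtain ⟨P, hP⟩ := h.exists_norm_gradient_le
  obtain ⟨m, hm, hmH⟩ := h.tonelli.exists_fderiv_fderiv_fiber_ge P
  refine ⟨m, hm, fun t w => ?_⟩
  rw [h.flow_gradLift]
  exact hmH _ _ w (hP _)

-- `N t = -c (-t)`, where `(-c w, w - A (c w))` spans the preimage of the vertical.
lemma exists_isHeight_GreenT_add_inverse (h : IsC1WeakKAM H φ u)
    (hA : HasFDerivAt (gradient u) A q) :
    ∃ m > 0, ∃ N : ℝ → Euc d →L[ℝ] Euc d, (∀ w, Differentiable ℝ fun t => ⟪N t w, w⟫) ∧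
      (∀ w t, m * ‖covectorTransport φ u (-t) q w‖ ^ 2 ≤ deriv (fun t => ⟪N t w, w⟫) t) ∧
      ∀ t > 0, IsHeight (GreenT φ t (gradLift u q)) (A + (N t).inverse) := by
  have hq := hA.differentiableAt
  have smooth := h.tonelli.smooth
  have symm := inner_apply_comm_of_hasFDerivAt_gradient h.differentiable hA
  obtain ⟨R, hR, hRφ⟩ := h.flow.exists_isLinearizedFlow smooth (gradLift u q)
  have baseMap_eq (t : ℝ) : fderiv ℝ (projFlow φ u t) q = baseMap A (R t) :=
    ((hRφ t).comp q ((hasFDerivAt_id q).prodMk hA)).fst.fderiv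
  have inv (t : ℝ) : (baseMap A (R t)).IsInvertible :=
    baseMap_eq t ▸ h.isInvertible_fderiv_projFlow hq t
  obtain ⟨m, hm, hmH⟩ := h.exists_fderiv_fderiv_projFlow_ge q
  let N : ℝ → Euc d →L[ℝ] Euc d := fun t => -verticalSlope A (R (-t))
  have inner_N_deriv (w : Euc d) (t : ℝ) : HasDerivAt (fun t => ⟪N t w, w⟫)
      (fderiv ℝ (fderiv ℝ H) (φ (-t) (gradLift u q)) (0, covectorTransport φ u (-t) q w)
        (0, covectorTransport φ u (-t) q w)) t := by
    have := (hR.hasDerivAt_inner_verticalSlope smooth symm inv (-t) w).scomp t (hasDerivAt_neg' t)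
    simpa [Function.comp_def, N, covectorTransport, baseMap_eq] using this.fun_neg
  have deriv_ge (w : Euc d) (t : ℝ) :
      m * ‖covectorTransport φ u (-t) q w‖ ^ 2 ≤ deriv (fun t => ⟪N t w, w⟫) t :=
    (hmH _ _).trans_eq (inner_N_deriv w t).deriv.symm
  refine ⟨m, hm, N, fun w t => (inner_N_deriv w t).differentiableAt, deriv_ge, fun t ht => ?_⟩
  have N_inv : (N t).IsInvertible := by
    refine isInvertible_of_forall_apply_eq_zero fun w hw => by_contra fun w_ne => ?_
    have strictMono : StrictMono fun t => ⟪N t w, w⟫ := strictMono_of_deriv_pos fun t =>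
      lt_of_lt_of_le (mul_pos hm (pow_pos (norm_pos_iff.2
        (h.covectorTransport_ne_zero hq (-t) w_ne)) 2)) (deriv_ge w t)
    simpa [hw, N, hR.verticalSlope_zero] using strictMono ht
  refine isHeight_add_inverse N_inv symm (fun v w => ?_) fun z => ?_
  · simp only [N, neg_apply, inner_neg_left, inner_neg_right]
    rw [hR.inner_verticalSlope_comm smooth symm (inv _)]
  · rw [mem_GreenT_iff h.flow smooth (hRφ (-t)), fst_apply_eq_zero_iff (inv _)]
    rfl

theorem tendsto_heightOf_GreenT (h : IsC1WeakKAM H φ u) (hA : HasFDerivAt (gradient u) A q)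
    (hw : ∀ w ≠ 0, ¬ Tendsto (fun n : ℕ => covectorTransport φ u (-n) q w) atTop (nhds 0)) :
    (∀ t > 0, ∃ S, IsHeight (GreenT φ t (gradLift u q)) S) ∧
      Tendsto (fun t => heightOf (GreenT φ t (gradLift u q))) atTop (nhds A) := by
  obtain ⟨m, hm, N, N_diff, deriv_ge, height⟩ := h.exists_isHeight_GreenT_add_inverse hA
  refine ⟨fun t ht => ⟨_, height t ht⟩, ?_⟩
  obtain ⟨C, hC⟩ := h.exists_norm_covectorTransport_le hA.differentiableAt
  have inner_N_tendsto (w : Euc d) (w_ne : w ≠ 0) : Tendsto (fun t => ⟪N t w, w⟫) atTop atTop := by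
    refine tendsto_atTop_of_sq_le_deriv hm (N_diff w) (deriv_ge w) (fun _ => norm_nonneg _)
      (fun t r hr => hC t r hr w) ?_
    exact fun norm_tendsto => hw w w_ne (tendsto_zero_iff_norm_tendsto_zero.2 norm_tendsto)
  have inner_N_mono (w : Euc d) : Monotone fun t => ⟪N t w, w⟫ :=
    monotone_of_deriv_nonneg (N_diff w) fun t =>
      (mul_nonneg hm.le (sq_nonneg _)).trans (deriv_ge w t)
  have limit := (tendsto_inverse_zero_of_tendsto_atTop inner_N_mono inner_N_tendsto).const_add A
  rw [add_zero] at limit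
  refine limit.congr' ?_
  filter_upwards [eventually_gt_atTop 0] with t ht using (heightOf_eq (height t ht)).symm

end IsC1WeakKAM

/-! ### Hyperbolic fixed points -/

lemma le_and_le_of_cone_estimates {a b : ℕ → ℝ} (ha : ∀ k, 4 * a k - (a k + b k) / 4 ≤ a (k + 1))
    (hb : ∀ k, b (k + 1) ≤ b k / 4 + (a k + b k) / 4) (hb₀ : ∀ k, 0 ≤ b k)
    (hbdd : BddAbove (range a)) (k : ℕ) : a k ≤ b k ∧ b k ≤ (3 / 4) ^ k * b 0 := by
  have le (k : ℕ) : a k ≤ b k := by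
    by_contra! hlt
    have growth (j : ℕ) : b (k + j) ≤ a (k + j) ∧ 3 ^ j * a k ≤ a (k + j) := by
      induction j with
      | zero => simp [hlt.le]
      | succ j ih =>
        have ha' := ha (k + j)
        have hb' := hb (k + j)
        have pos := hb₀ (k + j)
        rw [← add_assoc, pow_succ]
        constructor <;> linarith [ih.1, ih.2]
    obtain ⟨M, hM⟩ := hbdd
    have pos : 0 < a k := (hb₀ k).trans_lt hlt
    obtain ⟨j, hj⟩ := pow_unbounded_of_one_lt (M / a k) (show (1 : ℝ) < 3 by norm_num)
    rw [div_lt_iff₀ pos] at hj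
    linarith [(growth j).2, hM (mem_range_self (k + j))]
  refine ⟨le k, ?_⟩
  induction k with
  | zero => simp
  | succ k ih => rw [pow_succ]; linarith [hb k, le k]

section Hyperbolic

variable {E : Type*} [NormedAddCommGroup E] [NormedSpace ℝ E]

lemma bddAbove_range_norm_map_sub_of_mem_ball (P : E →L[ℝ] E) {x y : ℕ → E} {z : E} {r : ℝ}
    (hx : ∀ k, x k ∈ ball z r) (hy : ∀ k, y k ∈ ball z r) :
    BddAbove (range fun k => ‖P (x k - y k)‖) := by
  refine ⟨‖P‖ * (r + r), forall_mem_range.2 fun k => (P.le_opNorm _).trans ?_⟩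
  gcongr
  rw [← dist_eq_norm]
  exact (dist_triangle_right _ _ z).trans
    (add_le_add (mem_ball.1 (hx k)).le (mem_ball.1 (hy k)).le)

-- `P` is the projection onto the expanded directions; orbits that never leave the ball differ
-- mostly along the contracted ones.
lemma exists_norm_iterate_sub_le_of_hasStrictFDerivAt {F : E → E} {A P : E →L[ℝ] E} {z : E}
    (hF : HasStrictFDerivAt F A z) (hcomm : ∀ v, A (P v) = P (A v))
    (hexp : ∀ v, 4 * ‖P v‖ ≤ ‖A (P v)‖) (hcontr : ∀ v, 4 * ‖A (v - P v)‖ ≤ ‖v - P v‖) :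
    ∃ r > 0, ∃ C ≥ 0, ∀ x y, (∀ k, F^[k] x ∈ ball z r) → (∀ k, F^[k] y ∈ ball z r) →
      ∀ k, ‖F^[k] x - F^[k] y‖ ≤ C * (3 / 4) ^ k * ‖x - y‖ := by
  set κ : ℝ := 1 + ‖P‖
  have κ_pos : 0 < κ := by positivity
  have norm_P_le (v : E) : ‖P v‖ ≤ κ * ‖v‖ := (P.le_opNorm v).trans (by gcongr; simp [κ])
  have norm_sub_P_le (v : E) : ‖v - P v‖ ≤ κ * ‖v‖ :=
    (norm_sub_le _ _).trans (by linarith [P.le_opNorm v])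
  obtain ⟨r, hr, hball⟩ := Metric.eventually_nhds_iff_ball.1
    (isLittleO_iff.1 hF.isLittleO (show 0 < 1 / (4 * κ) by positivity))
  refine ⟨r, hr, 2 * κ, by positivity, fun x y hx hy k => ?_⟩
  set a : ℕ → ℝ := fun k => ‖P (F^[k] x - F^[k] y)‖
  set b : ℕ → ℝ := fun k => ‖F^[k] x - F^[k] y - P (F^[k] x - F^[k] y)‖
  have norm_le (k : ℕ) : ‖F^[k] x - F^[k] y‖ ≤ a k + b k := norm_le_norm_add_norm_sub' _ _
  have step (k : ℕ) : ∃ e, κ * ‖e‖ ≤ (a k + b k) / 4 ∧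
      F^[k + 1] x - F^[k + 1] y = A (F^[k] x - F^[k] y) + e := by
    refine ⟨_, ?_, (add_sub_cancel _ _).symm⟩
    rw [Function.iterate_succ_apply', Function.iterate_succ_apply']
    calc _ ≤ κ * (1 / (4 * κ) * (a k + b k)) := by
          gcongr
          exact (hball (F^[k] x, F^[k] y) (by rw [← ball_prod_same]; exact ⟨hx k, hy k⟩)).trans
            (by gcongr; exact norm_le k)
      _ = (a k + b k) / 4 := by field_simp
  have ha (k : ℕ) : 4 * a k - (a k + b k) / 4 ≤ a (k + 1) := by
    obtain ⟨e, he, hstep⟩ := step k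
    simp only [a, hstep, map_add, ← hcomm]
    linarith [hexp (F^[k] x - F^[k] y), norm_P_le e,
      norm_sub_le_norm_add (A (P (F^[k] x - F^[k] y))) (P e)]
  have hb (k : ℕ) : b (k + 1) ≤ b k / 4 + (a k + b k) / 4 := by
    obtain ⟨e, he, hstep⟩ := step k
    simp only [b, hstep, map_add, ← hcomm, add_sub_add_comm, ← map_sub]
    refine (norm_add_le _ _).trans ?_
    change _ ≤ b k / 4 + _
    have contracted : 4 * ‖A (F^[k] x - F^[k] y - P (F^[k] x - F^[k] y))‖ ≤ b k := hcontr _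
    linarith [norm_sub_P_le e]
  obtain ⟨a_le, b_le⟩ := le_and_le_of_cone_estimates ha hb (fun _ => norm_nonneg _)
    (bddAbove_range_norm_map_sub_of_mem_ball P hx hy) k
  calc ‖F^[k] x - F^[k] y‖ ≤ 2 * b k := by linarith [norm_le k]
    _ ≤ 2 * ((3 / 4) ^ k * (κ * ‖x - y‖)) := by
      gcongr
      exact b_le.trans (by gcongr; exact norm_sub_P_le _)
    _ = 2 * κ * (3 / 4) ^ k * ‖x - y‖ := by ring

/-- The subspace of the vectors contracted to zero by a sequence of operators; for the iterates of
an invertible operator it is the stable subspace. -/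
def contractedSubspace (B : ℕ → E →L[ℝ] E) : Submodule ℝ E where
  carrier := {v | Tendsto (fun n => B n v) atTop (nhds 0)}
  add_mem' ha hb := by simpa using ha.add hb
  zero_mem' := by simp
  smul_mem' c v hv := by simpa using hv.const_smul c

lemma apply_mem_contractedSubspace {B : ℕ → E →L[ℝ] E} {T : E →L[ℝ] E}
    (hT : ∀ n, Commute (B n) T) {v : E} (hv : v ∈ contractedSubspace B) :
    T v ∈ contractedSubspace B := by
  have limit := (T.continuous.tendsto 0).comp hv
  rw [map_zero] at limit
  exact limit.congr fun n => congrArg (· v) (hT n).eq.symm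

lemma eventually_norm_apply_le_half_mul [FiniteDimensional ℝ E] {B : ℕ → E →L[ℝ] E}
    {W : Submodule ℝ E} (hW : W ≤ contractedSubspace B) :
    ∀ᶠ n in atTop, ∀ w ∈ W, ‖B n w‖ ≤ 1 / 2 * ‖w‖ := by
  set b := Module.finBasis ℝ W
  obtain ⟨C, hC, opNorm_le⟩ := b.exists_opNorm_le (F := E)
  have basis_small (i) : ∀ᶠ n in atTop, ‖B n (b i)‖ ≤ 1 / (2 * C) :=
    (NormedAddGroup.tendsto_nhds_zero.1 (hW (b i).2) _ (by positivity)).mono fun _ => le_of_lt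
  filter_upwards [eventually_all.2 basis_small] with n hn w hw
  refine ((B n ∘L W.subtypeL).le_opNorm ⟨w, hw⟩).trans ?_
  gcongr
  · refine (opNorm_le (by positivity) hn).trans_eq ?_
    field_simp
  · rfl

variable {R : ℝ → E →L[ℝ] E}

lemma disjoint_contractedSubspace [FiniteDimensional ℝ E] (hR₀ : R 0 = 1)
    (hR : ∀ s t, R s * R t = R (s + t)) :
    Disjoint (contractedSubspace fun n => R n) (contractedSubspace fun n => R (-n)) := by
  set W := (contractedSubspace fun n => R n) ⊓ contractedSubspace fun n => R (-n)
  have comm (s t : ℝ) : Commute (R s) (R t) := by rw [commute_iff_eq, hR, hR, add_comm]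
  obtain ⟨n, hn, hn'⟩ := ((eventually_norm_apply_le_half_mul (W := W) inf_le_left).and
    (eventually_norm_apply_le_half_mul (W := W) inf_le_right)).exists
  refine disjoint_iff_inf_le.2 fun v hv => ?_
  have hRv : R n v ∈ W := ⟨apply_mem_contractedSubspace (fun _ => comm _ _) hv.1,
    apply_mem_contractedSubspace (fun _ => comm _ _) hv.2⟩
  have back : R (-n) (R n v) = v := by
    rw [← mul_apply_eq_comp, hR, neg_add_cancel, hR₀, one_apply_eq_self]
  have hv_le := hn' _ hRv
  rw [back] at hv_le
  have := hn v hv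
  exact norm_le_zero_iff.1 (by linarith)

lemma eq_contractedSubspace_of_isCompl [FiniteDimensional ℝ E] (hR₀ : R 0 = 1)
    (hR : ∀ s t, R s * R t = R (s + t)) {Es Eu : Submodule ℝ E} (hE : IsCompl Es Eu)
    (hs : Es ≤ contractedSubspace fun n => R n) (hu : Eu ≤ contractedSubspace fun n => R (-n)) :
    Es = contractedSubspace (fun n => R n) ∧ Eu = contractedSubspace fun n => R (-n) := by
  have disjoint := disjoint_contractedSubspace hR₀ hR
  exact ⟨eq_of_le_of_inf_le_of_le_sup hs
      ((disjoint.mono_right hu).le_bot.trans bot_le) (le_top.trans hE.sup_eq_top.ge),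
    eq_of_le_of_inf_le_of_le_sup hu
      ((disjoint.symm.mono_right hs).le_bot.trans bot_le) (le_top.trans hE.symm.sup_eq_top.ge)⟩

lemma apply_projection_eq_projection_apply {Es Eu : Submodule ℝ E} (hE : IsCompl Es Eu)
    {T : E →ₗ[ℝ] E} (hs : ∀ v ∈ Es, T v ∈ Es) (hu : ∀ v ∈ Eu, T v ∈ Eu) (v : E) :
    T (Es.projection Eu hE v) = Es.projection Eu hE (T v) := by
  conv_rhs => rw [← add_sub_cancel (Es.projection Eu hE v) v, map_add, map_add]
  rw [Submodule.projection_apply_of_mem_left hE (hs _ (Submodule.projection_apply_mem hE v)),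
    Submodule.projection_apply_of_mem_right hE (hu _ (Submodule.sub_projection_mem hE v)), add_zero]

lemma tendsto_const_mul_exp_neg_mul_natCast (C : ℝ) {μ : ℝ} (hμ : 0 < μ) :
    Tendsto (fun n : ℕ => C * Real.exp (-μ * n)) atTop (nhds 0) := by
  have := (Real.tendsto_exp_atBot.comp (tendsto_natCast_atTop_atTop.const_mul_atTop_of_neg
    (neg_lt_zero.2 hμ))).const_mul C
  rwa [mul_zero] at this

lemma le_contractedSubspace_of_norm_le {B : ℕ → E →L[ℝ] E} {W : Submodule ℝ E} {c : ℕ → ℝ}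
    (hB : ∀ v ∈ W, ∀ n, ‖B n v‖ ≤ c n * ‖v‖) (hc : Tendsto c atTop (nhds 0)) :
    W ≤ contractedSubspace B := fun v hv =>
  squeeze_zero_norm (hB v hv) (by simpa using hc.mul_const ‖v‖)

lemma exists_projection_of_hyperbolic [FiniteDimensional ℝ E] (hR₀ : R 0 = 1)
    (hR : ∀ s t, R s * R t = R (s + t)) {Es Eu : Submodule ℝ E} (hE : IsCompl Es Eu) {C μ : ℝ}
    (hμ : 0 < μ)
    (hs : ∀ v ∈ Es, ∀ t : ℝ, 0 ≤ t → ‖R t v‖ ≤ C * Real.exp (-μ * t) * ‖v‖)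
    (hu : ∀ v ∈ Eu, ∀ t : ℝ, 0 ≤ t → ‖R (-t) v‖ ≤ C * Real.exp (-μ * t) * ‖v‖) :
    ∃ N : ℕ, 0 < N ∧ ∃ P : E →L[ℝ] E, (∀ v, R (-N) (P v) = P (R (-N) v)) ∧
      (∀ v, 4 * ‖P v‖ ≤ ‖R (-N) (P v)‖) ∧ ∀ v, 4 * ‖R (-N) (v - P v)‖ ≤ ‖v - P v‖ := by
  have rate := tendsto_const_mul_exp_neg_mul_natCast C hμ
  obtain ⟨Es_eq, Eu_eq⟩ := eq_contractedSubspace_of_isCompl hR₀ hR hE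
    (le_contractedSubspace_of_norm_le (fun v hv n => hs v hv n n.cast_nonneg) rate)
    (le_contractedSubspace_of_norm_le (fun v hv n => hu v hv n n.cast_nonneg) rate)
  have comm (s t : ℝ) : Commute (R s) (R t) := by rw [commute_iff_eq, hR, hR, add_comm]
  obtain ⟨N, hN, N_pos⟩ := ((rate.eventually_le_const (show (0 : ℝ) < 1 / 4 by norm_num)).and
    (eventually_gt_atTop 0)).exists
  have mapsTo_Es : ∀ v ∈ Es, R (-N) v ∈ Es := fun v hv => by
    rw [Es_eq] at hv ⊢
    exact apply_mem_contractedSubspace (fun _ => comm _ _) hv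
  have mapsTo_Eu : ∀ v ∈ Eu, R (-N) v ∈ Eu := fun v hv => by
    rw [Eu_eq] at hv ⊢
    exact apply_mem_contractedSubspace (fun _ => comm _ _) hv
  have quarter {v w : E} (h : ‖v‖ ≤ C * Real.exp (-μ * N) * ‖w‖) : 4 * ‖v‖ ≤ ‖w‖ := by
    linarith [mul_le_mul_of_nonneg_right hN (norm_nonneg w)]
  refine ⟨N, N_pos, LinearMap.toContinuousLinearMap (Es.projection Eu hE),
    apply_projection_eq_projection_apply hE (T := (R (-N)).toLinearMap) mapsTo_Es mapsTo_Eu,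
    fun v => quarter ?_,
    fun v => quarter (hu _ (Submodule.sub_projection_mem hE v) N N.cast_nonneg)⟩
  have hPv : Es.projection Eu hE v ∈ Es := Submodule.projection_apply_mem hE v
  have bound := hs _ (mapsTo_Es _ hPv) N N.cast_nonneg
  rwa [← mul_apply_eq_comp, hR, add_neg_cancel, hR₀, one_apply_eq_self] at bound

end Hyperbolic

section

variable {d : ℕ} {H : Phase d → ℝ} {φ : ℝ → Phase d → Phase d} {u : Euc d → ℝ}

lemma IsHyperbolicFixedPt.exists_norm_iterate_sub_le {x₀ : Phase d}
    (hx₀ : IsHyperbolicFixedPt φ x₀) (hH : ContDiff ℝ 2 H) (hφ : IsConformalFlow H 0 φ) :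
    ∃ N : ℕ, 0 < N ∧ ∃ r > 0, ∃ C ≥ 0, ∀ x y, (∀ k, (φ (-N))^[k] x ∈ ball x₀ r) →
      (∀ k, (φ (-N))^[k] y ∈ ball x₀ r) →
      ∀ k, ‖(φ (-N))^[k] x - (φ (-N))^[k] y‖ ≤ C * (3 / 4) ^ k * ‖x - y‖ := by
  obtain ⟨hfix, Es, Eu, hE, C, μ, -, hμ, hs, hu⟩ := hx₀
  obtain ⟨R, hR₀, -, hRφ⟩ := exists_hasStrictFDerivAt_flow (contDiff_hamVF hH) hφ.1 hφ.2.2 x₀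
  have fderiv_eq (t : ℝ) : fderiv ℝ (φ t) x₀ = R t := (hRφ t).hasFDerivAt.fderiv
  have hR (s t : ℝ) : R s * R t = R (s + t) := by
    have hcomp := (show HasStrictFDerivAt (φ s) (R s) (φ t x₀) by rw [hfix]; exact hRφ s).comp x₀
      (hRφ t)
    simp only [hφ.2.1] at hcomp
    exact hcomp.hasFDerivAt.unique (hRφ (s + t)).hasFDerivAt
  simp only [fderiv_eq] at hs hu
  obtain ⟨N, N_pos, P, hcomm, hexp, hcontr⟩ := exists_projection_of_hyperbolic hR₀ hR hE hμ hs hu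
  exact ⟨N, N_pos, exists_norm_iterate_sub_le_of_hasStrictFDerivAt (hRφ (-N)) hcomm hexp hcontr⟩

namespace IsC1WeakKAM

lemma hamVF_gradLift_eq_zero (h : IsC1WeakKAM H φ u) {z : Euc d} (hz : projVF H u z = 0) :
    hamVF H 0 (gradLift u z) = 0 := by
  have fixed (t : ℝ) : φ t (gradLift u z) = gradLift u z := by
    rw [h.flow_gradLift, h.projFlow_eq_self hz]
  have deriv := h.flow.2.2 (gradLift u z) 0
  simp only [fixed] at deriv
  exact deriv.unique (hasDerivAt_const _ _)

lemma exists_norm_gradLift_sub_le (h : IsC1WeakKAM H φ u) :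
    ∃ K ≥ 0, ∀ x y, ‖gradLift u x - gradLift u y‖ ≤ K * ‖x - y‖ := by
  obtain ⟨K, hK⟩ := h.exists_lipschitzWith_gradient
  refine ⟨max 1 K, by positivity, fun x y => ?_⟩
  simpa only [dist_eq_norm, NNReal.coe_max, NNReal.coe_one] using!
    (LipschitzWith.id.prodMk hK).dist_le_mul x y

lemma exists_norm_iterate_projFlow_sub_le (h : IsC1WeakKAM H φ u) {z : Euc d}
    (hz : IsHyperbolicFixedPt φ (gradLift u z)) :
    ∃ N : ℕ, 0 < N ∧ ∃ r > 0, ∃ C ≥ 0, ∀ x y,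
      (∀ k, (projFlow φ u (-N))^[k] x ∈ ball z r) → (∀ k, (projFlow φ u (-N))^[k] y ∈ ball z r) →
      ∀ k, ‖(projFlow φ u (-N))^[k] x - (projFlow φ u (-N))^[k] y‖ ≤
        C * (3 / 4) ^ k * ‖x - y‖ := by
  obtain ⟨N, N_pos, r, hr, C, hC, contraction⟩ :=
    hz.exists_norm_iterate_sub_le h.tonelli.smooth h.flow
  obtain ⟨K, hK, lift_le⟩ := h.exists_norm_gradLift_sub_le
  have conj (k : ℕ) (x : Euc d) :
      (φ (-N))^[k] (gradLift u x) = gradLift u ((projFlow φ u (-N))^[k] x) :=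
    ((show Function.Semiconj (gradLift u) (projFlow φ u (-N)) (φ (-N)) from
      fun x => (h.flow_gradLift x (-N)).symm).iterate_right k x).symm
  have continuous_lift : Continuous (gradLift u) :=
    continuous_id.prodMk (continuous_gradient h.contDiff)
  obtain ⟨ρ, hρ, mapsTo⟩ := Metric.continuousAt_iff.1 (continuous_lift.continuousAt (x := z)) r hr
  refine ⟨N, N_pos, ρ, hρ, C * K, by positivity, fun x y hx hy k => ?_⟩
  have lifted := contraction (gradLift u x) (gradLift u y)
    (fun k => by rw [conj]; exact mapsTo (hx k)) (fun k => by rw [conj]; exact mapsTo (hy k)) k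
  rw [conj, conj] at lifted
  calc _ ≤ _ := (norm_fst_le (gradLift u _ - gradLift u _)).trans lifted
    _ ≤ C * (3 / 4) ^ k * (K * ‖x - y‖) := by gcongr; exact lift_le x y
    _ = C * K * (3 / 4) ^ k * ‖x - y‖ := by ring

lemma eventually_projVF_ne_zero (h : IsC1WeakKAM H φ u) {z : Euc d} (hz : projVF H u z = 0)
    (hyp : IsHyperbolicFixedPt φ (gradLift u z)) : ∀ᶠ y in nhdsWithin z {z}ᶜ, projVF H u y ≠ 0 := by
  obtain ⟨N, -, r, hr, C, -, contraction⟩ := h.exists_norm_iterate_projFlow_sub_le hyp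
  filter_upwards [nhdsWithin_le_nhds (ball_mem_nhds z hr), self_mem_nhdsWithin] with y hy hne hy₀
  have fixed {w : Euc d} (hw : projVF H u w = 0) (k : ℕ) : (projFlow φ u (-N))^[k] w = w :=
    Function.iterate_fixed (h.projFlow_eq_self hw _) k
  have bound := contraction y z (fun k => by rwa [fixed hy₀])
    fun k => by rw [fixed hz]; exact mem_ball_self hr
  simp only [fixed hy₀, fixed hz] at bound
  have limit : Tendsto (fun k => C * (3 / 4) ^ k * ‖y - z‖) atTop (nhds 0) := by
    simpa using ((tendsto_pow_atTop_nhds_zero_of_lt_one (by norm_num)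
      (show (3 / 4 : ℝ) < 1 by norm_num)).const_mul C).mul_const ‖y - z‖
  exact hne (sub_eq_zero.1 (norm_le_zero_iff.1 (ge_of_tendsto' limit bound)))

lemma countable_setOf_projVF_eq_zero (h : IsC1WeakKAM H φ u)
    (hyp : ∀ z, projVF H u z = 0 → IsHyperbolicFixedPt φ (gradLift u z)) :
    {z | projVF H u z = 0}.Countable := by
  have : DiscreteTopology {z | projVF H u z = 0} := by
    refine discreteTopology_subtype_iff.2 fun z hz => ?_
    rw [← disjoint_iff, disjoint_principal_right]
    exact h.eventually_projVF_ne_zero hz (hyp z hz)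
  exact TopologicalSpace.separableSpace_iff_countable.1 inferInstance

end IsC1WeakKAM

end

/-! ### Recurrence on the torus -/

section Recurrence

variable {d : ℕ}

/-- `s` meets each orbit of the lattice `ℤ^d` at most once, i.e. it projects injectively to the
torus `ℝ^d/ℤ^d`. -/
def EmbedsInTorus (s : Set (Euc d)) : Prop :=
  ∀ x ∈ s, ∀ k : Fin d → ℤ, x + intVec k ∈ s → k = 0

lemma intVec_zero : intVec (0 : Fin d → ℤ) = 0 := by ext; simp [intVec]

lemma intVec_neg (k : Fin d → ℤ) : intVec (-k) = -intVec k := by ext; simp [intVec]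

lemma abs_apply_le_norm_intVec (k : Fin d → ℤ) (i : Fin d) : |(k i : ℝ)| ≤ ‖intVec k‖ :=
  PiLp.norm_apply_le (intVec k) i

lemma embedsInTorus_ball (c : Euc d) : EmbedsInTorus (ball c (1 / 2)) := by
  intro x hx k hxk
  have norm_lt : ‖intVec k‖ < 1 := by
    have := dist_triangle_right (x + intVec k) x c
    rw [dist_self_add_left] at this
    linarith [mem_ball.1 hx, mem_ball.1 hxk]
  ext i
  have := (abs_apply_le_norm_intVec k i).trans_lt norm_lt
  exact Int.abs_lt_one_iff.1 (by exact_mod_cast this)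

lemma exists_eq_intVec_of_mem_span {x : Euc d} (hx : x ∈ Submodule.span ℤ
    (range (EuclideanSpace.basisFun (Fin d) ℝ).toBasis)) : ∃ k, x = intVec k := by
  obtain ⟨c, rfl⟩ := (Submodule.mem_span_range_iff_exists_fun ℤ).1 hx
  refine ⟨c, ?_⟩
  ext i
  simp [intVec, Finset.sum_apply, Pi.single_apply]

lemma exists_volume_le_of_embedsInTorus (d : ℕ) :
    ∃ V < ⊤, ∀ s : Set (Euc d), MeasurableSet s → EmbedsInTorus s → volume s ≤ V := by
  set b := (EuclideanSpace.basisFun (Fin d) ℝ).toBasis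
  refine ⟨volume (ZSpan.fundamentalDomain b),
    (ZSpan.fundamentalDomain_isBounded b).measure_lt_top, fun s hs embeds => ?_⟩
  by_contra! hlt
  have : Countable (Submodule.span ℤ (range b)).toAddSubgroup :=
    inferInstanceAs (Countable (Submodule.span ℤ (range b)))
  obtain ⟨x, y, hne, overlap⟩ := exists_pair_mem_lattice_not_disjoint_vadd
    (ZSpan.isAddFundamentalDomain' b (volume : Measure (Euc d))) hs.nullMeasurableSet hlt
  obtain ⟨_, ⟨a, ha, rfl⟩, c, hc, hca⟩ := Set.not_disjoint_iff.1 overlap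
  change (y : Euc d) + c = x + a at hca
  obtain ⟨k, hk⟩ := exists_eq_intVec_of_mem_span (sub_mem y.2 x.2)
  have a_eq : a = c + intVec k := by
    rw [← hk, ← add_right_inj (x : Euc d), ← hca]
    abel
  rw [embeds c hc k (a_eq ▸ ha), intVec_zero, sub_eq_zero] at hk
  exact hne (Subtype.ext hk.symm)

variable {f : Euc d → Euc d} {B s : Set (Euc d)}

open Classical in
/-- The number of times `j < m` at which the orbit of `q` under `f` visits `B`. -/
def visitCount (f : Euc d → Euc d) (B : Set (Euc d)) (m : ℕ) (q : Euc d) : ℕ :=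
  Nat.count (fun j => f^[j] q ∈ B) m

lemma measurable_visitCount (hf : Continuous f) (hB : MeasurableSet B) (m : ℕ) :
    Measurable (visitCount f B m) := by
  classical
  induction m with
  | zero => exact measurable_const
  | succ m ih =>
    change Measurable fun q => Nat.count (fun j => f^[j] q ∈ B) (m + 1)
    simp only [Nat.count_succ]
    exact ih.add (Measurable.ite ((hf.iterate m).measurable hB) measurable_const measurable_const)

lemma visitCount_add (a m : ℕ) (q : Euc d) :
    visitCount f B (a + m) q = visitCount f B a q + visitCount f B m (f^[a] q) := by
  unfold visitCount
  rw [Nat.count_add]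
  congr! 4 with j
  rw [add_comm, Function.iterate_add_apply]

lemma iterate_add_intVec (hf : ∀ q k, f (q + intVec k) = f q + intVec k) (n : ℕ) (q : Euc d)
    (k : Fin d → ℤ) : f^[n] (q + intVec k) = f^[n] q + intVec k :=
  (show Function.Semiconj (· + intVec k) f f from fun q => (hf q k).symm).iterate_right n q |>.symm

lemma visitCount_add_intVec (hf : ∀ q k, f (q + intVec k) = f q + intVec k)
    (hB : PerFun (· ∈ B)) (m : ℕ) (q : Euc d) (k : Fin d → ℤ) :
    visitCount f B m (q + intVec k) = visitCount f B m q := by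
  unfold visitCount
  congr! 2 with j
  rw [iterate_add_intVec hf]
  exact (hB k _).to_iff

lemma visitCount_ne_zero {m : ℕ} (hm : m ≠ 0) {q : Euc d} (hq : q ∈ B) :
    visitCount f B m q ≠ 0 := by
  classical
  exact Nat.count_ne_iff_exists.2 ⟨0, Nat.pos_of_ne_zero hm, hq⟩

/-- The points of `s ∩ B` whose `k`-th visit to `B` (counted from `0`) takes place at time `m`, a
time at which the iterate of `f` is differentiable at them. -/
def visitSet (f : Euc d → Euc d) (B s : Set (Euc d)) (k m : ℕ) : Set (Euc d) :=
  {q | q ∈ s ∧ q ∈ B ∧ f^[m] q ∈ B ∧ visitCount f B m q = k ∧ DifferentiableAt ℝ f^[m] q}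

lemma measurableSet_visitSet (hf : Continuous f) (hB : MeasurableSet B) (hs : MeasurableSet s)
    (k m : ℕ) : MeasurableSet (visitSet f B s k m) :=
  hs.inter (hB.inter (((hf.iterate m).measurable hB).inter
    ((measurable_visitCount hf hB m (measurableSet_singleton k)).inter
      (measurableSet_of_differentiableAt ℝ _))))

-- If `m < n`, the orbit of `q'` reaches the lattice translate of `q` after `n - m > 0` steps, so
-- it has one more visit behind it.
lemma eq_of_iterate_eq_add_intVec_of_le (hinj : f.Injective)
    (hf : ∀ q k, f (q + intVec k) = f q + intVec k) (hB : PerFun (· ∈ B))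
    (hs : EmbedsInTorus s) {k m n : ℕ} (hmn : m ≤ n) {q q' : Euc d}
    (hq : q ∈ visitSet f B s k m) (hq' : q' ∈ visitSet f B s k n) {l : Fin d → ℤ}
    (heq : f^[m] q = f^[n] q' + intVec l) : m = n ∧ l = 0 := by
  obtain ⟨a, rfl⟩ := Nat.exists_eq_add_of_le' hmn
  have q_eq : q = f^[a] q' + intVec l := hinj.iterate m <| by
    rw [heq, iterate_add_intVec hf, ← Function.iterate_add_apply, add_comm m]
  have count := hq'.2.2.2.1
  rw [visitCount_add, ← visitCount_add_intVec hf hB m _ l, ← q_eq, hq.2.2.2.1] at count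
  obtain rfl : a = 0 := by
    by_contra ha
    have := visitCount_ne_zero (f := f) ha hq'.2.1
    lia
  exact ⟨(zero_add m).symm, hs q' hq'.1 l (q_eq ▸ hq.1)⟩

lemma eq_of_iterate_eq_add_intVec (hinj : f.Injective)
    (hf : ∀ q k, f (q + intVec k) = f q + intVec k) (hB : PerFun (· ∈ B))
    (hs : EmbedsInTorus s) {k m n : ℕ} {q q' : Euc d}
    (hq : q ∈ visitSet f B s k m) (hq' : q' ∈ visitSet f B s k n) {l : Fin d → ℤ}
    (heq : f^[m] q = f^[n] q' + intVec l) : m = n ∧ l = 0 := by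
  rcases le_total m n with hmn | hnm
  · exact eq_of_iterate_eq_add_intVec_of_le hinj hf hB hs hmn hq hq' heq
  · have := eq_of_iterate_eq_add_intVec_of_le hinj hf hB hs hnm hq' hq (l := -l)
      (by rw [heq, intVec_neg, add_neg_cancel_right])
    exact ⟨this.1.symm, neg_eq_zero.1 this.2⟩

lemma exists_tsum_lintegral_visitSet_le (hcont : Continuous f) (hinj : f.Injective)
    (hf : ∀ q k, f (q + intVec k) = f q + intVec k) (hB : MeasurableSet B)
    (hBper : PerFun (· ∈ B)) :
    ∃ V < ⊤, ∀ s, MeasurableSet s → EmbedsInTorus s → ∀ k, ∑' m,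
      ∫⁻ q in visitSet f B s k m, ENNReal.ofReal |(fderiv ℝ f^[m] q).det| ≤ V := by
  obtain ⟨V, hV, volume_le⟩ := exists_volume_le_of_embedsInTorus d
  refine ⟨V, hV, fun s hs embeds k => ?_⟩
  have meas (m : ℕ) := measurableSet_visitSet hcont hB hs k m
  have meas_image (m : ℕ) : MeasurableSet (f^[m] '' visitSet f B s k m) :=
    (meas m).image_of_continuousOn_injOn (hcont.iterate m).continuousOn (hinj.iterate m).injOn
  have separated {l m n} {q q'} := eq_of_iterate_eq_add_intVec hinj hf hBper embeds
    (k := k) (m := m) (n := n) (l := l) (q := q) (q' := q')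
  calc _ = ∑' m, volume (f^[m] '' visitSet f B s k m) :=
        tsum_congr fun m => lintegral_abs_det_fderiv_eq_addHaar_image _ (meas m)
          (fun q hq => hq.2.2.2.2.hasFDerivAt.hasFDerivWithinAt) (hinj.iterate m).injOn
    _ = volume (⋃ m, f^[m] '' visitSet f B s k m) := by
        refine (measure_iUnion (fun m n hne => Set.disjoint_left.2 ?_) meas_image).symm
        rintro _ ⟨q, hq, rfl⟩ ⟨q', hq', heq⟩
        refine hne (separated (l := 0) hq hq' ?_).1
        rw [heq, intVec_zero, add_zero]
    _ ≤ V := by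
        refine volume_le _ (MeasurableSet.iUnion meas_image) fun x hx l hxl => ?_
        obtain ⟨m, q, hq, rfl⟩ := mem_iUnion.1 hx
        obtain ⟨n, q', hq', heq⟩ := mem_iUnion.1 hxl
        exact (separated hq' hq heq).2

-- The sum over `m` has a single nonzero term, at the time of the `k`-th visit.
lemma tendsto_tsum_indicator_visitSet {q : Euc d} (hqs : q ∈ s) (hqB : q ∈ B)
    (hdiff : ∀ n, DifferentiableAt ℝ f^[n] q) (hfreq : ∃ᶠ n in atTop, f^[n] q ∈ B)
    {g : ℕ → Euc d → ENNReal}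
    (hg : Tendsto (fun n => g n q) (atTop ⊓ principal {n | f^[n] q ∈ B}) (nhds ⊤)) :
    Tendsto (fun k => ∑' m, (visitSet f B s k m).indicator (g m) q) atTop (nhds ⊤) := by
  classical
  have infinite : {n | f^[n] q ∈ B}.Infinite := Nat.frequently_atTop_iff_infinite.1 hfreq
  have visit (k : ℕ) : f^[Nat.nth (fun n => f^[n] q ∈ B) k] q ∈ B :=
    Nat.nth_mem_of_infinite infinite k
  refine tendsto_nhds_top_mono' (hg.comp (tendsto_inf.2
    ⟨(Nat.nth_strictMono infinite).tendsto_atTop, tendsto_principal.2 (.of_forall visit)⟩))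
    fun k => ?_
  refine le_of_eq_of_le ?_ (ENNReal.le_tsum (Nat.nth (fun n => f^[n] q ∈ B) k))
  exact (indicator_of_mem (show q ∈ visitSet f B s k _ from
    ⟨hqs, hqB, visit k, Nat.count_nth_of_infinite infinite k, hdiff _⟩) _).symm

lemma ae_not_tendsto_abs_det_fderiv_iterate (hcont : Continuous f) (hinj : f.Injective)
    (hf : ∀ q k, f (q + intVec k) = f q + intVec k) (hB : MeasurableSet B)
    (hBper : PerFun (· ∈ B)) :
    ∀ᵐ q, q ∈ B → (∀ n, DifferentiableAt ℝ f^[n] q) → (∃ᶠ n in atTop, f^[n] q ∈ B) →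
      ¬ Tendsto (fun n => |(fderiv ℝ f^[n] q).det|)
        (atTop ⊓ principal {n | f^[n] q ∈ B}) atTop := by
  obtain ⟨V, hV, tsum_le⟩ := exists_tsum_lintegral_visitSet_le hcont hinj hf hB hBper
  set g : ℕ → Euc d → ENNReal := fun n q => ENNReal.ofReal |(fderiv ℝ f^[n] q).det|
  have measurable_g (n : ℕ) : Measurable (g n) := ENNReal.measurable_ofReal.comp
    (continuous_abs.measurable.comp
      (ContinuousLinearMap.continuous_det.measurable.comp (measurable_fderiv ℝ _)))
  have local_statement (c : Euc d) : ∀ᵐ q, q ∈ ball c (1 / 2) → q ∈ B →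
      (∀ n, DifferentiableAt ℝ f^[n] q) → (∃ᶠ n in atTop, f^[n] q ∈ B) →
      ¬ Tendsto (fun n => |(fderiv ℝ f^[n] q).det|)
        (atTop ⊓ principal {n | f^[n] q ∈ B}) atTop := by
    have meas (k m : ℕ) := measurableSet_visitSet hcont hB
      (measurableSet_ball (x := c) (ε := 1 / 2)) k m
    set G : ℕ → Euc d → ENNReal := fun k q =>
      ∑' m, (visitSet f B (ball c (1 / 2)) k m).indicator (g m) q
    have measurable_G (k : ℕ) : Measurable (G k) :=
      Measurable.tsum fun m => (measurable_g m).indicator (meas k m)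
    have lintegral_G_le (k : ℕ) : ∫⁻ q, G k q ≤ V := by
      rw [lintegral_tsum fun m => ((measurable_g m).indicator (meas k m)).aemeasurable]
      simp only [lintegral_indicator (meas k _)]
      exact tsum_le _ measurableSet_ball (embedsInTorus_ball c) k
    have lintegral_liminf : ∫⁻ q, liminf (fun k => G k q) atTop ≤ V :=
      (lintegral_liminf_le measurable_G).trans (liminf_le_of_le (by isBoundedDefault) fun _ hb =>
        hb.exists.elim fun k hk => hk.trans (lintegral_G_le k))
    filter_upwards [ae_lt_top (Measurable.liminf measurable_G) (lintegral_liminf.trans_lt hV).ne]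
      with q liminf_lt hq hqB hdiff hfreq hdet
    exact liminf_lt.ne (tendsto_tsum_indicator_visitSet hq hqB hdiff hfreq
      (ENNReal.tendsto_ofReal_atTop.comp hdet)).liminf_eq
  refine measure_null_of_locally_null _ fun c _ => ⟨_, ?_, local_statement c⟩
  filter_upwards [mem_nhdsWithin_of_mem_nhds (ball_mem_nhds c one_half_pos), self_mem_nhdsWithin]
    with q hball hq hloc
  exact hq (hloc hball)

end Recurrence

/-! ### Backward orbits trapped at a zero -/

lemma exists_forall_norm_lt_imp_mem_of_isCompact {α G : Type*} [TopologicalSpace α]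
    [NormedAddCommGroup G] {K U : Set α} {g : α → G} (hK : IsCompact K) (hU : IsOpen U)
    (hg : ContinuousOn g K) (hgU : ∀ y ∈ K, g y = 0 → y ∈ U) :
    ∃ δ > 0, ∀ y ∈ K, ‖g y‖ < δ → y ∈ U := by
  obtain ⟨δ, δ_pos, le_norm⟩ := (hK.diff hU).exists_forall_le' (hg.norm.mono sdiff_subset)
    fun y hy => norm_pos_iff.2 (mt (hgU y hy.1) hy.2)
  exact ⟨δ, δ_pos, fun y hy hlt => not_not.1 fun hyU => (le_norm y ⟨hy, hyU⟩).not_gt hlt⟩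

lemma exists_nhds_tendsto_iterate {E G : Type*} [PseudoMetricSpace E] [ProperSpace E]
    [NormedAddCommGroup G] {f : E → E} {g : E → G} {z : E} (hf : ContinuousAt f z)
    (hfz : f z = z) (hg : Continuous g) (hgz : ∀ᶠ y in nhds z, g y = 0 → y = z) :
    ∃ δ > 0, ∃ U ∈ nhds z, ∀ x ∈ U, (∀ n, ‖g (f^[n] x)‖ < δ) →
      Tendsto (fun n => g (f^[n] x)) atTop (nhds 0) →
      Tendsto (fun n => f^[n] x) atTop (nhds z) := by
  obtain ⟨ρ, ρ_pos, isolated⟩ := (nhds_basis_closedBall.eventually_iff).1 hgz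
  have near {V : Set E} (hV : IsOpen V) (hz : z ∈ V) :
      ∃ δ > 0, ∀ y ∈ closedBall z ρ, ‖g y‖ < δ → y ∈ V :=
    exists_forall_norm_lt_imp_mem_of_isCompact (isCompact_closedBall z ρ) hV hg.continuousOn
      fun y hy hy0 => isolated hy hy0 ▸ hz
  have mapsTo_nhds : ∀ᶠ y in nhds z, y ∈ closedBall z ρ ∧ f y ∈ closedBall z ρ :=
    (eventually_mem_set.2 (closedBall_mem_nhds z ρ_pos)).and
      (hf.eventually_mem (hfz.symm ▸ closedBall_mem_nhds z ρ_pos))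
  obtain ⟨U, hU, U_open, z_mem⟩ := _root_.eventually_nhds_iff.1 mapsTo_nhds
  obtain ⟨δ, δ_pos, mem_of_lt⟩ := near U_open z_mem
  refine ⟨δ, δ_pos, U, U_open.mem_nhds z_mem, fun x hx hlt hlim => ?_⟩
  have iterate_mem (n : ℕ) : f^[n] x ∈ U := by
    induction n with
    | zero => exact hx
    | succ n ih =>
      refine mem_of_lt _ ?_ (hlt _)
      rw [Function.iterate_succ_apply']
      exact (hU _ ih).2
  refine tendsto_nhds.2 fun V hV hz => ?_
  obtain ⟨η, η_pos, mem_of_lt_η⟩ := near hV hz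
  filter_upwards [(NormedAddGroup.tendsto_nhds_zero.1 hlim) η η_pos] with n hn
  exact mem_of_lt_η _ (hU _ (iterate_mem n)).1 hn

namespace IsC1WeakKAM

variable {d : ℕ} {H : Phase d → ℝ} {φ : ℝ → Phase d → Phase d} {u : Euc d → ℝ}

lemma exists_tendsto_projFlow_neg (h : IsC1WeakKAM H φ u)
    (hyp : ∀ z, projVF H u z = 0 → IsHyperbolicFixedPt φ (gradLift u z)) {q : Euc d}
    (hq : Tendsto (fun n : ℕ => projVF H u (projFlow φ u (-n) q)) atTop (nhds 0)) :
    ∃ z, projVF H u z = 0 ∧ Tendsto (fun n : ℕ => projFlow φ u (-n) q) atTop (nhds z) := by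
  choose k hk using fun n : ℕ => exists_norm_add_intVec_le (projFlow φ u (-n) q)
  obtain ⟨z, -, σ, hσ, hz⟩ := (isCompact_closedBall (0 : Euc d) √d).tendsto_subseq
    (x := fun n => projFlow φ u (-n) q + intVec (k n)) fun n => by simpa using hk n
  have z_zero : projVF H u z = 0 := by
    refine tendsto_nhds_unique ((h.continuous_projVF.tendsto z).comp hz)
      ((hq.comp hσ.tendsto_atTop).congr fun n => ?_)
    exact (h.perFun_projVF (k (σ n)) _).symm
  obtain ⟨δ, δ_pos, U, U_mem, trapped⟩ := exists_nhds_tendsto_iterate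
    (h.continuous_projFlow (-1)).continuousAt (h.projFlow_eq_self z_zero (-1))
    h.continuous_projVF ((eventually_nhdsWithin_iff.1
      (h.eventually_projVF_ne_zero z_zero (hyp z z_zero))).mono fun y hy => not_imp_not.1 hy)
  obtain ⟨n₁, norm_lt⟩ := eventually_atTop.1 (NormedAddGroup.tendsto_nhds_zero.1 hq δ δ_pos)
  obtain ⟨j, mem_U, hj⟩ :=
    ((hz.eventually_mem U_mem).and (hσ.tendsto_atTop.eventually_ge_atTop n₁)).exists
  set l := k (σ j)
  set x := projFlow φ u (-(σ j : ℝ)) q + intVec l with hx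
  have iterate_eq (n : ℕ) : (projFlow φ u (-1))^[n] x =
      projFlow φ u (-(n + σ j : ℕ)) q + intVec l := by
    rw [← h.projFlow_neg_natCast, hx, h.projFlow_add_intVec, h.projFlow_projFlow]
    push_cast
    rw [neg_add]
  have projVF_iterate (n : ℕ) :
      projVF H u ((projFlow φ u (-1))^[n] x) =
        projVF H u (projFlow φ u (-(n + σ j : ℕ)) q) := by
    rw [iterate_eq, h.perFun_projVF l]
  refine ⟨z + intVec (-l), (h.perFun_projVF (-l) z).trans z_zero, ?_⟩
  have tendsto_add := trapped x mem_U
    (fun n => (projVF_iterate n).symm ▸ norm_lt _ (by omega))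
    (by simpa only [projVF_iterate] using (tendsto_add_atTop_iff_nat (σ j)).2 hq)
  simp only [iterate_eq] at tendsto_add
  rw [← tendsto_add_atTop_iff_nat (σ j)]
  simpa [intVec_neg, add_assoc] using tendsto_add.add_const (intVec (-l))

end IsC1WeakKAM

lemma ae_norm_fderiv_le_of_lipschitzOnWith {E : Type*} [NormedAddCommGroup E] [NormedSpace ℝ E]
    [FiniteDimensional ℝ E] [MeasurableSpace E] [BorelSpace E] (μ : Measure E) [μ.IsAddHaarMeasure]
    {F : E → E} {s : Set E} {C : NNReal} (hs : MeasurableSet s) (hF : LipschitzOnWith C F s) :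
    ∀ᵐ x ∂μ, x ∈ s → DifferentiableAt ℝ F x → ‖fderiv ℝ F x‖ ≤ C := by
  have meas : MeasurableSet (s ∩ {x | DifferentiableAt ℝ F x}) :=
    hs.inter (measurableSet_of_differentiableAt ℝ F)
  have approx : ApproximatesLinearOn F (0 : E →L[ℝ] E) (s ∩ {x | DifferentiableAt ℝ F x}) C :=
    fun x hx y hy => by simpa [dist_eq_norm] using hF.dist_le_mul x hx.1 y hy.1
  have bound := approx.norm_fderiv_sub_le μ meas (fderiv ℝ F)
    fun x hx => hx.2.hasFDerivAt.hasFDerivWithinAt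
  filter_upwards [(ae_restrict_iff' meas).1 bound] with x hx hxs hxd
  simpa using NNReal.coe_le_coe.2 (hx ⟨hxs, hxd⟩)

namespace IsC1WeakKAM

variable {d : ℕ} {H : Phase d → ℝ} {φ : ℝ → Phase d → Phase d} {u : Euc d → ℝ}

lemma exists_lipschitzOnWith_projFlow (h : IsC1WeakKAM H φ u) {z : Euc d}
    (hz : IsHyperbolicFixedPt φ (gradLift u z)) :
    ∃ N : ℕ, 0 < N ∧ ∃ r > 0, ∀ n₀ : ℕ, ∃ C, ∀ k : ℕ,
      LipschitzOnWith C (projFlow φ u (-(n₀ + k * N : ℕ)))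
        {q | ∀ n : ℕ, n₀ ≤ n → projFlow φ u (-n) q ∈ ball z r} := by
  obtain ⟨N, N_pos, r, r_pos, C, C_nonneg, contract⟩ := h.exists_norm_iterate_projFlow_sub_le hz
  obtain ⟨K, hK⟩ := h.exists_lipschitzWith_projFlow
  refine ⟨N, N_pos, r, r_pos, fun n₀ => ⟨C.toNNReal * (Real.exp (K * |(-n₀ : ℝ)|)).toNNReal,
    fun k => LipschitzOnWith.of_dist_le_mul fun x hx y hy => ?_⟩⟩
  have iterate_eq (q : Euc d) (k : ℕ) : (projFlow φ u (-N))^[k] (projFlow φ u (-n₀) q) =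
      projFlow φ u (-(n₀ + k * N : ℕ)) q := by
    rw [h.projFlow_neg_natCast N, ← Function.iterate_mul, ← h.projFlow_neg_natCast,
      h.projFlow_projFlow]
    congr 1
    push_cast
    ring
  have orbit_mem {q : Euc d} (hq : ∀ n : ℕ, n₀ ≤ n → projFlow φ u (-n) q ∈ ball z r) (k : ℕ) :
      (projFlow φ u (-N))^[k] (projFlow φ u (-n₀) q) ∈ ball z r :=
    iterate_eq q k ▸ hq _ (Nat.le_add_right _ _)
  have bound := contract _ _ (orbit_mem hx) (orbit_mem hy) k
  rw [iterate_eq, iterate_eq, ← dist_eq_norm, ← dist_eq_norm] at bound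
  rw [NNReal.coe_mul, Real.coe_toNNReal _ C_nonneg, mul_assoc]
  calc _ ≤ C * (3 / 4) ^ k * dist (projFlow φ u (-n₀) x) (projFlow φ u (-n₀) y) := bound
    _ ≤ C * dist (projFlow φ u (-n₀) x) (projFlow φ u (-n₀) y) := by
      gcongr
      exact mul_le_of_le_one_right C_nonneg (pow_le_one₀ (by norm_num) (by norm_num))
    _ ≤ _ := by
      gcongr
      exact (hK (-n₀)).dist_le_mul x y

lemma ae_frequently_norm_fderiv_projFlow_le (h : IsC1WeakKAM H φ u) {z : Euc d}
    (hz : IsHyperbolicFixedPt φ (gradLift u z)) :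
    ∀ᵐ q, DifferentiableAt ℝ (gradient u) q →
      Tendsto (fun n : ℕ => projFlow φ u (-n) q) atTop (nhds z) →
      ∃ C, ∃ᶠ n : ℕ in atTop, ‖fderiv ℝ (projFlow φ u (-n)) q‖ ≤ C := by
  obtain ⟨N, N_pos, r, r_pos, lipschitz⟩ := h.exists_lipschitzOnWith_projFlow hz
  choose C hC using lipschitz
  have meas (n₀ : ℕ) : MeasurableSet {q | ∀ n : ℕ, n₀ ≤ n → projFlow φ u (-n) q ∈ ball z r} := by
    simp only [ofPred_forall]
    exact .iInter fun n => .iInter fun _ => (h.continuous_projFlow _).measurable measurableSet_ball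
  have bound := ae_all_iff.2 fun n₀ => ae_all_iff.2 fun k =>
    ae_norm_fderiv_le_of_lipschitzOnWith volume (meas n₀) (hC n₀ k)
  filter_upwards [bound] with q hq hqd hqz
  obtain ⟨n₀, hn₀⟩ := eventually_atTop.1 (hqz.eventually_mem (ball_mem_nhds z r_pos))
  refine ⟨C n₀, frequently_atTop.2 fun m => ⟨n₀ + m * N, ?_, ?_⟩⟩
  · nlinarith
  · exact hq n₀ m hn₀ (h.differentiableAt_projFlow hqd _)

lemma fderiv_projFlow_apply_projVF (h : IsC1WeakKAM H φ u) {q : Euc d}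
    (hq : DifferentiableAt ℝ (gradient u) q) (s : ℝ) :
    fderiv ℝ (projFlow φ u s) q (projVF H u q) = projVF H u (projFlow φ u s q) := by
  have velocity (x : Euc d) : HasDerivAt (fun t => projFlow φ u t x) (projVF H u x) 0 := by
    simpa only [h.projFlow_zero] using h.hasDerivAt_projFlow x 0
  have chain := (h.differentiableAt_projFlow hq s).hasFDerivAt.comp_hasDerivAt_of_eq 0 (velocity q)
    (h.projFlow_zero q).symm
  refine chain.unique ((velocity (projFlow φ u s q)).congr_of_eventuallyEq (.of_forall fun t => ?_))
  simp only [Function.comp_apply, h.projFlow_projFlow, add_comm]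

end IsC1WeakKAM

/-! ### Conclusion in two degrees of freedom -/

section Planar

open Module

variable {E : Type*} [NormedAddCommGroup E] [InnerProductSpace ℝ E]

lemma alternatingMap_comp_eq_det_mul {R M ι : Type*} [CommRing R] [AddCommGroup M] [Module R M]
    [Finite ι] (e : Basis ι R M) (ω : M [⋀^ι]→ₗ[R] R) (f : M →ₗ[R] M) (v : ι → M) :
    ω (f ∘ v) = f.det * ω v := by
  classical
  have := Fintype.ofFinite ι
  rw [ω.eq_smul_basis_det e]
  simp only [AlternatingMap.smul_apply, smul_eq_mul, e.det_comp]
  ring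

lemma norm_mul_norm_apply_eq [Fact (finrank ℝ E = 2)] {w x y : E} {f : E →L[ℝ] E}
    (hf : ∀ v, ⟪y, f v⟫ = ⟪w, v⟫) (hw : w ≠ 0) (hwx : ⟪w, x⟫ = 0) :
    ‖w‖ * ‖f x‖ = ‖y‖ * ‖x‖ * |f.det| := by
  have : FiniteDimensional ℝ E := .of_fact_finrank_eq_two
  let e : Basis (Fin 2) ℝ E := finBasisOfFinrankEq ℝ E Fact.out
  let o := e.orientation
  have area_map (a b : E) : o.areaForm (f a) (f b) = f.det * o.areaForm a b := by
    rw [o.areaForm_to_volumeForm, o.areaForm_to_volumeForm, ContinuousLinearMap.det,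
      ← alternatingMap_comp_eq_det_mul e]
    congr 1
    ext i
    fin_cases i <;> rfl
  have area_wx : |o.areaForm x w| = ‖x‖ * ‖w‖ :=
    o.abs_areaForm_of_orthogonal (by rwa [real_inner_comm])
  have area_yfx : |o.areaForm y (f x)| = ‖y‖ * ‖f x‖ :=
    o.abs_areaForm_of_orthogonal ((hf x).trans hwx)
  have norm_y : ‖y‖ ≠ 0 := norm_ne_zero_iff.2 fun hy => hw <| by simpa [hy] using (hf w).symm
  have identity := congrArg abs (o.inner_mul_areaForm_sub y (f x) (f w))
  rw [hf, hf, hwx, zero_mul, zero_sub, abs_neg, area_map, real_inner_self_eq_norm_sq, abs_mul,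
    area_yfx, abs_mul, abs_mul, area_wx, abs_of_nonneg (sq_nonneg _),
    abs_of_nonneg (sq_nonneg _)] at identity
  have norm_w : ‖w‖ ≠ 0 := norm_ne_zero_iff.2 hw
  apply mul_left_cancel₀ (mul_ne_zero norm_y norm_w)
  linear_combination identity

end Planar

namespace IsC1WeakKAM

variable {d : ℕ} {H : Phase d → ℝ} {φ : ℝ → Phase d → Phase d} {u : Euc d → ℝ} {q w : Euc d}

lemma eq_zero_of_tendsto_covectorTransport (h : IsC1WeakKAM H φ u)
    (hq : DifferentiableAt ℝ (gradient u) q)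
    (hw : Tendsto (fun n : ℕ => covectorTransport φ u (-n) q w) atTop (nhds 0)) {C : ℝ}
    (hC : ∃ᶠ n : ℕ in atTop, ‖fderiv ℝ (projFlow φ u (-n)) q‖ ≤ C) : w = 0 := by
  have bound_tendsto := hw.norm.mul_const (C * ‖w‖)
  rw [norm_zero, zero_mul] at bound_tendsto
  have sq_nonpos : ‖w‖ ^ 2 ≤ 0 := by
    refine ge_of_tendsto_of_frequently bound_tendsto (hC.mono fun n hn => ?_)
    rw [← real_inner_self_eq_norm_sq, ← h.inner_covectorTransport_fderiv_projFlow hq (-n)]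
    refine (real_inner_le_norm _ _).trans ?_
    gcongr
    exact ContinuousLinearMap.le_of_opNorm_le _ hn w
  exact norm_eq_zero.1 (sq_eq_zero_iff.1 (sq_nonpos.antisymm (sq_nonneg _)))

lemma inner_projVF_eq_zero_of_tendsto (h : IsC1WeakKAM H φ u)
    (hq : DifferentiableAt ℝ (gradient u) q)
    (hw : Tendsto (fun n : ℕ => covectorTransport φ u (-n) q w) atTop (nhds 0)) :
    ⟪w, projVF H u q⟫ = 0 := by
  obtain ⟨C, -, hC⟩ := h.perFun_projVF.exists_norm_le h.continuous_projVF
  have bound_tendsto := hw.norm.mul_const C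
  rw [norm_zero, zero_mul] at bound_tendsto
  refine abs_nonpos_iff.1 (ge_of_tendsto' bound_tendsto fun n => ?_)
  rw [← h.inner_covectorTransport_fderiv_projFlow hq (-n), h.fderiv_projFlow_apply_projVF hq]
  exact (abs_real_inner_le_norm _ _).trans (by gcongr; exact hC _)

lemma ae_exists_not_tendsto_abs_det_fderiv_projFlow (h : IsC1WeakKAM H φ u) :
    ∀ᵐ q, DifferentiableAt ℝ (gradient u) q →
      ¬ Tendsto (fun n : ℕ => projVF H u (projFlow φ u (-n) q)) atTop (nhds 0) →
      ∃ ε > 0, ¬ Tendsto (fun n : ℕ => |(fderiv ℝ (projFlow φ u (-n)) q).det|)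
        (atTop ⊓ principal {n | ε ≤ ‖projVF H u (projFlow φ u (-n) q)‖}) atTop := by
  have meas (j : ℕ) : MeasurableSet {q | 1 / ((j : ℝ) + 1) ≤ ‖projVF H u q‖} :=
    (isClosed_le continuous_const h.continuous_projVF.norm).measurableSet
  have periodic (j : ℕ) : PerFun (· ∈ {q | 1 / ((j : ℝ) + 1) ≤ ‖projVF H u q‖}) :=
    fun k q => by simp only [mem_ofPred_eq, h.perFun_projVF k q]
  have recurrence := ae_all_iff.2 fun j => ae_not_tendsto_abs_det_fderiv_iterate
    (h.continuous_projFlow (-1)) (h.leftInverse_projFlow (-1)).injective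
    (h.projFlow_add_intVec (-1)) (meas j) (periodic j)
  filter_upwards [recurrence] with q hrec hqd hlim
  have projVF_ne_zero : projVF H u q ≠ 0 := fun h0 => hlim <| by
    simpa only [h.projFlow_eq_self h0, h0] using tendsto_const_nhds
  obtain ⟨ε, ε_pos, often⟩ : ∃ ε > 0, ∃ᶠ n : ℕ in atTop,
      ε ≤ ‖projVF H u (projFlow φ u (-n) q)‖ := by
    by_contra! hsmall
    exact hlim (NormedAddGroup.tendsto_nhds_zero.2 hsmall)
  obtain ⟨j, hj⟩ := exists_nat_one_div_lt (lt_min ε_pos (norm_pos_iff.2 projVF_ne_zero))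
  obtain ⟨hjε, hjq⟩ := lt_min_iff.1 hj
  simp only [← h.projFlow_neg_natCast] at hrec
  exact ⟨1 / (j + 1), by positivity, hrec j hjq.le (fun n => h.differentiableAt_projFlow hqd _)
    (often.mono fun n hn => hjε.le.trans hn)⟩

end IsC1WeakKAM

namespace IsC1WeakKAM

variable {H : Phase 2 → ℝ} {φ : ℝ → Phase 2 → Phase 2} {u : Euc 2 → ℝ}

lemma tendsto_abs_det_fderiv_projFlow (h : IsC1WeakKAM H φ u) {q w : Euc 2}
    (hq : DifferentiableAt ℝ (gradient u) q) (hw : w ≠ 0)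
    (hlim : Tendsto (fun n : ℕ => covectorTransport φ u (-n) q w) atTop (nhds 0)) {ε : ℝ}
    (hε : 0 < ε) :
    Tendsto (fun n : ℕ => |(fderiv ℝ (projFlow φ u (-n)) q).det|)
      (atTop ⊓ principal {n | ε ≤ ‖projVF H u (projFlow φ u (-n) q)‖}) atTop := by
  have : Fact (Module.finrank ℝ (Euc 2) = 2) := ⟨finrank_euclideanSpace_fin⟩
  have transport_pos (n : ℕ) : 0 < ‖covectorTransport φ u (-n) q w‖ :=
    norm_pos_iff.2 (h.covectorTransport_ne_zero hq _ hw)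
  have inv_tendsto : Tendsto (fun n : ℕ => ‖covectorTransport φ u (-n) q w‖⁻¹) atTop atTop :=
    tendsto_inv_nhdsGT_zero.comp (tendsto_nhdsWithin_iff.2
      ⟨by simpa using hlim.norm, .of_forall transport_pos⟩)
  have coeff_pos : 0 < ‖w‖ * ε / (‖projVF H u q‖ + 1) := by positivity
  refine tendsto_atTop_mono' _ ?_ ((inv_tendsto.const_mul_atTop coeff_pos).mono_left inf_le_left)
  filter_upwards [mem_inf_of_right (mem_principal_self _)] with n hn
  have identity := norm_mul_norm_apply_eq (h.inner_covectorTransport_fderiv_projFlow hq (-n) w) hw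
    (h.inner_projVF_eq_zero_of_tendsto hq hlim)
  rw [h.fderiv_projFlow_apply_projVF hq] at identity
  rw [← div_eq_mul_inv, div_div, div_le_iff₀ (by have := transport_pos n; positivity)]
  calc ‖w‖ * ε ≤ ‖w‖ * ‖projVF H u (projFlow φ u (-n) q)‖ := by gcongr
    _ = ‖covectorTransport φ u (-n) q w‖ * ‖projVF H u q‖ *
        |(fderiv ℝ (projFlow φ u (-n)) q).det| := identity
    _ ≤ ‖covectorTransport φ u (-n) q w‖ * (‖projVF H u q‖ + 1) *
        |(fderiv ℝ (projFlow φ u (-n)) q).det| := by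
      gcongr
      exact le_add_of_nonneg_right zero_le_one
    _ = _ := by ring

theorem ae_not_tendsto_covectorTransport (h : IsC1WeakKAM H φ u)
    (hyp : ∀ z, projVF H u z = 0 → IsHyperbolicFixedPt φ (gradLift u z)) :
    ∀ᵐ q, ∀ w ≠ 0, ¬ Tendsto (fun n : ℕ => covectorTransport φ u (-n) q w) atTop (nhds 0) := by
  have bounded := (ae_ball_iff (h.countable_setOf_projVF_eq_zero hyp)).2
    fun z hz => h.ae_frequently_norm_fderiv_projFlow_le (hyp z hz)
  filter_upwards [h.ae_differentiableAt_gradient, bounded,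
    h.ae_exists_not_tendsto_abs_det_fderiv_projFlow] with q hqd hbounded hrec w hw hlim
  by_cases hX : Tendsto (fun n : ℕ => projVF H u (projFlow φ u (-n) q)) atTop (nhds 0)
  · obtain ⟨z, hz, hqz⟩ := h.exists_tendsto_projFlow_neg hyp hX
    obtain ⟨C, hC⟩ := hbounded z hz hqd hqz
    exact hw (h.eq_zero_of_tendsto_covectorTransport hqd hlim hC)
  · obtain ⟨ε, ε_pos, not_tendsto⟩ := hrec hqd hX
    exact not_tendsto (h.tendsto_abs_det_fderiv_projFlow hqd hw hlim ε_pos)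

end IsC1WeakKAM

/-- **Proposition (two degrees of freedom).** Let `H` be a Tonelli Hamiltonian on `T^*𝕋²`
with a `C¹` weak K.A.M. solution `u` such that all the critical points of `H` contained in
the graph of `du` are hyperbolic fixed points of the Hamiltonian flow.  Then `u` is upper
Green regular. -/
theorem stmt_19 (H : Phase 2 → ℝ) (hH : TonelliHam H)
    (φ : ℝ → Phase 2 → Phase 2) (hφ : IsConformalFlow H 0 φ)
    (u : Euc 2 → ℝ) (hu1 : ContDiff ℝ 1 u) (hup : PerFun u) (hKAM : IsWeakKAM H u)
    (hcrit : ∀ θ : Euc 2, hamVF H 0 (θ, gradient u θ) = 0 →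
      IsHyperbolicFixedPt φ (θ, gradient u θ)) :
    UpperGreenRegular φ u := by
  have h : IsC1WeakKAM H φ u := ⟨hH, hφ, hu1, hKAM⟩
  have hyp (z : Euc 2) (hz : projVF H u z = 0) : IsHyperbolicFixedPt φ (gradLift u z) :=
    hcrit z (h.hamVF_gradLift_eq_zero hz)
  filter_upwards [h.ae_differentiableAt_gradient, h.ae_not_tendsto_covectorTransport hyp]
    with q hq hw
  obtain ⟨isHeight, tendsto_height⟩ := h.tendsto_heightOf_GreenT hq.hasFDerivAt hw
  exact ⟨gradient u q, fderiv ℝ (gradient u) q, (h.differentiable q).hasGradientAt, isHeight,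
    tendsto_height, h.hasAlexandrovAt hq.hasFDerivAt⟩
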